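/- Let B₁, B₂ be open balls in ℝⁿ of radius r₁, r₂ respectively, and let K₁ ⊆ B₁ and K₂ ⊆ B₂ be compact. Then there exists C₀ > 0 as follows. Suppose T : C¹_c(B₁) → L²(B₂) is linear, has a formal adjoint T* : C¹_c(B₂) → L²(B₁), and A > 0 is such that: (a) if f ∈ C¹_c(B₁) then Tf = 0 almost everywhere on the complement of K₂, and Tf ≡ 0 whenever supp f is disjoint from K₁; (i)′ ‖Tω‖_{L^∞} ≤ A for every r-bump function ω with r ≤ r₁ supported in B₁, and ‖T*ω‖_{L^∞} ≤ A for every r-bump function ω with r ≤ r₂ supported in B₂; (ii) there is a kernel K(x,y), C¹ off the diagonal, such that for every F ∈ C¹_c(B₁) and every x outside supp F one has (TF)(x) = ∫ K(x,y)F(y) dy; (iii) |K(x,y)| ≤ A|x−y|^{−n} for all x ∈ B₂, y ∈ B₁ with x ≠ y, and |∂_{x_i}K(x,y)| ≤ A|x−y|^{−(n+1)} and |∂_{y_i}K(x,y)| ≤ A|x−y|^{−(n+1)} for every i and all such x ≠ y. Then T extends to a bounded operator from L²(B₁) to L²(B₂) with operator norm ‖T‖ ≤ C₀ A. -/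

import Mathlib

open MeasureTheory Metric

noncomputable section

/-- An `r`-bump function on `ℝⁿ`: a `C¹` function supported in some ball of radius `r`,
with `‖ω‖_∞ ≤ 1` and `‖∂_jω‖_∞ ≤ 1/r` for each partial derivative. -/
def IsBump (n : ℕ) (r : ℝ) (ω : EuclideanSpace ℝ (Fin n) → ℂ) : Prop :=
  ContDiff ℝ 1 ω ∧
  (∃ c : EuclideanSpace ℝ (Fin n), tsupport ω ⊆ closedBall c r) ∧
  (∀ x, ‖ω x‖ ≤ 1) ∧
  (∀ i : Fin n, ∀ x, ‖fderiv ℝ ω x (EuclideanSpace.single i 1)‖ ≤ 1 / r)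

namespace T1D

section av
variable {X Y Z : Type*} [Fintype X] [DecidableEq Y] [DecidableEq Z] {𝕜 : Type*} [RCLike 𝕜]

/-- averaging over the fibres of `p`. -/
def av (p : X → Y) (f : X → 𝕜) (x : X) : 𝕜 :=
  (∑ y with p y = p x, f y) / ((Finset.univ.filter (fun y => p y = p x)).card : 𝕜)


def Meas {V : Type*} (p : X → Y) (c : X → V) : Prop := ∀ x y, p x = p y → c x = c y

lemma card_ne (p : X → Y) (x : X) :
    ((Finset.univ.filter (fun y => p y = p x)).card : 𝕜) ≠ 0 := by
  have : 0 < (Finset.univ.filter (fun y => p y = p x)).card :=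
    Finset.card_pos.mpr ⟨x, by simp⟩
  exact_mod_cast this.ne'

lemma av_meas (p : X → Y) (f : X → 𝕜) : Meas p (av p f) := by
  intro x y h
  simp only [av, h]

lemma av_mul (p : X → Y) (c f : X → 𝕜) (hc : Meas p c) (x : X) :
    av p (fun y => c y * f y) x = c x * av p f x := by
  unfold av
  rw [mul_div_assoc', Finset.mul_sum]
  congr 1
  apply Finset.sum_congr rfl
  intro y hy
  simp only [Finset.mem_filter, Finset.mem_univ, true_and] at hy
  show c y * f y = _
  rw [hc y x hy]

lemma av_of_meas (p : X → Y) (c : X → 𝕜) (hc : Meas p c) (x : X) : av p c x = c x := by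
  have := av_mul p c (fun _ => (1:𝕜)) hc x
  simp only [mul_one] at this
  rw [show (fun y => c y) = c from rfl] at this
  rw [this]
  unfold av
  rw [Finset.sum_const, nsmul_eq_mul, mul_one, div_self (card_ne p x), mul_one]

lemma sum_av (p : X → Y) (c f : X → 𝕜) (hc : Meas p c) :
    ∑ x, c x * av p f x = ∑ x, c x * f x := by
  have h1 : ∀ x, c x * av p f x = ∑ y, if p y = p x then
      c y * f y / ((Finset.univ.filter (fun z => p z = p y)).card : 𝕜) else 0 := by
    intro x
    rw [← av_mul p c f hc, av, Finset.sum_div, Finset.sum_filter]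
    apply Finset.sum_congr rfl
    intro y _
    split_ifs with h
    · rw [h]
    · rfl
  simp_rw [h1]
  rw [Finset.sum_comm]
  apply Finset.sum_congr rfl
  intro y _
  rw [← Finset.sum_filter, Finset.sum_const, nsmul_eq_mul]
  rw [show (Finset.univ.filter (fun x => p y = p x)) = Finset.univ.filter (fun z => p z = p y) from
    Finset.filter_congr (fun z _ => eq_comm)]
  rw [mul_div_cancel₀]
  exact card_ne p y

lemma av_tower (p : X → Y) (q : X → Z) (hq : ∀ x y, p x = p y → q x = q y) (f : X → 𝕜) (x : X) :
    av q (av p f) x = av q f x := by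
  unfold av
  congr 1
  have := sum_av p (fun y => if q y = q x then (1:𝕜) else 0) f (by
    intro a b hab; simp only [hq a b hab])
  simp only [ite_mul, one_mul, zero_mul] at this
  rw [← Finset.sum_filter, ← Finset.sum_filter] at this
  exact this

lemma av_tower' (p : X → Y) (q : X → Z) (hq : ∀ x y, p x = p y → q x = q y) (f : X → 𝕜) (x : X) :
    av p (av q f) x = av q f x :=
  av_of_meas p _ (fun a b h => av_meas q f a b (hq a b h)) x

lemma av_sub (p : X → Y) (f g : X → 𝕜) (x : X) :
    av p (fun y => f y - g y) x = av p f x - av p g x := by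
  unfold av
  rw [Finset.sum_sub_distrib, sub_div]

lemma norm_av_le (p : X → Y) (f : X → 𝕜) (B : ℝ) (hf : ∀ x, ‖f x‖ ≤ B) (x : X) :
    ‖av p f x‖ ≤ B := by
  unfold av
  rw [norm_div, RCLike.norm_natCast, div_le_iff₀]
  · refine (norm_sum_le _ _).trans ?_
    refine (Finset.sum_le_sum (fun y _ => hf y)).trans ?_
    rw [Finset.sum_const, nsmul_eq_mul, mul_comm]
  · have : 0 < (Finset.univ.filter (fun y => p y = p x)).card :=
      Finset.card_pos.mpr ⟨x, by simp⟩
    exact_mod_cast this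

lemma pyth (p : X → Y) (h : X → ℂ) (w : X → ℝ) (hw : Meas p w) :
    ∑ x, w x * ‖h x - av p h x‖^2 = ∑ x, w x * ‖h x‖^2 - ∑ x, w x * ‖av p h x‖^2 := by
  have hc : Meas p (fun x => (w x : ℂ) * (starRingEnd ℂ) (av p h x)) := by
    intro a b hab
    simp only [hw a b hab, av_meas p h a b hab]
  have h0 := congrArg Complex.re (sum_av p _ h hc)
  rw [Complex.re_sum, Complex.re_sum] at h0
  have h1 : ∀ x, w x * ‖h x - av p h x‖^2 = w x * ‖h x‖^2 + w x * ‖av p h x‖^2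
      - 2 * ((w x : ℂ) * (starRingEnd ℂ) (av p h x) * h x).re := by
    intro x
    simp only [← Complex.normSq_eq_norm_sq, Complex.normSq_apply, Complex.sub_re, Complex.sub_im,
      Complex.mul_re, Complex.mul_im, Complex.conj_re, Complex.conj_im, Complex.ofReal_re,
      Complex.ofReal_im]
    ring
  have h2 : ∀ x, w x * ‖av p h x‖^2 =
      ((w x : ℂ) * (starRingEnd ℂ) (av p h x) * av p h x).re := by
    intro x
    simp only [← Complex.normSq_eq_norm_sq, Complex.normSq_apply, 
      Complex.mul_re, Complex.mul_im, Complex.conj_re, Complex.conj_im, Complex.ofReal_re,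
      Complex.ofReal_im]
    ring
  simp_rw [h1]
  rw [Finset.sum_sub_distrib, Finset.sum_add_distrib, ← Finset.mul_sum, ← h0]
  simp_rw [← h2]
  ring
end av
end T1D

namespace T1D

lemma ptw (a a' d c c' e B : ℝ) (ha' : 0 ≤ a') (hd : 0 ≤ d) (h1 : |a - a'| ≤ d)
    (hc : 0 ≤ c) (hc' : 0 ≤ c') (hcB : c ≤ B) (hc'B : c' ≤ B) (h2 : |c - c'| ≤ e) (he : e ≤ 2 * B)
    (ha : 0 ≤ a) :
    -((a^2 - a'^2) * (c^2 - c'^2)) ≤ 12 * B^2 * d^2 + 1/2 * (a'^2 * e^2) := by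
  have e0 : 0 ≤ e := (abs_nonneg _).trans h2
  have B0 : 0 ≤ B := hc.trans hcB
  have k1 : |a^2 - a'^2| ≤ d * (d + 2 * a') := by
    rw [sq_sub_sq, mul_comm, abs_mul]
    apply mul_le_mul h1 _ (abs_nonneg _) hd
    rw [abs_of_nonneg (by positivity)]
    have := (abs_le.mp h1).2
    linarith
  have k2 : |c^2 - c'^2| ≤ e * (2 * B) := by
    rw [sq_sub_sq, mul_comm, abs_mul]
    apply mul_le_mul h2 _ (abs_nonneg _) e0
    rw [abs_of_nonneg (by positivity)]
    linarith
  have k3 : |(a^2 - a'^2) * (c^2 - c'^2)| ≤ d * (d + 2 * a') * (e * (2 * B)) := by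
    rw [abs_mul]
    exact mul_le_mul k1 k2 (abs_nonneg _) (by positivity)
  have k4 := neg_le_abs ((a^2 - a'^2) * (c^2 - c'^2))
  have k5 : d^2 * (2 * B) * e ≤ d^2 * (2 * B) * (2 * B) := by gcongr
  nlinarith [sq_nonneg (a' * e - 4 * B * d)]

section filt
variable {X Y : Type*} [Fintype X] [DecidableEq Y] 

/-- martingale difference -/
def DD (p : ℕ → X → Y) (m : ℕ) (f : X → ℂ) (x : X) : ℂ := av (p m) f x - av (p (m+1)) f x

def Filt {X Y : Type*} (p : ℕ → X → Y) : Prop := ∀ j x y, p j x = p j y → p (j+1) x = p (j+1) y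

lemma filt_le {X Y : Type*} (p : ℕ → X → Y) (hp : Filt p) {j k : ℕ} (hjk : j ≤ k) (x y : X) (h : p j x = p j y) : p k x = p k y := by
  induction k, hjk using Nat.le_induction with
  | base => exact h
  | succ k _ ih => exact hp k x y ih

lemma DD_meas (p : ℕ → X → Y) (hp : Filt p) (m : ℕ) (f : X → ℂ) : Meas (p m) (DD p m f) := by
  intro x y h
  unfold DD
  rw [av_meas (p m) f x y h, av_meas (p (m+1)) f x y (hp m x y h)]

lemma av_DD (p : ℕ → X → Y) (hp : Filt p) (m : ℕ) (f : X → ℂ) (x : X) : av (p (m+1)) (DD p m f) x = 0 := by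
  unfold DD
  rw [av_sub, av_tower (p m) (p (m+1)) (hp m), av_of_meas _ _ (av_meas _ _), sub_self]

lemma sum_meas_DD (p : ℕ → X → Y) (hp : Filt p) (m : ℕ) (c f : X → ℂ) (hc : Meas (p (m+1)) c) :
    ∑ x, c x * DD p m f x = 0 := by
  rw [← sum_av (p (m+1)) c _ hc]
  simp [av_DD p hp]

lemma pythD (p : ℕ → X → Y) (hp : Filt p) (m : ℕ) (f : X → ℂ) (w : X → ℝ) (hw : Meas (p (m+1)) w) :
    ∑ x, w x * ‖DD p m f x‖^2 = ∑ x, w x * ‖av (p m) f x‖^2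
      - ∑ x, w x * ‖av (p (m+1)) f x‖^2 := by
  have := pyth (p (m+1)) (av (p m) f) w hw
  simp_rw [av_tower (p m) (p (m+1)) (hp m)] at this
  exact this

lemma sum_DD (p : ℕ → X → Y) (hp : Filt p) (N : ℕ) (f : X → ℂ) :
    ∑ m ∈ Finset.range N, ∑ x, ‖DD p m f x‖^2 =
      ∑ x, ‖av (p 0) f x‖^2 - ∑ x, ‖av (p N) f x‖^2 := by
  rw [← Finset.sum_range_sub' (fun m => ∑ x, ‖av (p m) f x‖^2)]
  apply Finset.sum_congr rfl
  intro m _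
  have := pythD p hp m f (fun _ => 1) (fun _ _ _ => rfl)
  simpa using this

lemma sum_DD_le (p : ℕ → X → Y) (hp : Filt p) (hinj : Function.Injective (p 0)) (N : ℕ) (f : X → ℂ) :
    ∑ m ∈ Finset.range N, ∑ x, ‖DD p m f x‖^2 ≤ ∑ x, ‖f x‖^2 := by
  rw [sum_DD p hp]
  have : ∀ x, av (p 0) f x = f x := av_of_meas _ _ (fun x y h => by rw [hinj h])
  simp_rw [this]
  have : 0 ≤ ∑ x, ‖av (p N) f x‖^2 := Finset.sum_nonneg (fun _ _ => by positivity)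
  linarith

lemma paraprod (p : ℕ → X → Y) (hp : Filt p) (hinj : Function.Injective (p 0)) (N : ℕ) (f b : X → ℂ) (B : ℝ)
    (hb : ∀ x, ‖b x‖ ≤ B) :
    ∑ m ∈ Finset.range N, ∑ x, ‖av (p (m+1)) f x‖^2 * ‖DD p m b x‖^2
      ≤ 26 * B^2 * ∑ x, ‖f x‖^2 := by
  have h0 : ∀ f : X → ℂ, ∀ x, av (p 0) f x = f x :=
    fun f => av_of_meas _ _ (fun x y h => by rw [hinj h])
  have hB := @norm_av_le X Y _ _ ℂ _
  have step : ∀ m, ∑ x, ‖av (p (m+1)) f x‖^2 * ‖DD p m b x‖^2 ≤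
      (∑ x, ‖av (p m) f x‖^2 * ‖av (p m) b x‖^2
        - ∑ x, ‖av (p (m+1)) f x‖^2 * ‖av (p (m+1)) b x‖^2)
      + (12 * B^2 * ∑ x, ‖DD p m f x‖^2
        + 1/2 * ∑ x, ‖av (p (m+1)) f x‖^2 * ‖DD p m b x‖^2) := by
    intro m
    have e1 := pythD p hp m b (fun x => ‖av (p (m+1)) f x‖^2)
      (fun x y h => by simp only [av_meas _ f x y h])
    have e2 := pythD p hp m f (fun x => ‖av (p (m+1)) b x‖^2)
      (fun x y h => by simp only [av_meas _ b x y h])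
    have e3 : 0 ≤ ∑ x, ‖av (p (m+1)) b x‖^2 * ‖DD p m f x‖^2 :=
      Finset.sum_nonneg (fun _ _ => by positivity)
    have e4 : ∑ x, -((‖av (p m) f x‖^2 - ‖av (p (m+1)) f x‖^2) *
        (‖av (p m) b x‖^2 - ‖av (p (m+1)) b x‖^2)) ≤
        ∑ x, (12 * B^2 * ‖DD p m f x‖^2 + 1/2 * (‖av (p (m+1)) f x‖^2 * ‖DD p m b x‖^2)) := by
      apply Finset.sum_le_sum
      intro x _
      apply ptw _ _ _ _ _ _ B (norm_nonneg _) (norm_nonneg _) (abs_norm_sub_norm_le _ _)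
        (norm_nonneg _) (norm_nonneg _) (hB _ _ _ hb _) (hB _ _ _ hb _)
        (abs_norm_sub_norm_le _ _) _ (norm_nonneg _)
      refine (norm_sub_le _ _).trans ?_
      have := hB (p m) b B hb x
      have := hB (p (m+1)) b B hb x
      linarith
    rw [Finset.sum_add_distrib, ← Finset.mul_sum, ← Finset.mul_sum] at e4
    have e5 : ∑ x, -((‖av (p m) f x‖^2 - ‖av (p (m+1)) f x‖^2) *
        (‖av (p m) b x‖^2 - ‖av (p (m+1)) b x‖^2)) = 
        - ∑ x, ‖av (p m) f x‖^2 * ‖av (p m) b x‖^2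
        + ∑ x, ‖av (p (m+1)) b x‖^2 * ‖av (p m) f x‖^2
        + ∑ x, ‖av (p (m+1)) f x‖^2 * ‖av (p m) b x‖^2
        - ∑ x, ‖av (p (m+1)) f x‖^2 * ‖av (p (m+1)) b x‖^2 := by
      rw [← Finset.sum_neg_distrib, ← Finset.sum_add_distrib, ← Finset.sum_add_distrib,
        ← Finset.sum_sub_distrib]
      apply Finset.sum_congr rfl
      intro x _; ring
    have e6 : ∑ x, ‖av (p (m+1)) b x‖^2 * ‖av (p (m+1)) f x‖^2 = 
       ∑ x, ‖av (p (m+1)) f x‖^2 * ‖av (p (m+1)) b x‖^2 :=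
      Finset.sum_congr rfl (fun _ _ => mul_comm _ _)
    linarith
  have tot := Finset.sum_le_sum (fun m (_ : m ∈ Finset.range N) => step m)
  rw [Finset.sum_add_distrib, Finset.sum_add_distrib, ← Finset.mul_sum, ← Finset.mul_sum,
    Finset.sum_range_sub' (fun m => ∑ x, ‖av (p m) f x‖^2 * ‖av (p m) b x‖^2)] at tot
  simp_rw [h0] at tot
  have t1 := sum_DD_le p hp hinj N f
  have t2 : 0 ≤ ∑ x, ‖av (p N) f x‖^2 * ‖av (p N) b x‖^2 :=
    Finset.sum_nonneg (fun _ _ => by positivity)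
  have t3 : ∑ x, ‖f x‖^2 * ‖b x‖^2 ≤ B^2 * ∑ x, ‖f x‖^2 := by
    rw [Finset.mul_sum]
    apply Finset.sum_le_sum
    intro x _
    have := hb x
    have : ‖b x‖^2 ≤ B^2 := by gcongr
    nlinarith [sq_nonneg ‖f x‖]
  have t4 : 12 * B^2 * ∑ m ∈ Finset.range N, ∑ x, ‖DD p m f x‖^2 ≤ 12 * B^2 * ∑ x, ‖f x‖^2 := by
    gcongr
  linarith
end filt
end T1D

namespace T1D
section geom

abbrev XX (n N : ℕ) := Fin n → Fin (2^N)

variable {n N : ℕ}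

def bl (j : ℕ) (x : XX n N) : Fin n → ℕ := fun i => (x i : ℕ) / 2^j

def dd (x y : XX n N) : ℝ := dist (fun i => ((x i : ℕ) : ℝ)) (fun i => ((y i : ℕ) : ℝ))

def sg (x y : XX n N) : ℝ := 1 / (dd x y ^ n * √(dd x y))

lemma sg_nonneg (x y : XX n N) : 0 ≤ sg x y := by
  unfold sg dd; positivity

lemma dd_nonneg (x y : XX n N) : 0 ≤ dd x y := dist_nonneg

lemma dd_comm (x y : XX n N) : dd x y = dd y x := dist_comm _ _

lemma sg_comm (x y : XX n N) : sg x y = sg y x := by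
  unfold sg; rw [dd_comm]

lemma dd_tri (x y z : XX n N) : dd x z ≤ dd x y + dd y z := dist_triangle _ _ _

lemma le_dd (x y : XX n N) (i : Fin n) : |((x i : ℕ) : ℝ) - ((y i : ℕ) : ℝ)| ≤ dd x y :=
  dist_le_pi_dist (fun i => ((x i : ℕ) : ℝ)) (fun i => ((y i : ℕ) : ℝ)) i

lemma dd_le (x y : XX n N) (r : ℝ) (hr : 0 ≤ r)
    (h : ∀ i, |((x i : ℕ) : ℝ) - ((y i : ℕ) : ℝ)| ≤ r) : dd x y ≤ r :=
  (dist_pi_le_iff hr).mpr h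

lemma one_le_dd (x y : XX n N) (h : x ≠ y) : 1 ≤ dd x y := by
  obtain ⟨i, hi⟩ := Function.ne_iff.mp h
  refine le_trans ?_ (le_dd x y i)
  have h1 : ((x i : ℕ) : ℤ) - ((y i : ℕ) : ℤ) ≠ 0 := by
    intro h0
    apply hi
    ext
    omega
  have := Int.one_le_abs h1
  have h2 : ((1 : ℤ) : ℝ) ≤ ((|((x i : ℕ) : ℤ) - ((y i : ℕ) : ℤ)| : ℤ) : ℝ) := by exact_mod_cast this
  push_cast at h2
  exact h2

lemma dd_lt (x y : XX n N) : dd x y < 2^N := by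
  refine (dist_pi_lt_iff (by positivity)).mpr (fun i => ?_)
  rw [Real.dist_eq, abs_lt]
  have h1 : ((x i : ℕ) : ℝ) < 2^N := by exact_mod_cast (x i).2
  have h2 : ((y i : ℕ) : ℝ) < 2^N := by exact_mod_cast (y i).2
  have h3 : 0 ≤ ((x i : ℕ) : ℝ) := by positivity
  have h4 : 0 ≤ ((y i : ℕ) : ℝ) := by positivity
  constructor <;> linarith

lemma filt_bl : Filt (bl (n := n) (N := N)) := by
  intro j x y h
  funext i
  have := congrFun h i
  simp only [bl] at this ⊢
  rw [pow_succ, ← Nat.div_div_eq_div_mul, ← Nat.div_div_eq_div_mul, this]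

lemma bl_inj : Function.Injective (bl (n := n) (N := N) 0) := by
  intro x y h
  funext i
  have := congrFun h i
  simp only [bl, pow_zero, Nat.div_one] at this
  exact Fin.ext this

lemma bl_top (x y : XX n N) : bl N x = bl N y := by
  funext i
  simp only [bl]
  rw [Nat.div_eq_of_lt (x i).2, Nat.div_eq_of_lt (y i).2]

/-- one dimensional fibre -/
def fib (N k : ℕ) (b : Fin (2^N)) : Finset (Fin (2^N)) :=
  Finset.univ.filter (fun a => (a : ℕ) / 2^k = (b : ℕ) / 2^k)

lemma fib_image (k : ℕ) (hk : k ≤ N) (b : Fin (2^N)) :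
    (fib N k b).image (fun a : Fin (2^N) => (a : ℕ) % 2^k) = Finset.range (2^k) := by
  ext e
  simp only [fib, Finset.mem_image, Finset.mem_filter, Finset.mem_univ, true_and, Finset.mem_range]
  constructor
  · rintro ⟨a, _, rfl⟩
    exact Nat.mod_lt _ (by positivity)
  · intro he
    have hlt : 2^k * ((b : ℕ) / 2^k) + e < 2^N := by
      obtain ⟨l, rfl⟩ := Nat.exists_eq_add_of_le hk
      have h1 : (b : ℕ) / 2^k < 2^l := by
        rw [Nat.div_lt_iff_lt_mul (by positivity), mul_comm, ← pow_add]; exact b.2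
      calc 2^k * ((b : ℕ) / 2^k) + e < 2^k * ((b : ℕ) / 2^k) + 2^k := by omega
        _ = 2^k * ((b : ℕ) / 2^k + 1) := by ring
        _ ≤ 2^k * 2^l := Nat.mul_le_mul_left _ h1
        _ = 2^(k+l) := by rw [pow_add]
    refine ⟨⟨_, hlt⟩, ?_, ?_⟩
    · simp only
      rw [Nat.mul_add_div (by positivity), Nat.div_eq_of_lt he, add_zero]
    · simp only
      rw [Nat.mul_add_mod, Nat.mod_eq_of_lt he]

lemma fib_sum (k : ℕ) (hk : k ≤ N) (b : Fin (2^N)) (h : ℕ → ℝ) :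
    ∑ a ∈ fib N k b, h ((a : ℕ) % 2^k) = ∑ e ∈ Finset.range (2^k), h e := by
  rw [← fib_image k hk b, Finset.sum_image]
  intro a ha c hc hac
  simp only [fib, Finset.coe_filter, Finset.mem_univ, true_and, Set.mem_setOf_eq] at ha hc
  simp only at hac
  apply Fin.ext
  rw [← Nat.div_add_mod (a : ℕ) (2^k), ← Nat.div_add_mod (c : ℕ) (2^k), ha, hc, hac]

lemma block_eq (k : ℕ) (z : XX n N) :
    Finset.univ.filter (fun x : XX n N => bl k x = bl k z) = Fintype.piFinset (fun i => fib N k (z i)) := by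
  ext x
  simp only [Finset.mem_filter, Finset.mem_univ, true_and, Fintype.mem_piFinset, fib, bl]
  exact funext_iff

lemma block_sum (k : ℕ) (hk : k ≤ N) (z : XX n N) (i : Fin n) (h : ℕ → ℝ) :
    ∑ x : XX n N with bl k x = bl k z, h ((x i : ℕ) % 2^k) =
      ((2:ℝ)^k)^n * ((∑ e ∈ Finset.range (2^k), h e) / 2^k) := by
  rw [block_eq]
  have h1 : ∀ x : XX n N, h ((x i : ℕ) % 2^k) =
      ∏ i', (if i' = i then h ((x i' : ℕ) % 2^k) else 1) := by
    intro x
    rw [Finset.prod_ite_eq' Finset.univ i]; simp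
  simp_rw [h1]
  rw [← Finset.prod_univ_sum (fun i => fib N k (z i))
    (fun i' (a : Fin (2^N)) => if i' = i then h ((a : ℕ) % 2^k) else 1)]
  have h2 : ∀ i', ∑ a ∈ fib N k (z i'), (if i' = i then h ((a : ℕ) % 2^k) else 1) =
      (2:ℝ)^k * (if i' = i then (∑ e ∈ Finset.range (2^k), h e) / 2^k else 1) := by
    intro i'
    split_ifs with hi
    · rw [fib_sum k hk]
      field_simp
    · rw [fib_sum k hk (z i') (fun _ => 1)]
      simp
  simp_rw [h2]
  rw [Finset.prod_mul_distrib, Finset.prod_ite_eq' Finset.univ i]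
  simp

lemma block_card (k : ℕ) (hk : k ≤ N) (z : XX n N) :
    ((Finset.univ.filter (fun x : XX n N => bl k x = bl k z)).card : ℝ) = ((2:ℝ)^k)^n := by
  rw [block_eq, Fintype.card_piFinset]
  have : ∀ i, ((fib N k (z i)).card : ℝ) = 2^k := by
    intro i
    have := fib_sum k hk (z i) (fun _ => 1)
    simpa using this
  push_cast
  simp_rw [this]
  simp

lemma card_ball (x : XX n N) (r : ℝ) (hr : 0 ≤ r) :
    ((Finset.univ.filter (fun y => dd x y ≤ r)).card : ℝ) ≤ (2 * r + 1)^n := by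
  have h1 : Finset.univ.filter (fun y => dd x y ≤ r) ⊆ Fintype.piFinset
      (fun i => Finset.univ.filter (fun a : Fin (2^N) => |((x i : ℕ) : ℝ) - ((a : ℕ) : ℝ)| ≤ r)) := by
    intro y hy
    simp only [Finset.mem_filter, Finset.mem_univ, true_and, Fintype.mem_piFinset] at hy ⊢
    intro i
    exact (le_dd x y i).trans hy
  have h2 : ∀ i, ((Finset.univ.filter
      (fun a : Fin (2^N) => |((x i : ℕ) : ℝ) - ((a : ℕ) : ℝ)| ≤ r)).card : ℝ) ≤ 2 * r + 1 := by
    intro i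
    have hm : (Finset.univ.filter
      (fun a : Fin (2^N) => |((x i : ℕ) : ℝ) - ((a : ℕ) : ℝ)| ≤ r)).card ≤
      (Finset.Icc (((x i : ℕ) : ℤ) - ⌊r⌋) (((x i : ℕ) : ℤ) + ⌊r⌋)).card := by
      apply Finset.card_le_card_of_injOn (fun a : Fin (2^N) => ((a : ℕ) : ℤ))
      · intro a ha
        simp only [Finset.coe_filter, Finset.mem_univ, true_and, Set.mem_setOf_eq] at ha
        simp only [Finset.coe_Icc, Set.mem_Icc]
        have h3 : |((x i : ℕ) : ℤ) - ((a : ℕ) : ℤ)| ≤ ⌊r⌋ := by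
          rw [Int.le_floor]
          push_cast
          exact ha
        rw [abs_le] at h3
        constructor <;> omega
      · intro a _ b _ hab
        apply Fin.ext
        simpa using hab
    rw [Int.card_Icc] at hm
    have hf : 0 ≤ ⌊r⌋ := Int.floor_nonneg.mpr hr
    have h4 : ((((x i : ℕ) : ℤ) + ⌊r⌋ + 1 - (((x i : ℕ) : ℤ) - ⌊r⌋)).toNat : ℤ) = 2 * ⌊r⌋ + 1 := by
      omega
    have h5 : ((((x i : ℕ) : ℤ) + ⌊r⌋ + 1 - (((x i : ℕ) : ℤ) - ⌊r⌋)).toNat : ℝ) = 2 * ⌊r⌋ + 1 := by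
      exact_mod_cast h4
    have h6 := Int.floor_le r
    calc _ ≤ ((((x i : ℕ) : ℤ) + ⌊r⌋ + 1 - (((x i : ℕ) : ℤ) - ⌊r⌋)).toNat : ℝ) := by exact_mod_cast hm
      _ = 2 * ⌊r⌋ + 1 := h5
      _ ≤ _ := by linarith
  calc ((Finset.univ.filter (fun y => dd x y ≤ r)).card : ℝ)
      ≤ ((Fintype.piFinset
      (fun i => Finset.univ.filter (fun a : Fin (2^N) =>
        |((x i : ℕ) : ℝ) - ((a : ℕ) : ℝ)| ≤ r))).card : ℝ) := by
        exact_mod_cast Finset.card_le_card h1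
    _ ≤ ∏ i : Fin n, (2 * r + 1) := by
        rw [Fintype.card_piFinset]
        push_cast
        exact Finset.prod_le_prod (fun _ _ => by positivity) (fun i _ => h2 i)
    _ = _ := by simp

lemma geo_sum (M : ℕ) : ∑ l ∈ Finset.range M, 1 / √((2:ℝ)^l) ≤ 4 := by
  have h2 : (4/3 : ℝ) ≤ √2 := by
    apply Real.le_sqrt_of_sq_le; norm_num
  have : ∀ M : ℕ, ∑ l ∈ Finset.range M, 1 / √((2:ℝ)^l) ≤ 4 - 4 / √((2:ℝ)^M) := by
    intro M
    induction M with
    | zero => simp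
    | succ M ih =>
      rw [Finset.sum_range_succ]
      have e : √((2:ℝ)^(M+1)) = √((2:ℝ)^M) * √2 := by
        rw [pow_succ, Real.sqrt_mul (by positivity)]
      have p : 0 < √((2:ℝ)^M) := by positivity
      have : 4 / √((2:ℝ)^(M+1)) ≤ 3 / √((2:ℝ)^M) := by
        rw [e, div_le_div_iff₀ (by positivity) p]
        nlinarith
      have e2 : 4 / √((2:ℝ)^M) = 3 / √((2:ℝ)^M) + 1 / √((2:ℝ)^M) := by
        rw [← add_div]; norm_num
      linarith
  refine (this M).trans ?_
  have : 0 ≤ 4 / √((2:ℝ)^M) := by positivity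
  linarith

lemma G1 (x : XX n N) (t : ℝ) (ht : 1 ≤ t) :
    ∑ y : XX n N with t ≤ dd x y, sg x y ≤ 4 * 5^n * (1 / √t) := by
  have h1 : ∀ y ∈ Finset.univ.filter (fun y => t ≤ dd x y), sg x y ≤
      ∑ l ∈ Finset.range (N+1), if dd x y ≤ 2^(l+1) * t then
        1 / ((2^l * t)^n * √(2^l * t)) else 0 := by
    intro y hy
    simp only [Finset.mem_filter, Finset.mem_univ, true_and] at hy
    have hq : 1 ≤ dd x y / t := by rw [le_div_iff₀ (by linarith)]; linarith
    obtain ⟨l, hl1, hl2⟩ := exists_nat_pow_near hq (by norm_num : (1:ℝ) < 2)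
    rw [le_div_iff₀ (by linarith)] at hl1
    rw [div_lt_iff₀ (by linarith)] at hl2
    have hlN : l < N := by
      by_contra hcon
      push Not at hcon
      have := dd_lt x y
      have : (2:ℝ)^N ≤ 2^l := pow_le_pow_right₀ (by norm_num) hcon
      nlinarith [pow_pos (by norm_num : (0:ℝ) < 2) l]
    have hle : sg x y ≤ (if dd x y ≤ 2^(l+1) * t then
        1 / ((2^l * t)^n * √(2^l * t)) else 0) := by
      rw [if_pos hl2.le]
      unfold sg
      have : 0 < 2^l * t := by positivity
      have h0 := dd_nonneg x y
      gcongr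
    refine hle.trans ?_
    apply Finset.single_le_sum (f := fun l => if dd x y ≤ 2^(l+1) * t then
        1 / ((2^l * t)^n * √(2^l * t)) else 0)
    · intro l _
      split_ifs
      · positivity
      · exact le_rfl
    · simp; omega
  refine (Finset.sum_le_sum h1).trans ?_
  rw [Finset.sum_comm]
  have h2 : ∀ l ∈ Finset.range (N+1), (∑ y : XX n N with t ≤ dd x y, if dd x y ≤ 2^(l+1) * t then
        1 / ((2^l * t)^n * √(2^l * t)) else 0) ≤ 5^n * (1 / √t) * (1 / √((2:ℝ)^l)) := by
    intro l _
    calc (∑ y : XX n N with t ≤ dd x y, if dd x y ≤ 2^(l+1) * t then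
        1 / ((2^l * t)^n * √(2^l * t)) else 0)
        ≤ ∑ y, if dd x y ≤ 2^(l+1) * t then
        1 / ((2^l * t)^n * √(2^l * t)) else 0 := by
          apply Finset.sum_le_sum_of_subset_of_nonneg (Finset.subset_univ _)
          intro y _ _
          split_ifs
          · positivity
          · exact le_rfl
      _ = ((Finset.univ.filter (fun y => dd x y ≤ 2^(l+1) * t)).card : ℝ) *
          (1 / ((2^l * t)^n * √(2^l * t))) := by
          rw [← Finset.sum_filter, Finset.sum_const, nsmul_eq_mul]
      _ ≤ (5 * (2^l * t))^n * (1 / ((2^l * t)^n * √(2^l * t))) := by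
          gcongr
          refine (card_ball x _ (by positivity)).trans ?_
          have : (1:ℝ) ≤ 2^l := one_le_pow₀ (by norm_num)
          have : 1 ≤ 2^l * t := by nlinarith
          gcongr
          rw [pow_succ]
          linarith
      _ = _ := by
          rw [mul_pow, Real.sqrt_mul (by positivity)]
          have : 0 < √t := by positivity
          have : 0 < √((2:ℝ)^l) := by positivity
          field_simp
  refine (Finset.sum_le_sum h2).trans ?_
  rw [← Finset.mul_sum]
  have := geo_sum (N+1)
  have h3 : 0 ≤ 5^n * (1 / √t) := by positivity
  nlinarith

lemma sum_sqrt (K : ℕ) : ∑ e ∈ Finset.range K, 1 / √((e:ℝ) + 1) ≤ 2 * √(K:ℝ) := by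
  induction K with
  | zero => simp
  | succ K ih =>
    rw [Finset.sum_range_succ]
    push_cast
    have p : 0 < √((K:ℝ)+1) := by positivity
    have s1 : √((K:ℝ)+1)^2 = K + 1 := Real.sq_sqrt (by positivity)
    have s2 : √(K:ℝ)^2 = K := Real.sq_sqrt (by positivity)
    have : 1 / √((K:ℝ)+1) ≤ 2 * √((K:ℝ)+1) - 2 * √(K:ℝ) := by
      rw [div_le_iff₀ p]
      nlinarith [sq_nonneg (√((K:ℝ)+1) - √(K:ℝ))]
    linarith

lemma G2 (k : ℕ) (hk : k ≤ N) (z : XX n N) :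
    ∑ x : XX n N with bl k x = bl k z, ∑ y : XX n N with bl k y ≠ bl k x, sg x y
      ≤ (16 * n * 5^n) * (((2:ℝ)^k)^n / √((2:ℝ)^k)) := by
  have h1 : ∀ x : XX n N, ∑ y : XX n N with bl k y ≠ bl k x, sg x y ≤
      ∑ i : Fin n, (4 * 5^n * (1 / √((((x i : ℕ) % 2^k : ℕ) : ℝ) + 1)) + 
        4 * 5^n * (1 / √((((2^k - 1 - (x i : ℕ) % 2^k) : ℕ) : ℝ) + 1))) := by
    intro x
    have hs : ∑ y : XX n N with bl k y ≠ bl k x, sg x y ≤ ∑ i : Fin n, 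
        (∑ y : XX n N with ((((x i : ℕ) % 2^k : ℕ) : ℝ) + 1) ≤ dd x y, sg x y + 
        ∑ y : XX n N with ((((2^k - 1 - (x i : ℕ) % 2^k) : ℕ) : ℝ) + 1) ≤ dd x y, sg x y) := by
      simp_rw [Finset.sum_filter]
      simp_rw [← Finset.sum_add_distrib]
      rw [Finset.sum_comm]
      apply Finset.sum_le_sum
      intro y _
      have hnn := sg_nonneg x y
      split_ifs with hxy
      · obtain ⟨i, hi⟩ := Function.ne_iff.mp hxy
        refine le_trans ?_ (Finset.single_le_sum (f := fun i : Fin n => 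
          ((if ((((x i : ℕ) % 2^k : ℕ) : ℝ) + 1) ≤ dd x y then sg x y else 0) +
          (if ((((2^k - 1 - (x i : ℕ) % 2^k) : ℕ) : ℝ) + 1) ≤ dd x y then sg x y else 0)))
          ?_ (Finset.mem_univ i))
        · simp only [bl] at hi
          have hd := le_dd x y i
          have m1 := Nat.div_add_mod (x i : ℕ) (2^k)
          have m2 := Nat.div_add_mod (y i : ℕ) (2^k)
          have m3 := Nat.mod_lt (x i : ℕ) (show 2^k > 0 by positivity)
          have m4 := Nat.mod_lt (y i : ℕ) (show 2^k > 0 by positivity)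
          rcases lt_or_gt_of_ne hi with hlt | hgt
          · have : (y i : ℕ) + ((x i : ℕ) % 2^k + 1) ≤ (x i : ℕ) := by
              have := Nat.mul_le_mul_left (2^k) (Nat.succ_le_of_lt hlt)
              rw [Nat.succ_eq_add_one, mul_add] at this
              omega
            have h' : ((y i : ℕ) : ℝ) + ((((x i : ℕ) % 2^k : ℕ) : ℝ) + 1) ≤ ((x i : ℕ) : ℝ) := by
              exact_mod_cast this
            rw [if_pos]
            · have : 0 ≤ (if ((((2^k - 1 - (x i : ℕ) % 2^k) : ℕ) : ℝ) + 1) ≤ dd x y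
                then sg x y else 0) := by split_ifs <;> simp [hnn]
              linarith
            · refine le_trans ?_ hd
              refine le_trans ?_ (le_abs_self _)
              linarith
          · have : (x i : ℕ) + (2^k - 1 - (x i : ℕ) % 2^k + 1) ≤ (y i : ℕ) := by
              have := Nat.mul_le_mul_left (2^k) (Nat.succ_le_of_lt hgt)
              rw [Nat.succ_eq_add_one, mul_add] at this
              omega
            have h' : ((x i : ℕ) : ℝ) + ((((2^k - 1 - (x i : ℕ) % 2^k) : ℕ) : ℝ) + 1)
                ≤ ((y i : ℕ) : ℝ) := by
              exact_mod_cast this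
            rw [if_pos (c := ((((2^k - 1 - (x i : ℕ) % 2^k) : ℕ) : ℝ) + 1) ≤ dd x y)]
            · have : 0 ≤ (if ((((x i : ℕ) % 2^k : ℕ) : ℝ) + 1) ≤ dd x y
                then sg x y else 0) := by split_ifs <;> simp [hnn]
              linarith
            · refine le_trans ?_ hd
              refine le_trans ?_ (neg_le_abs _)
              linarith
        · intro i _
          apply add_nonneg <;> split_ifs <;> simp [hnn]
      · apply Finset.sum_nonneg
        intro i _
        apply add_nonneg <;> split_ifs <;> simp [hnn]
    refine hs.trans ?_
    apply Finset.sum_le_sum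
    intro i _
    apply add_le_add
    · apply G1
      have : (0:ℝ) ≤ (((x i : ℕ) % 2^k : ℕ) : ℝ) := by positivity
      linarith
    · apply G1
      have : (0:ℝ) ≤ (((2^k - 1 - (x i : ℕ) % 2^k) : ℕ) : ℝ) := by positivity
      linarith
  refine (Finset.sum_le_sum (fun x _ => h1 x)).trans ?_
  rw [Finset.sum_comm]
  have h2 : ∀ i : Fin n, ∑ x : XX n N with bl k x = bl k z, 
      (4 * 5^n * (1 / √((((x i : ℕ) % 2^k : ℕ) : ℝ) + 1)) + 
        4 * 5^n * (1 / √((((2^k - 1 - (x i : ℕ) % 2^k) : ℕ) : ℝ) + 1))) ≤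
      (16 * 5^n) * (((2:ℝ)^k)^n / √((2:ℝ)^k)) := by
    intro i
    rw [block_sum k hk z i (fun e => 4 * 5^n * (1 / √((e : ℝ) + 1)) + 
        4 * 5^n * (1 / √((((2^k - 1 - e) : ℕ) : ℝ) + 1)))]
    rw [Finset.sum_add_distrib, ← Finset.mul_sum, ← Finset.mul_sum]
    rw [Finset.sum_range_reflect (fun e => 1 / √((e:ℝ) + 1))]
    have hs := sum_sqrt (2^k)
    push_cast at hs
    set S := ∑ e ∈ Finset.range (2^k), 1 / √((e:ℝ) + 1)
    have p : 0 < √((2:ℝ)^k) := by positivity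
    have s1 : √((2:ℝ)^k)^2 = 2^k := Real.sq_sqrt (by positivity)
    have : (4 * 5^n * S + 4 * 5^n * S) / 2^k ≤ (16 * 5^n) / √((2:ℝ)^k) := by
      rw [div_le_div_iff₀ (by positivity) p]
      calc (4 * 5^n * S + 4 * 5^n * S) * √((2:ℝ)^k) = 8 * 5^n * S * √((2:ℝ)^k) := by ring
        _ ≤ 8 * 5^n * (2 * √((2:ℝ)^k)) * √((2:ℝ)^k) := by gcongr
        _ = 16 * 5^n * √((2:ℝ)^k)^2 := by ring
        _ = _ := by rw [s1]
    calc _ ≤ ((2:ℝ)^k)^n * ((16 * 5^n) / √((2:ℝ)^k)) := by gcongr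
      _ = _ := by ring
  refine (Finset.sum_le_sum (fun i _ => h2 i)).trans ?_
  rw [Finset.sum_const, Finset.card_univ, Fintype.card_fin, nsmul_eq_mul]
  apply le_of_eq; ring

/-- geometric constant -/
def CG (n : ℕ) : ℝ := 16 * n * 5^n

lemma CG_nonneg (n : ℕ) : 0 ≤ CG n := by unfold CG; positivity

/-- weighted Schur type estimate -/
lemma GS (k : ℕ) (hk : k ≤ N) (v : XX n N → ℂ) (hv : Meas (bl k) v) :
    ∑ x, ∑ y : XX n N with bl k y ≠ bl k x, sg x y * ‖v x‖^2 ≤ CG n / √((2:ℝ)^k) * ∑ x, ‖v x‖^2 := by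
  have h1 : ∀ x, ∑ y : XX n N with bl k y ≠ bl k x, sg x y * ‖v x‖^2 =
      ‖v x‖^2 * ∑ y : XX n N with bl k y ≠ bl k x, sg x y := by
    intro x
    rw [← Finset.sum_mul, mul_comm]
  simp_rw [h1]
  rw [← sum_av (bl k) (fun x => ‖v x‖^2) (fun x : XX n N => ∑ y : XX n N with bl k y ≠ bl k x, sg x y)
    (fun a b h => by simp only [hv a b h]), Finset.mul_sum]
  apply Finset.sum_le_sum
  intro x _
  rw [mul_comm]
  gcongr
  unfold av
  simp only [RCLike.natCast_re, Nat.cast_inj]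
  rw [block_card k hk x, div_le_iff₀ (by positivity)]
  refine (G2 k hk x).trans (le_of_eq ?_)
  unfold CG
  ring

end geom
end T1D

namespace T1D
section disc
variable {n N : ℕ}

def qq (f : XX n N → ℂ) : ℝ := ∑ x, ‖f x‖^2

lemma qq_nonneg (f : XX n N → ℂ) : 0 ≤ qq f := Finset.sum_nonneg (fun _ _ => by positivity)

lemma GS' (k : ℕ) (hk : k ≤ N) (v : XX n N → ℂ) (hv : Meas (bl k) v) :
    ∑ x, ∑ y : XX n N with bl k y ≠ bl k x, sg x y * ‖v y‖^2 ≤ CG n / √((2:ℝ)^k) * qq v := by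
  refine le_trans (le_of_eq ?_) (GS k hk v hv)
  simp_rw [Finset.sum_filter]
  rw [Finset.sum_comm]
  apply Finset.sum_congr rfl
  intro x _
  apply Finset.sum_congr rfl
  intro y _
  rw [sg_comm x y]
  by_cases h : bl k x = bl k y
  · simp [h]
  · simp [h, Ne.symm h]

lemma D1 (k : ℕ) (hk : k ≤ N) (h : XX n N → ℂ) (hh : Meas (bl k) h) :
    ∑ x, ∑ y, sg x y * ‖h x - h y‖^2 ≤ 4 * CG n / √((2:ℝ)^k) * qq h := by
  have h1 : ∀ x y : XX n N, sg x y * ‖h x - h y‖^2 ≤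
      2 * (if bl k y ≠ bl k x then sg x y * ‖h x‖^2 else 0)
      + 2 * (if bl k y ≠ bl k x then sg x y * ‖h y‖^2 else 0) := by
    intro x y
    split_ifs with hxy
    · have := norm_sub_le (h x) (h y)
      have h2 : ‖h x - h y‖^2 ≤ (‖h x‖ + ‖h y‖)^2 := by gcongr
      have := sg_nonneg x y
      have h3 : ‖h x - h y‖^2 ≤ 2 * ‖h x‖^2 + 2 * ‖h y‖^2 := by
        nlinarith [sq_nonneg (‖h x‖ - ‖h y‖)]
      nlinarith
    · push Not at hxy
      rw [hh x y hxy.symm]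
      simp
  calc ∑ x, ∑ y, sg x y * ‖h x - h y‖^2 ≤ ∑ x : XX n N, ∑ y : XX n N, (
      2 * (if bl k y ≠ bl k x then sg x y * ‖h x‖^2 else 0)
      + 2 * (if bl k y ≠ bl k x then sg x y * ‖h y‖^2 else 0)) :=
        Finset.sum_le_sum (fun x _ => Finset.sum_le_sum (fun y _ => h1 x y))
    _ = 2 * ∑ x : XX n N, ∑ y : XX n N with bl k y ≠ bl k x, sg x y * ‖h x‖^2 +
        2 * ∑ x : XX n N, ∑ y : XX n N with bl k y ≠ bl k x, sg x y * ‖h y‖^2 := by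
        simp_rw [Finset.sum_filter, Finset.sum_add_distrib, ← Finset.mul_sum]
    _ ≤ 2 * (CG n / √((2:ℝ)^k) * qq h) + 2 * (CG n / √((2:ℝ)^k) * qq h) := by
        gcongr
        · exact GS k hk h hh
        · exact GS' k hk h hh
    _ = _ := by ring

/-- fourth root of two -/
def rho : ℝ := √(√2)

lemma rho_ge : 7/6 ≤ rho := by
  unfold rho
  apply Real.le_sqrt_of_sq_le
  apply Real.le_sqrt_of_sq_le
  norm_num

lemma rho_pos : 0 < rho := lt_of_lt_of_le (by norm_num) rho_ge

lemma rho_sq (k : ℕ) : √((2:ℝ)^k) = (rho^k)^2 := by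
  have h1 : rho^2 = √2 := Real.sq_sqrt (by positivity)
  rw [← pow_mul, mul_comm, pow_mul, h1]
  rw [Real.sqrt_eq_iff_mul_self_eq (by positivity) (by positivity), ← mul_pow,
    Real.mul_self_sqrt (by norm_num)]

lemma geo_rho (M : ℕ) : ∑ l ∈ Finset.range M, 1 / rho^l ≤ 7 := by
  have h2 := rho_ge
  have : ∀ M : ℕ, ∑ l ∈ Finset.range M, 1 / rho^l ≤ 7 - 7 / rho^M := by
    intro M
    induction M with
    | zero => simp
    | succ M ih =>
      rw [Finset.sum_range_succ]
      have p : 0 < rho^M := pow_pos rho_pos M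
      have : 7 / rho^(M+1) ≤ 6 / rho^M := by
        rw [pow_succ, div_le_div_iff₀ (mul_pos p rho_pos) p]
        nlinarith
      have e2 : 7 / rho^M = 6 / rho^M + 1 / rho^M := by
        rw [← add_div]; norm_num
      linarith
  refine (this M).trans ?_
  have : 0 ≤ 7 / rho^M := by have := rho_pos; positivity
  linarith

def SJ (j : ℕ) (h : XX n N → ℂ) : ℝ := √((2:ℝ)^j) * ∑ x, ∑ y, sg x y * ‖h x - h y‖^2

lemma diff_sum (f : XX n N → ℂ) (j : ℕ) (hj : j ≤ N) (x y : XX n N) :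
    av (bl j) f x - av (bl j) f y =
      ∑ k ∈ Finset.Ico j N, (DD bl k f x - DD bl k f y) := by
  have h : ∀ x : XX n N, ∑ k ∈ Finset.Ico j N, DD bl k f x = av (bl j) f x - av (bl N) f x := by
    intro x
    unfold DD
    rw [Finset.sum_Ico_eq_sum_range]
    have := Finset.sum_range_sub' (fun i => av (bl (j+i)) f x) (N - j)
    simp only [add_zero, Nat.add_sub_cancel' hj] at this
    exact this
  rw [Finset.sum_sub_distrib, h, h, av_meas (bl N) f x y (bl_top x y)]
  ring

lemma cs_rho (j N' : ℕ) (a : ℕ → ℂ) :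
    ‖∑ k ∈ Finset.Ico j N', a k‖^2 ≤ 7 * ∑ k ∈ Finset.Ico j N', rho^(k-j) * ‖a k‖^2 := by
  have p := rho_pos
  have h1 : ‖∑ k ∈ Finset.Ico j N', a k‖^2 ≤ (∑ k ∈ Finset.Ico j N', ‖a k‖)^2 := by
    gcongr; exact norm_sum_le _ _
  refine h1.trans ?_
  refine (Finset.sum_sq_le_sum_mul_sum_of_sq_eq_mul (Finset.Ico j N')
    (f := fun k => 1 / rho^(k-j)) (g := fun k => rho^(k-j) * ‖a k‖^2)
    (fun _ _ => by positivity) (fun _ _ => by positivity) (fun k _ => by field_simp)).trans ?_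
  have h2 : ∑ k ∈ Finset.Ico j N', 1 / rho^(k-j) ≤ 7 := by
    rw [Finset.sum_Ico_eq_sum_range]
    simp only [Nat.add_sub_cancel_left]
    exact geo_rho _
  have : 0 ≤ ∑ k ∈ Finset.Ico j N', rho^(k-j) * ‖a k‖^2 :=
    Finset.sum_nonneg (fun _ _ => by positivity)
  gcongr

lemma D2 (f : XX n N → ℂ) :
    ∑ m ∈ Finset.range N, SJ (m+1) (av (bl (m+1)) f) ≤ 196 * CG n * qq f := by
  have p := rho_pos
  have hC := CG_nonneg n
  have h1 : ∀ m ∈ Finset.range N, SJ (m+1) (av (bl (m+1)) f) ≤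
      ∑ k ∈ Finset.Ico (m+1) N, 28 * CG n * (1 / rho^(k-(m+1))) * qq (DD bl k f) := by
    intro m hm
    have hm' : m + 1 ≤ N := by simpa using hm
    unfold SJ
    calc √((2:ℝ)^(m+1)) * ∑ x, ∑ y, sg x y * ‖av (bl (m+1)) f x - av (bl (m+1)) f y‖^2
        ≤ √((2:ℝ)^(m+1)) * ∑ x, ∑ y, sg x y * (7 * ∑ k ∈ Finset.Ico (m+1) N,
            rho^(k-(m+1)) * ‖DD bl k f x - DD bl k f y‖^2) := by
          gcongr with x _ y _
          · exact sg_nonneg x y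
          · rw [diff_sum f (m+1) hm' x y]
            exact cs_rho _ _ _
      _ = ∑ k ∈ Finset.Ico (m+1) N, (√((2:ℝ)^(m+1)) * 7 * rho^(k-(m+1)) *
            ∑ x, ∑ y, sg x y * ‖DD bl k f x - DD bl k f y‖^2) := by
          symm
          simp_rw [Finset.mul_sum]
          rw [Finset.sum_comm]
          apply Finset.sum_congr rfl
          intro x _
          rw [Finset.sum_comm]
          apply Finset.sum_congr rfl
          intro y _
          apply Finset.sum_congr rfl
          intro k _
          ring
      _ ≤ _ := by
          apply Finset.sum_le_sum
          intro k hk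
          rw [Finset.mem_Ico] at hk
          have := D1 k hk.2.le (DD bl k f) (DD_meas bl filt_bl k f)
          calc _ ≤ √((2:ℝ)^(m+1)) * 7 * rho^(k-(m+1)) *
              (4 * CG n / √((2:ℝ)^k) * qq (DD bl k f)) := by gcongr
            _ = _ := by
              rw [rho_sq, rho_sq]
              obtain ⟨l, rfl⟩ := Nat.exists_eq_add_of_le hk.1
              rw [Nat.add_sub_cancel_left, pow_add _ (m+1) l]
              field_simp
              ring
  refine (Finset.sum_le_sum h1).trans ?_
  rw [Finset.sum_comm' (t' := Finset.range N) (s' := fun k => Finset.range k) (by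
    intro a b; simp only [Finset.mem_range, Finset.mem_Ico]; omega)]
  have h2 : ∀ k ∈ Finset.range N, ∑ m ∈ Finset.range k,
      28 * CG n * (1 / rho^(k-(m+1))) * qq (DD bl k f) ≤ 196 * CG n * qq (DD bl k f) := by
    intro k _
    have e : ∑ m ∈ Finset.range k, 1 / rho^(k-(m+1)) = ∑ l ∈ Finset.range k, 1 / rho^l := by
      rw [← Finset.sum_range_reflect]
      apply Finset.sum_congr rfl
      intro m hm
      congr 2
      simp only [Finset.mem_range] at hm
      omega
    rw [← Finset.sum_mul, ← Finset.mul_sum, e]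
    have := geo_rho k
    have hq := qq_nonneg (DD bl k f)
    calc _ ≤ 28 * CG n * 7 * qq (DD bl k f) := by gcongr
      _ = _ := by ring
  refine (Finset.sum_le_sum h2).trans ?_
  rw [← Finset.mul_sum]
  gcongr
  exact sum_DD_le bl filt_bl bl_inj N f

end disc
end T1D

namespace T1D
section disc
variable {n N : ℕ}

structure CZ (M : XX n N → XX n N → ℂ) (A : ℝ) : Prop where
  h0 : 0 < A
  h1 : ∀ x y, x ≠ y → ‖M x y‖ ≤ A / dd x y ^ n
  h2 : ∀ x x' y, 8 * dd x x' ≤ dd x y → ‖M x y - M x' y‖ ≤ A * dd x x' / dd x y ^ (n+1)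
  h2' : ∀ y y' x, 8 * dd y y' ≤ dd x y → ‖M x y - M x y'‖ ≤ A * dd y y' / dd x y ^ (n+1)
  h3 : ∀ x, ‖∑ y, M x y‖ ≤ A
  h3' : ∀ y, ‖∑ x, M x y‖ ≤ A
  h4 : ∀ k, k ≤ N → ∀ z : XX n N, ‖∑ x : XX n N with bl k x = bl k z,
    ∑ y : XX n N with bl k y = bl k z, M x y‖ ≤ A * ((2:ℝ)^k)^n

lemma CZ.tr {M : XX n N → XX n N → ℂ} {A : ℝ} (h : CZ M A) : CZ (fun x y => M y x) A where
  h0 := h.h0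
  h1 x y hxy := by rw [dd_comm]; exact h.h1 y x hxy.symm
  h2 x x' y hh := by rw [dd_comm x y] at *; exact h.h2' x x' y hh
  h2' y y' x hh := by rw [dd_comm x y] at *; exact h.h2 y y' x hh
  h3 := h.h3'
  h3' := h.h3
  h4 k hk z := by rw [Finset.sum_comm]; exact h.h4 k hk z

def far (j : ℕ) (x y : XX n N) : Prop := ∃ i, bl j x i + 9 ≤ bl j y i ∨ bl j y i + 9 ≤ bl j x i

def rep (j : ℕ) (x : XX n N) : XX n N := fun i => ⟨2^j * ((x i : ℕ) / 2^j),
  lt_of_le_of_lt (Nat.mul_div_le _ _) (x i).2⟩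

open Classical in
def MM (M : XX n N → XX n N → ℂ) (j : ℕ) (x y : XX n N) : ℂ :=
  M x y - if far j x y then M (rep j x) y else 0

lemma bl_bounds (j : ℕ) (x : XX n N) (i : Fin n) :
    (2:ℝ)^j * (bl j x i : ℝ) ≤ ((x i : ℕ) : ℝ) ∧ ((x i : ℕ) : ℝ) + 1 ≤ (2:ℝ)^j * (bl j x i : ℝ) + 2^j := by
  constructor
  · have := Nat.mul_div_le (x i : ℕ) (2^j)
    unfold bl
    exact_mod_cast this
  · have := Nat.lt_mul_div_succ (x i : ℕ) (show 0 < 2^j by positivity)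
    unfold bl
    have h2 : (x i : ℕ) + 1 ≤ 2^j * ((x i : ℕ)/2^j) + 2^j := by
      rw [mul_add, mul_one] at this; omega
    exact_mod_cast h2

lemma dd_rep (j : ℕ) (x : XX n N) : dd x (rep j x) ≤ 2^j := by
  apply dd_le _ _ _ (by positivity)
  intro i
  have := bl_bounds j x i
  have e : (((rep j x) i : ℕ) : ℝ) = 2^j * (bl j x i : ℝ) := by
    simp [rep, bl]
  rw [e, abs_le]
  constructor <;> linarith [this.1, this.2]

lemma far_dd (j : ℕ) (x y : XX n N) (h : far j x y) : 8 * 2^j ≤ dd x y := by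
  obtain ⟨i, hi⟩ := h
  refine le_trans ?_ (le_dd x y i)
  have hx := bl_bounds j x i
  have hy := bl_bounds j y i
  have p : (0:ℝ) < 2^j := by positivity
  rcases hi with hi | hi
  · have : (bl j x i : ℝ) + 9 ≤ bl j y i := by exact_mod_cast hi
    rw [abs_sub_comm]
    refine le_trans ?_ (le_abs_self _)
    nlinarith
  · have : (bl j y i : ℝ) + 9 ≤ bl j x i := by exact_mod_cast hi
    refine le_trans ?_ (le_abs_self _)
    nlinarith

lemma near_dd (j : ℕ) (x y : XX n N) (h : ¬ far j x y) : dd x y ≤ 9 * 2^j := by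
  apply dd_le _ _ _ (by positivity)
  intro i
  have hx := bl_bounds j x i
  have hy := bl_bounds j y i
  have p : (0:ℝ) < 2^j := by positivity
  simp only [far, not_exists, not_or, not_le] at h
  have h1 : (bl j y i : ℝ) ≤ bl j x i + 8 := by
    have := (h i).1
    have : bl j y i ≤ bl j x i + 8 := by omega
    exact_mod_cast this
  have h2 : (bl j x i : ℝ) ≤ bl j y i + 8 := by
    have := (h i).2
    have : bl j x i ≤ bl j y i + 8 := by omega
    exact_mod_cast this
  rw [abs_le]
  constructor <;> nlinarith

lemma MM_bound {M : XX n N → XX n N → ℂ} {A : ℝ} (h : CZ M A) (j : ℕ) (x y : XX n N)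
    (hxy : x ≠ y) : ‖MM M j x y‖ ≤ 3 * A * √((2:ℝ)^j) * sg x y := by
  have d1 := one_le_dd x y hxy
  have d0 : 0 < dd x y := by linarith
  have A0 := h.h0
  have s0 : 0 < √(dd x y) := Real.sqrt_pos.mpr d0
  have s2 : √(dd x y) ^ 2 = dd x y := Real.sq_sqrt d0.le
  have t0 : 0 < √((2:ℝ)^j) := Real.sqrt_pos.mpr (by positivity)
  have t2 : √((2:ℝ)^j)^2 = 2^j := Real.sq_sqrt (by positivity)
  unfold MM sg
  split_ifs with hf
  · have hd := far_dd j x y hf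
    have hr := dd_rep j x
    refine (h.h2 x (rep j x) y (by linarith)).trans ?_
    have e1 : √((2:ℝ)^j) ≤ √(dd x y) := by
      apply Real.sqrt_le_sqrt; nlinarith
    calc A * dd x (rep j x) / dd x y ^ (n+1) ≤ A * 2^j / dd x y ^ (n+1) := by gcongr
      _ = A * √((2:ℝ)^j) * (1 / (dd x y ^ n * √(dd x y))) * (√((2:ℝ)^j) / √(dd x y)) := by
        rw [pow_succ]
        nth_rewrite 1 [← t2]
        have : dd x y ^ n * dd x y = dd x y ^ n * √(dd x y) ^ 2 := by rw [s2]
        rw [this]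
        field_simp
      _ ≤ A * √((2:ℝ)^j) * (1 / (dd x y ^ n * √(dd x y))) * 1 := by
        gcongr
        rw [div_le_one s0]; exact e1
      _ ≤ 3 * A * √((2:ℝ)^j) * (1 / (dd x y ^ n * √(dd x y))) := by
        have : 0 ≤ A * √((2:ℝ)^j) * (1 / (dd x y ^ n * √(dd x y))) := by positivity
        linarith
  · have hd := near_dd j x y hf
    rw [sub_zero]
    refine (h.h1 x y hxy).trans ?_
    have e1 : √(dd x y) ≤ 3 * √((2:ℝ)^j) := by
      apply Real.sqrt_le_iff.mpr
      constructor
      · positivity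
      · rw [mul_pow, t2]; linarith
    calc A / dd x y ^ n = A * √(dd x y) * (1 / (dd x y ^ n * √(dd x y))) := by field_simp
      _ ≤ A * (3 * √((2:ℝ)^j)) * (1 / (dd x y ^ n * √(dd x y))) := by gcongr
      _ = _ := by ring

lemma far_congr (j : ℕ) (x x' y : XX n N) (h : bl j x = bl j x') : far j x y = far j x' y := by
  simp only [far, h]

lemma rep_congr (j : ℕ) (x x' : XX n N) (h : bl j x = bl j x') : rep j x = rep j x' := by
  funext i
  have := congrFun h i
  simp only [bl] at this
  simp only [rep, this]

lemma RM (M : XX n N → XX n N → ℂ) (m : ℕ) (g : XX n N → ℂ) (H : XX n N → XX n N → ℂ)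
    (hH : ∀ y, Meas (bl (m+1)) (fun x => H x y)) :
    ∑ x, ∑ y, M x y * H x y * DD bl m g x = ∑ x, ∑ y, MM M (m+1) x y * H x y * DD bl m g x := by
  classical
  rw [← sub_eq_zero, ← Finset.sum_sub_distrib]
  simp_rw [← Finset.sum_sub_distrib]
  rw [Finset.sum_comm]
  apply Finset.sum_eq_zero
  intro y _
  rw [← sum_meas_DD bl filt_bl m (fun x => (if far (m+1) x y then M (rep (m+1) x) y else 0) * H x y) g]
  · apply Finset.sum_congr rfl
    intro x _
    unfold MM
    ring
  · intro a b hab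
    have := hH y a b hab
    simp only at this ⊢
    simp only [this, far_congr _ _ _ y hab, rep_congr _ _ _ hab]

def Bf (M : XX n N → XX n N → ℂ) (f g : XX n N → ℂ) : ℂ := ∑ x, ∑ y, M x y * f y * g x

lemma sqrt_succ (m : ℕ) : √((2:ℝ)^(m+1)) * (1 / √((2:ℝ)^m)) ≤ 2 := by
  have : (0:ℝ) < √((2:ℝ)^m) := Real.sqrt_pos.mpr (by positivity)
  rw [pow_succ, Real.sqrt_mul (by positivity)]
  have e : √((2:ℝ)^m) * √2 * (1/√((2:ℝ)^m)) = √2 := by field_simp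
  rw [e, Real.sqrt_le_iff]; norm_num

/-- the two quadratic sums -/
lemma QX (m : ℕ) (hm : m < N) (v : XX n N → ℂ) (hv : Meas (bl m) v) :
    √((2:ℝ)^(m+1)) * ∑ x, ∑ y : XX n N with bl m y ≠ bl m x, sg x y * ‖v x‖^2 ≤ 2 * CG n * qq v := by
  have := GS m hm.le v hv
  have hC := CG_nonneg n
  have hq := qq_nonneg v
  calc _ ≤ √((2:ℝ)^(m+1)) * (CG n / √((2:ℝ)^m) * qq v) := by gcongr; exact this
    _ = (√((2:ℝ)^(m+1)) * (1 / √((2:ℝ)^m))) * (CG n * qq v) := by ring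
    _ ≤ 2 * (CG n * qq v) := by gcongr; exact sqrt_succ m
    _ = _ := by ring

lemma QY (m : ℕ) (hm : m < N) (v : XX n N → ℂ) (hv : Meas (bl m) v) :
    √((2:ℝ)^(m+1)) * ∑ x, ∑ y : XX n N with bl m y ≠ bl m x, sg x y * ‖v y‖^2 ≤ 2 * CG n * qq v := by
  have := GS' m hm.le v hv
  have hC := CG_nonneg n
  have hq := qq_nonneg v
  calc _ ≤ √((2:ℝ)^(m+1)) * (CG n / √((2:ℝ)^m) * qq v) := by gcongr
    _ = (√((2:ℝ)^(m+1)) * (1 / √((2:ℝ)^m))) * (CG n * qq v) := by ring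
    _ ≤ 2 * (CG n * qq v) := by gcongr; exact sqrt_succ m
    _ = _ := by ring

lemma TA_R {M : XX n N → XX n N → ℂ} {A : ℝ} (h : CZ M A) (m : ℕ) (hm : m < N) (f g : XX n N → ℂ) :
    ‖∑ x, ∑ y, M x y * (av (bl (m+1)) f y - av (bl (m+1)) f x) * DD bl m g x‖ ≤
      3 / 2 * A * (SJ (m+1) (av (bl (m+1)) f) + 2 * CG n * qq (DD bl m g)) := by
  set F := av (bl (m+1)) f with hF
  set v := DD bl m g with hv
  have A0 := h.h0
  rw [RM M m g (fun x y => F y - F x) (by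
    intro y a b hab
    simp only [hF, av_meas (bl (m+1)) f a b hab])]
  have hvm : Meas (bl m) v := DD_meas bl filt_bl m g
  have key : ∀ x y : XX n N, ‖MM M (m+1) x y * (F y - F x) * v x‖ ≤
      3 / 2 * A * √((2:ℝ)^(m+1)) * (sg x y * ‖F x - F y‖^2 +
        if bl m y ≠ bl m x then sg x y * ‖v x‖^2 else 0) := by
    intro x y
    have s0 := sg_nonneg x y
    by_cases hb : bl m y = bl m x
    · have : F y = F x := av_meas (bl (m+1)) f y x (filt_bl m y x hb)
      simp [this, hb]
    · have hxy : x ≠ y := fun e => hb (by rw [e])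
      have h1 := MM_bound h (m+1) x y hxy
      rw [norm_mul, norm_mul, norm_sub_rev (F y), if_pos hb]
      calc _ ≤ (3 * A * √((2:ℝ)^(m+1)) * sg x y) * ‖F x - F y‖ * ‖v x‖ := by gcongr
        _ = (3 * A * √((2:ℝ)^(m+1)) * sg x y) * (‖F x - F y‖ * ‖v x‖) := by ring
        _ ≤ (3 * A * √((2:ℝ)^(m+1)) * sg x y) * ((‖F x - F y‖^2 + ‖v x‖^2)/2) := by
          gcongr
          nlinarith [sq_nonneg (‖F x - F y‖ - ‖v x‖)]
        _ = _ := by ring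
  refine (norm_sum_le _ _).trans ?_
  refine (Finset.sum_le_sum (fun x _ => norm_sum_le _ _)).trans ?_
  refine (Finset.sum_le_sum (fun x _ => Finset.sum_le_sum (fun y _ => key x y))).trans ?_
  have e : ∑ x : XX n N, ∑ y : XX n N, 3 / 2 * A * √((2:ℝ)^(m+1)) * (sg x y * ‖F x - F y‖^2 +
        if bl m y ≠ bl m x then sg x y * ‖v x‖^2 else 0) = 3 / 2 * A * (SJ (m+1) F +
        √((2:ℝ)^(m+1)) * ∑ x, ∑ y : XX n N with bl m y ≠ bl m x, sg x y * ‖v x‖^2) := by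
    simp_rw [← Finset.mul_sum, Finset.sum_add_distrib, SJ, Finset.sum_filter]
    ring
  rw [e]
  have := QX m hm v hvm
  gcongr

lemma TA_P (A : ℝ) (A0 : 0 < A) (m : ℕ) (f g b : XX n N → ℂ) :
    ‖∑ x, b x * av (bl (m+1)) f x * DD bl m g x‖ ≤
      1 / (2 * A) * ∑ x, ‖av (bl (m+1)) f x‖^2 * ‖DD bl m b x‖^2 + A / 2 * qq (DD bl m g) := by
  set F := av (bl (m+1)) f with hF
  set v := DD bl m g with hv
  have hvm : Meas (bl m) v := DD_meas bl filt_bl m g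
  have hFm : Meas (bl (m+1)) F := av_meas _ _
  have e : ∑ x, b x * F x * v x = ∑ x, F x * DD bl m b x * v x := by
    have h1 := sum_av (bl m) (fun x => F x * v x) b (by
      intro x y hxy
      simp only [hvm x y hxy, hFm x y (filt_bl m x y hxy)])
    have h2 := sum_meas_DD bl filt_bl m (fun x => F x * av (bl (m+1)) b x) g (by
      intro x y hxy
      simp only [hFm x y hxy, av_meas (bl (m+1)) b x y hxy])
    have h3 : ∑ x, F x * DD bl m b x * v x = ∑ x, F x * v x * av (bl m) b x -
        ∑ x, F x * av (bl (m+1)) b x * DD bl m g x := by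
      rw [← Finset.sum_sub_distrib]
      apply Finset.sum_congr rfl
      intro x _
      simp only [hv, DD]; ring
    rw [h3, h1, h2, sub_zero]
    exact Finset.sum_congr rfl (fun x _ => by ring)
  rw [e]
  refine (norm_sum_le _ _).trans ?_
  unfold qq
  rw [Finset.mul_sum, Finset.mul_sum, ← Finset.sum_add_distrib]
  apply Finset.sum_le_sum
  intro x _
  rw [norm_mul, norm_mul]
  set s := ‖F x‖ * ‖DD bl m b x‖ with hs
  have e2 : 1 / (2 * A) * (‖F x‖^2 * ‖DD bl m b x‖^2) + A / 2 * ‖v x‖^2 - s * ‖v x‖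
     = 1 / (2*A) * (s - A * ‖v x‖)^2 := by rw [hs]; field_simp; ring
  have : 0 ≤ 1 / (2*A) * (s - A * ‖v x‖)^2 := by positivity
  linarith

lemma TA {M : XX n N → XX n N → ℂ} {A : ℝ} (h : CZ M A) (f g : XX n N → ℂ) :
    ∑ m ∈ Finset.range N, ‖Bf M (av (bl (m+1)) f) (DD bl m g)‖ ≤
      A * (300 * CG n + 13) * (qq f + qq g) := by
  have A0 := h.h0
  have hC := CG_nonneg n
  have qf := qq_nonneg f
  have qg := qq_nonneg g
  set b : XX n N → ℂ := fun x => ∑ y, M x y with hb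
  have h1 : ∀ m ∈ Finset.range N, ‖Bf M (av (bl (m+1)) f) (DD bl m g)‖ ≤
      (1 / (2 * A) * ∑ x, ‖av (bl (m+1)) f x‖^2 * ‖DD bl m b x‖^2 + A / 2 * qq (DD bl m g)) +
      3 / 2 * A * (SJ (m+1) (av (bl (m+1)) f) + 2 * CG n * qq (DD bl m g)) := by
    intro m hm
    have e : Bf M (av (bl (m+1)) f) (DD bl m g) = ∑ x, b x * av (bl (m+1)) f x * DD bl m g x +
      ∑ x, ∑ y, M x y * (av (bl (m+1)) f y - av (bl (m+1)) f x) * DD bl m g x := by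
      unfold Bf
      rw [← Finset.sum_add_distrib]
      apply Finset.sum_congr rfl
      intro x _
      rw [hb]
      simp only
      rw [Finset.sum_mul, Finset.sum_mul, ← Finset.sum_add_distrib]
      exact Finset.sum_congr rfl (fun y _ => by ring)
    rw [e]
    exact (norm_add_le _ _).trans (add_le_add (TA_P A A0 m f g b)
      (TA_R h m (by simpa using hm) f g))
  refine (Finset.sum_le_sum h1).trans ?_
  have e2 := paraprod bl filt_bl (bl_inj (n := n) (N := N)) N f b A h.h3
  have e3 := D2 f
  have e4 : ∑ m ∈ Finset.range N, qq (DD bl m g) ≤ qq g := sum_DD_le bl filt_bl bl_inj N g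
  simp_rw [Finset.sum_add_distrib, ← Finset.mul_sum, Finset.sum_add_distrib, ← Finset.mul_sum]
  change _ ≤ 26 * A^2 * qq f at e2
  have e5 : 1 / (2*A) * (26 * A^2 * qq f) = 13 * A * qq f := by field_simp; ring
  calc _ ≤ 1 / (2*A) * (26 * A^2 * qq f) + A / 2 * qq g +
      3 / 2 * A * (196 * CG n * qq f + 2 * CG n * qq g) := by gcongr
    _ ≤ _ := by
      rw [e5]
      have p1 := mul_nonneg (mul_nonneg A0.le hC) qf
      have p2 := mul_nonneg (mul_nonneg A0.le hC) qg
      have p3 := mul_nonneg A0.le qg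
      nlinarith

lemma TC1 {M : XX n N → XX n N → ℂ} {A : ℝ} (h : CZ M A) (m : ℕ) (hm : m ≤ N) (u v : XX n N → ℂ)
    (hu : Meas (bl m) u) (hv : Meas (bl m) v) :
    ‖∑ x, ∑ y : XX n N with bl m y = bl m x, M x y * u y * v x‖ ≤ A / 2 * (qq u + qq v) := by
  have A0 := h.h0
  set r : XX n N → ℂ := fun x => ∑ y : XX n N with bl m y = bl m x, M x y with hr
  have e : ∑ x, ∑ y : XX n N with bl m y = bl m x, M x y * u y * v x =
      ∑ x, u x * v x * av (bl m) r x := by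
    rw [sum_av (bl m) (fun x => u x * v x) r (by
      intro a b hab; simp only [hu a b hab, hv a b hab])]
    apply Finset.sum_congr rfl
    intro x _
    rw [hr]
    simp only
    rw [Finset.mul_sum]
    apply Finset.sum_congr rfl
    intro y hy
    rw [hu y x (by simpa using hy)]
    ring
  have har : ∀ x, ‖av (bl m) r x‖ ≤ A := by
    intro x
    unfold av
    rw [norm_div, RCLike.norm_natCast, block_card m hm x, div_le_iff₀ (by positivity)]
    refine le_trans (le_of_eq ?_) (h.h4 m hm x)
    congr 1
    apply Finset.sum_congr rfl
    intro y hy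
    have : bl m y = bl m x := by simpa using hy
    simp only [hr, this]
  rw [e]
  refine (norm_sum_le _ _).trans ?_
  unfold qq
  rw [← Finset.sum_add_distrib, Finset.mul_sum]
  apply Finset.sum_le_sum
  intro x _
  rw [norm_mul, norm_mul]
  calc _ ≤ ‖u x‖ * ‖v x‖ * A := by gcongr; exact har x
    _ ≤ _ := by nlinarith [sq_nonneg (‖u x‖ - ‖v x‖)]

lemma TC2 {M : XX n N → XX n N → ℂ} {A : ℝ} (h : CZ M A) (m : ℕ) (hm : m < N) (u v : XX n N → ℂ)
    (hu : Meas (bl m) u) (hv : Meas (bl m) v) :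
    ‖∑ x, ∑ y : XX n N with bl m y ≠ bl m x, MM M (m+1) x y * u y * v x‖ ≤
      3 * A * CG n * (qq u + qq v) := by
  have A0 := h.h0
  refine (norm_sum_le _ _).trans ?_
  refine (Finset.sum_le_sum (fun x _ => norm_sum_le _ _)).trans ?_
  have key : ∀ x : XX n N, ∀ y ∈ Finset.univ.filter (fun y : XX n N => bl m y ≠ bl m x),
      ‖MM M (m+1) x y * u y * v x‖ ≤ 3 / 2 * A * √((2:ℝ)^(m+1)) *
        (sg x y * ‖v x‖^2 + sg x y * ‖u y‖^2) := by
    intro x y hy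
    have hb : bl m y ≠ bl m x := by simpa using hy
    have hxy : x ≠ y := fun e => hb (by rw [e])
    have h1 := MM_bound h (m+1) x y hxy
    have s0 := sg_nonneg x y
    rw [norm_mul, norm_mul]
    calc _ ≤ (3 * A * √((2:ℝ)^(m+1)) * sg x y) * ‖u y‖ * ‖v x‖ := by gcongr
      _ = (3 * A * √((2:ℝ)^(m+1)) * sg x y) * (‖u y‖ * ‖v x‖) := by ring
      _ ≤ (3 * A * √((2:ℝ)^(m+1)) * sg x y) * ((‖v x‖^2 + ‖u y‖^2)/2) := by
          gcongr
          nlinarith [sq_nonneg (‖u y‖ - ‖v x‖)]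
      _ = _ := by ring
  refine (Finset.sum_le_sum (fun x _ => Finset.sum_le_sum (key x))).trans ?_
  simp_rw [← Finset.mul_sum, Finset.sum_add_distrib]
  have h1 := QX m hm v hv
  have h2 := QY m hm u hu
  calc _ = 3 / 2 * A * (√((2:ℝ)^(m+1)) * ∑ x, ∑ y : XX n N with bl m y ≠ bl m x, sg x y * ‖v x‖^2
      + √((2:ℝ)^(m+1)) * ∑ x, ∑ y : XX n N with bl m y ≠ bl m x, sg x y * ‖u y‖^2) := by ring
    _ ≤ 3 / 2 * A * (2 * CG n * qq v + 2 * CG n * qq u) := by gcongr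
    _ = _ := by ring

lemma TC {M : XX n N → XX n N → ℂ} {A : ℝ} (h : CZ M A) (m : ℕ) (hm : m < N) (f g : XX n N → ℂ) :
    ‖Bf M (DD bl m f) (DD bl m g)‖ ≤ A * (3 * CG n + 1) * (qq (DD bl m f) + qq (DD bl m g)) := by
  have A0 := h.h0
  have e : Bf M (DD bl m f) (DD bl m g) =
     ∑ x, ∑ y : XX n N with bl m y = bl m x, M x y * DD bl m f y * DD bl m g x +
     ∑ x, ∑ y : XX n N with bl m y ≠ bl m x, MM M (m+1) x y * DD bl m f y * DD bl m g x := by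
    unfold Bf
    rw [RM M m g (fun _ y => DD bl m f y) (by intro y a b _; rfl), ← Finset.sum_add_distrib]
    apply Finset.sum_congr rfl
    intro x _
    rw [← Finset.sum_filter_add_sum_filter_not Finset.univ (fun y => bl m y = bl m x)]
    congr 1
    apply Finset.sum_congr rfl
    intro y hy
    have hb : bl m y = bl m x := by simpa using hy
    have : ¬ far (m+1) x y := by
      have := filt_bl m y x hb
      rintro ⟨i, hi⟩
      rw [this] at hi
      omega
    simp [MM, this]
  rw [e]
  refine (norm_add_le _ _).trans ?_
  have h1 := TC1 h m hm.le _ _ (DD_meas bl filt_bl m f) (DD_meas bl filt_bl m g)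
  have h2 := TC2 h m hm _ _ (DD_meas bl filt_bl m f) (DD_meas bl filt_bl m g)
  have p := mul_nonneg A0.le (add_nonneg (qq_nonneg (DD bl m f)) (qq_nonneg (DD bl m g)))
  nlinarith

lemma Bf_add_left (M : XX n N → XX n N → ℂ) (f f' g : XX n N → ℂ) :
    Bf M (fun x => f x + f' x) g = Bf M f g + Bf M f' g := by
  unfold Bf; simp_rw [← Finset.sum_add_distrib]
  exact Finset.sum_congr rfl (fun x _ => Finset.sum_congr rfl (fun y _ => by ring))

lemma Bf_tr (M : XX n N → XX n N → ℂ) (f g : XX n N → ℂ) :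
    Bf (fun x y => M y x) g f = Bf M f g := by
  unfold Bf; rw [Finset.sum_comm]
  exact Finset.sum_congr rfl (fun x _ => Finset.sum_congr rfl (fun y _ => by ring))

lemma Bf_add_right (M : XX n N → XX n N → ℂ) (f g g' : XX n N → ℂ) :
    Bf M f (fun x => g x + g' x) = Bf M f g + Bf M f g' := by
  rw [← Bf_tr, Bf_add_left, Bf_tr M f g, Bf_tr M f g']

lemma Bf_smul (M : XX n N → XX n N → ℂ) (a b : ℂ) (f g : XX n N → ℂ) :
    Bf M (fun x => a * f x) (fun x => b * g x) = a * b * Bf M f g := by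
  unfold Bf; simp_rw [Finset.mul_sum]
  exact Finset.sum_congr rfl (fun x _ => Finset.sum_congr rfl (fun y _ => by ring))

lemma tele (M : XX n N → XX n N → ℂ) (f g : XX n N → ℂ) (k : ℕ) :
    Bf M f g = Bf M (av (bl k) f) (av (bl k) g) + ∑ m ∈ Finset.range k,
      (Bf M (av (bl (m+1)) f) (DD bl m g) + Bf M (DD bl m f) (av (bl (m+1)) g) +
        Bf M (DD bl m f) (DD bl m g)) := by
  induction k with
  | zero =>
    have : ∀ f : XX n N → ℂ, av (bl 0) f = f := by
      intro f; funext x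
      exact av_of_meas _ _ (fun x y h => by rw [bl_inj h]) x
    simp [this]
  | succ k ih =>
    rw [Finset.sum_range_succ, ih]
    have e : ∀ f : XX n N → ℂ, av (bl k) f = fun x => av (bl (k+1)) f x + DD bl k f x := by
      intro f; funext x; simp [DD]
    have h1 : Bf M (av (bl k) f) (av (bl k) g) = Bf M (av (bl (k+1)) f) (av (bl (k+1)) g) +
      (Bf M (av (bl (k+1)) f) (DD bl k g) + Bf M (DD bl k f) (av (bl (k+1)) g) +
        Bf M (DD bl k f) (DD bl k g)) := by
      nth_rewrite 1 [e f, e g]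
      rw [Bf_add_left, Bf_add_right, Bf_add_right]
      ring
    rw [h1]; ring

lemma qq_av (k : ℕ) (f : XX n N → ℂ) : qq (av (bl k) f) ≤ qq f := by
  have := pyth (bl k) f (fun _ => 1) (fun _ _ _ => rfl)
  simp only [one_mul] at this
  have h2 : 0 ≤ ∑ x, ‖f x - av (bl k) f x‖^2 := Finset.sum_nonneg (fun _ _ => by positivity)
  unfold qq; linarith

lemma T1_quad {M : XX n N → XX n N → ℂ} {A : ℝ} (h : CZ M A) (f g : XX n N → ℂ) :
    ‖Bf M f g‖ ≤ A * (603 * CG n + 28) * (qq f + qq g) := by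
  have A0 := h.h0
  rw [tele M f g N]
  refine (norm_add_le _ _).trans ?_
  have hN : ‖Bf M (av (bl N) f) (av (bl N) g)‖ ≤ A * (qq f + qq g) := by
    have := TC1 h N le_rfl _ _ (av_meas (bl N) f) (av_meas (bl N) g)
    have e : ∑ x, ∑ y : XX n N with bl N y = bl N x, M x y * av (bl N) f y * av (bl N) g x
      = Bf M (av (bl N) f) (av (bl N) g) := by
      unfold Bf
      apply Finset.sum_congr rfl
      intro x _
      congr 1
      ext y; simp [bl_top y x]
    rw [e] at this
    have q1 := qq_av N f
    have q2 := qq_av N g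
    have q3 := qq_nonneg f
    have q4 := qq_nonneg g
    calc _ ≤ A / 2 * (qq f + qq g) := this.trans (by gcongr)
      _ ≤ _ := by nlinarith [mul_nonneg A0.le (add_nonneg q3 q4)]
  have hS : ‖∑ m ∈ Finset.range N,
      (Bf M (av (bl (m+1)) f) (DD bl m g) + Bf M (DD bl m f) (av (bl (m+1)) g) +
        Bf M (DD bl m f) (DD bl m g))‖ ≤ A * (300 * CG n + 13) * (qq f + qq g) +
        A * (300 * CG n + 13) * (qq g + qq f) + A * (3 * CG n + 1) * (qq f + qq g) := by
    refine (norm_sum_le _ _).trans ?_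
    refine (Finset.sum_le_sum (fun m _ => norm_add₃_le)).trans ?_
    rw [Finset.sum_add_distrib, Finset.sum_add_distrib]
    refine add_le_add (add_le_add (TA h f g) ?_) ?_
    · have := TA h.tr g f
      simp_rw [Bf_tr] at this
      exact this
    · refine (Finset.sum_le_sum (fun m hm => TC h m (by simpa using hm) f g)).trans ?_
      rw [← Finset.mul_sum, Finset.sum_add_distrib]
      have := CG_nonneg n
      gcongr
      · exact sum_DD_le bl filt_bl bl_inj N f
      · exact sum_DD_le bl filt_bl bl_inj N g
  refine (add_le_add hN hS).trans (le_of_eq ?_)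
  ring

/-- The discrete T(1) theorem. -/
theorem discrete_T1 {M : XX n N → XX n N → ℂ} {A : ℝ} (h : CZ M A) (f g : XX n N → ℂ) (t : ℝ) (ht : 0 < t) :
    ‖Bf M f g‖ ≤ A * (603 * CG n + 28) * (t * qq f + qq g / t) := by
  have hs : 0 < √t := Real.sqrt_pos.mpr ht
  have h2 : √t^2 = t := Real.sq_sqrt ht.le
  have := T1_quad h (fun x => ((√t : ℝ) : ℂ) * f x) (fun x => (((√t)⁻¹ : ℝ) : ℂ) * g x)
  rw [Bf_smul] at this
  have e : ((√t : ℝ) : ℂ) * (((√t)⁻¹ : ℝ) : ℂ) = 1 := by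
    rw [← Complex.ofReal_mul, mul_inv_cancel₀ hs.ne']; simp
  rw [e, one_mul] at this
  refine this.trans (le_of_eq ?_)
  congr 1
  unfold qq
  simp_rw [norm_mul, mul_pow, ← Finset.mul_sum, Complex.norm_real, Real.norm_eq_abs, sq_abs, inv_pow, h2]
  ring

end disc
end T1D

namespace T1D
section calcs
variable {n : ℕ}

abbrev EE (n : ℕ) := EuclideanSpace ℝ (Fin n)

/-- all partials bounded by `L` -/
def PB (f : EE n → ℂ) (L : ℝ) : Prop :=
  ∀ (i : Fin n) (u : EE n), ‖fderiv ℝ f u (EuclideanSpace.single i 1)‖ ≤ L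

abbrev C1 (f : EE n → ℂ) : Prop := ContDiff ℝ 1 f

lemma C1.diff {f : EE n → ℂ} (h : C1 f) : Differentiable ℝ f := h.differentiable (by norm_num)

lemma PB.mono {f : EE n → ℂ} {L L' : ℝ} (h : PB f L) (hL : L ≤ L') : PB f L' :=
  fun i u => (h i u).trans hL

lemma PB.mul {f g : EE n → ℂ} {a b L L' : ℝ} (hf : C1 f) (hg : C1 g) (h : PB f L) (h' : PB g L')
    (ha : ∀ u, ‖f u‖ ≤ a) (hb : ∀ u, ‖g u‖ ≤ b) : PB (fun u => f u * g u) (L * b + a * L') := by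
  intro i u
  have e : fderiv ℝ (fun u => f u * g u) u = _ := fderiv_fun_mul (hf.diff u) (hg.diff u)
  rw [e]
  simp only [ContinuousLinearMap.add_apply, ContinuousLinearMap.smul_apply, smul_eq_mul]
  refine (norm_add_le _ _).trans ?_
  rw [norm_mul, norm_mul]
  have h1 := h i u
  have h2 := h' i u
  have h3 := ha u
  have h4 := hb u
  have a0 : 0 ≤ a := (norm_nonneg _).trans h3
  have L0 : 0 ≤ L := (norm_nonneg _).trans h1
  have := mul_le_mul h3 h2 (norm_nonneg _) a0
  have := mul_le_mul h1 h4 (norm_nonneg _) L0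
  linarith

lemma PB.smul {f : EE n → ℂ} {L : ℝ} (hf : C1 f) (h : PB f L) (c : ℂ) :
    PB (fun u => c * f u) (‖c‖ * L) := by
  intro i u
  have e : fderiv ℝ (fun u => c * f u) u = _ := fderiv_const_mul (hf.diff u) c
  rw [e]
  simp only [ContinuousLinearMap.smul_apply, smul_eq_mul, norm_mul]
  have := h i u
  gcongr

lemma PB.sub_const {f : EE n → ℂ} {L : ℝ} (h : PB f L) (c : ℂ) : PB (fun u => f u - c) L := by
  intro i u
  have e : fderiv ℝ (fun u => f u - c) u = _ := fderiv_sub_const c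
  rw [e]; exact h i u

/-- rescaling -/
def resc (η : EE n → ℂ) (a : EE n) (r : ℝ) : EE n → ℂ := fun u => η (r⁻¹ • (u - a))

lemma resc_C1 {η : EE n → ℂ} (h : C1 η) (a : EE n) (r : ℝ) : C1 (resc η a r) := by
  unfold resc
  exact h.comp (by fun_prop)

lemma resc_PB {η : EE n → ℂ} {L : ℝ} (h : C1 η) (hL : PB η L) (a : EE n) (r : ℝ) (hr : 0 < r) :
    PB (resc η a r) (L / r) := by
  intro i u
  have h1 : HasFDerivAt (fun u : EE n => r⁻¹ • (u - a)) (r⁻¹ • ContinuousLinearMap.id ℝ (EE n)) u :=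
    ((hasFDerivAt_id u).sub_const a).const_smul r⁻¹
  have h2 : HasFDerivAt (resc η a r) _ u := (h.diff (r⁻¹ • (u - a))).hasFDerivAt.comp u h1
  rw [h2.fderiv]
  simp only [ContinuousLinearMap.comp_apply, ContinuousLinearMap.smul_apply,
    ContinuousLinearMap.id_apply, map_smul, norm_smul]
  rw [norm_inv, Real.norm_eq_abs, abs_of_pos hr, inv_mul_eq_div]
  have := hL i (r⁻¹ • (u - a))
  gcongr

lemma resc_zero {η : EE n → ℂ} {s : ℝ} (h : ∀ u, s ≤ ‖u‖ → η u = 0) (a : EE n) (r : ℝ) (hr : 0 < r)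
    (u : EE n) (hu : s * r ≤ ‖u - a‖) : resc η a r u = 0 := by
  apply h
  rw [norm_smul, norm_inv, Real.norm_eq_abs, abs_of_pos hr, inv_mul_eq_div, le_div_iff₀ hr]
  exact hu

lemma tsup_of {f : EE n → ℂ} {a : EE n} {s : ℝ} (h : ∀ u, s < ‖u - a‖ → f u = 0) :
    tsupport f ⊆ closedBall a s := by
  apply closure_minimal _ isClosed_closedBall
  intro u hu
  rw [mem_closedBall, dist_eq_norm]
  by_contra hc
  exact hu (h u (lt_of_not_ge hc))

lemma tsup_zero {f : EE n → ℂ} {a : EE n} {s : ℝ} (h : tsupport f ⊆ closedBall a s) (u : EE n)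
    (hu : s < ‖u - a‖) : f u = 0 := by
  by_contra hc
  have := h (subset_tsupport f hc)
  rw [mem_closedBall, dist_eq_norm] at this
  linarith

lemma cpt_of {f : EE n → ℂ} {a : EE n} {s : ℝ} (h : tsupport f ⊆ closedBall a s) :
    HasCompactSupport f :=
  IsCompact.of_isClosed_subset (isCompact_closedBall a s) (isClosed_tsupport f) h

lemma norm_le_sup (v : EE n) (b : ℝ) (hb : 0 ≤ b) (h : ∀ i, |v i| ≤ b) : ‖v‖ ≤ n * b := by
  have e : v = ∑ i, v i • EuclideanSpace.single i (1:ℝ) := by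
    ext j
    simp [Finset.sum_apply, Pi.single_apply]
  rw [e]
  refine (norm_sum_le _ _).trans ?_
  refine (Finset.sum_le_sum (g := fun _ => b) (fun i _ => ?_)).trans ?_
  · rw [norm_smul]; simpa using h i
  · simp

lemma abs_le_norm (v : EE n) (i : Fin n) : |v i| ≤ ‖v‖ := by
  have := PiLp.norm_apply_le v i
  simpa using this

lemma fderiv_le_of {F : Type*} [NormedAddCommGroup F] [NormedSpace ℝ F] (l : EE n →L[ℝ] F) (L : ℝ) (hL : 0 ≤ L)
    (h : ∀ i, ‖l (EuclideanSpace.single i 1)‖ ≤ L) : ‖l‖ ≤ n * L := by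
  apply ContinuousLinearMap.opNorm_le_bound _ (by positivity)
  intro v
  have e : v = ∑ i, v i • EuclideanSpace.single i (1:ℝ) := by
    ext j
    simp [Finset.sum_apply, Pi.single_apply]
  nth_rewrite 1 [e]
  rw [map_sum]
  refine (norm_sum_le _ _).trans ?_
  refine (Finset.sum_le_sum (g := fun _ => L * ‖v‖) (fun i _ => ?_)).trans ?_
  · rw [map_smul, norm_smul, mul_comm]
    have := abs_le_norm v i
    have := h i
    rw [Real.norm_eq_abs]
    gcongr
  · simp [mul_assoc]

lemma PB.lip {f : EE n → ℂ} {L : ℝ} (hL : 0 ≤ L) (hf : C1 f) (h : PB f L) (u v : EE n) :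
    ‖f u - f v‖ ≤ n * L * ‖u - v‖ :=
  Convex.norm_image_sub_le_of_norm_fderiv_le (fun x _ => hf.diff x)
    (fun x _ => fderiv_le_of _ L hL (fun i => h i x)) convex_univ (Set.mem_univ v) (Set.mem_univ u)

lemma exists_PB {f : EE n → ℂ} (hf : C1 f) (hc : HasCompactSupport f) :
    ∃ L : ℝ, 0 < L ∧ PB f L ∧ ∀ u, ‖f u‖ ≤ L := by
  obtain ⟨b, hb⟩ := hf.continuous.bounded_above_of_compact_support hc
  obtain ⟨c, hc'⟩ := (hf.continuous_fderiv (by norm_num)).bounded_above_of_compact_support (hc.fderiv (𝕜 := ℝ))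
  refine ⟨max (max b c) 1, by positivity, ?_, fun u => (hb u).trans (by simp)⟩
  intro i u
  refine ((fderiv ℝ f u).le_opNorm _).trans ?_
  simp only [EuclideanSpace.norm_single, norm_one, mul_one]
  exact (hc' u).trans (by simp)

/-- volume of unit ball -/
def VV (n : ℕ) : ℝ := (volume (ball (0 : EE n) 1)).toReal

lemma VV_nonneg (n : ℕ) : 0 ≤ VV n := ENNReal.toReal_nonneg

lemma vol_cb (a : EE n) (s : ℝ) (hs : 0 ≤ s) : (volume (closedBall a s)).toReal = s^n * VV n := by
  rw [Measure.addHaar_closedBall _ _ hs]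
  simp [VV, ENNReal.toReal_mul, hs]

lemma int_norm_le {f : EE n → ℂ} {a : EE n} {s b : ℝ} (hs : 0 ≤ s) (hb : ∀ u, ‖f u‖ ≤ b)
    (h : tsupport f ⊆ closedBall a s) : ∫ u, ‖f u‖ ≤ b * (s^n * VV n) := by
  have e : ∫ u, ‖f u‖ = ∫ u in closedBall a s, ‖f u‖ := by
    symm
    apply setIntegral_eq_integral_of_forall_compl_eq_zero
    intro u hu
    rw [mem_closedBall, dist_eq_norm] at hu
    rw [tsup_zero h u (lt_of_not_ge hu), norm_zero]
  rw [e]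
  have h2 := norm_setIntegral_le_of_norm_le_const (μ := volume) (s := closedBall a s)
    (f := fun u => ‖f u‖) (C := b) (measure_closedBall_lt_top) (fun u _ => by simpa using hb u)
  rw [Measure.real, vol_cb a s hs] at h2
  exact (le_abs_self _).trans h2

end calcs

/-! partition of unity -/

def rr (t : ℝ) : ℝ := Real.smoothTransition (t+1) - Real.smoothTransition t

lemma rr_zero_right (t : ℝ) (h : 1 ≤ t) : rr t = 0 := by
  unfold rr
  rw [Real.smoothTransition.one_of_one_le h, Real.smoothTransition.one_of_one_le (by linarith), sub_self]

lemma rr_zero_left (t : ℝ) (h : t ≤ -1) : rr t = 0 := by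
  unfold rr
  rw [Real.smoothTransition.zero_of_nonpos (by linarith), Real.smoothTransition.zero_of_nonpos (by linarith), sub_self]

lemma rr_nonneg (t : ℝ) : 0 ≤ rr t := by
  rcases le_total t 0 with h | h
  · unfold rr; rw [Real.smoothTransition.zero_of_nonpos h, sub_zero]
    exact Real.smoothTransition.nonneg _
  · unfold rr; rw [Real.smoothTransition.one_of_one_le (x := t+1) (by linarith)]
    linarith [Real.smoothTransition.le_one t]

lemma rr_le_one (t : ℝ) : rr t ≤ 1 := by
  unfold rr
  linarith [Real.smoothTransition.nonneg t, Real.smoothTransition.le_one (t+1)]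

lemma rr_sum (M : ℕ) (t : ℝ) (h0 : 0 ≤ t) (h1 : t ≤ M - 1) : ∑ a ∈ Finset.range M, rr (t - a) = 1 := by
  have := Finset.sum_range_sub' (fun a : ℕ => Real.smoothTransition (t + 1 - a)) M
  have e : ∀ a : ℕ, rr (t - a) = Real.smoothTransition (t + 1 - (a:ℕ)) -
      Real.smoothTransition (t + 1 - ((a+1 : ℕ) : ℝ)) := by
    intro a; unfold rr; push_cast; ring_nf
  simp_rw [e]
  rw [this, Real.smoothTransition.one_of_one_le (by simpa using h0),
    Real.smoothTransition.zero_of_nonpos (by linarith), sub_zero]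

variable {n N : ℕ}

def PhR (u : EE n) : ℝ := ∏ i, rr (u i)
def Ph (u : EE n) : ℂ := (PhR u : ℂ)

lemma PhR_nonneg (u : EE n) : 0 ≤ PhR u := Finset.prod_nonneg (fun i _ => rr_nonneg _)
lemma PhR_le (u : EE n) : PhR u ≤ 1 := Finset.prod_le_one (fun i _ => rr_nonneg _) (fun i _ => rr_le_one _)
lemma norm_Ph (u : EE n) : ‖Ph u‖ = PhR u := by
  unfold Ph; rw [Complex.norm_real, Real.norm_eq_abs, abs_of_nonneg (PhR_nonneg u)]

lemma PhR_C1 : ContDiff ℝ 1 (PhR (n := n)) := by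
  have : ∀ i : Fin n, ContDiff ℝ 1 (fun u : EE n => u i) := fun i => by fun_prop
  unfold PhR rr
  apply contDiff_prod
  intro i _
  have h := Real.smoothTransition.contDiff (n := 1)
  exact (h.comp ((this i).add contDiff_const)).sub (h.comp (this i))

lemma Ph_C1 : C1 (Ph (n := n)) := Complex.ofRealCLM.contDiff.comp PhR_C1

lemma PhR_zero (u : EE n) (i : Fin n) (h : 1 ≤ |u i|) : PhR u = 0 := by
  unfold PhR
  apply Finset.prod_eq_zero (Finset.mem_univ i)
  rcases le_abs'.mp h with h | h
  · exact rr_zero_left _ h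
  · exact rr_zero_right _ h

lemma PhR_zero' (u : EE n) (h : (n:ℝ) < ‖u‖) : PhR u = 0 := by
  by_contra hc
  have : ∀ i, |u i| ≤ 1 := by
    intro i
    by_contra hi
    exact hc (PhR_zero u i (le_of_not_ge hi))
  have := norm_le_sup u 1 (by norm_num) this
  linarith

lemma Ph_tsup : tsupport (Ph (n := n)) ⊆ closedBall 0 (n:ℝ) := by
  apply tsup_of
  intro u hu
  rw [sub_zero] at hu
  simp [Ph, PhR_zero' u hu]

def cP (n : ℕ) : ℝ := ∫ u : EE n, PhR u

lemma PhR_cs : HasCompactSupport (PhR (n := n)) := by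
  apply HasCompactSupport.intro (isCompact_closedBall (0 : EE n) n)
  intro u hu
  apply PhR_zero'
  simpa using hu

lemma cP_pos (n : ℕ) : 0 < cP n := by
  apply Continuous.integral_pos_of_hasCompactSupport_nonneg_nonzero (x := 0) PhR_C1.continuous PhR_cs PhR_nonneg
  simp [PhR, rr]

/-- grid points -/
def gp (R δ : ℝ) (y : XX n N) : EE n := WithLp.toLp 2 (fun i => -R + δ * ((y i : ℕ) : ℝ))

def ph (R δ : ℝ) (y : XX n N) : EE n → ℂ := resc Ph (gp R δ y) δ

lemma ph_eq (R δ : ℝ) (y : XX n N) (u : EE n) : ph R δ y u = ((∏ i, rr ((δ⁻¹ * (u i + R - δ * ((y i : ℕ) : ℝ)))) : ℝ) : ℂ) := by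
  simp only [ph, resc, Ph, PhR, gp]
  congr 1
  apply Finset.prod_congr rfl
  intro i _
  congr 1
  simp
  left; ring

lemma ph_sum (R δ : ℝ) (hδ : 0 < δ) (u : EE n) (h : ∀ i, 0 ≤ u i + R ∧ u i + R ≤ δ * (2^N - 1)) :
    ∑ y : XX n N, ph R δ y u = 1 := by
  simp_rw [ph_eq]
  rw [← Complex.ofReal_sum]
  have := Finset.prod_univ_sum (fun _ : Fin n => (Finset.univ : Finset (Fin (2^N))))
    (fun i a => rr ((δ⁻¹ * (u i + R - δ * ((a : ℕ) : ℝ)))))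
  rw [Fintype.piFinset_univ] at this
  unfold XX
  rw [← this, Finset.prod_eq_one, Complex.ofReal_one]
  intro i _
  rw [Fin.sum_univ_eq_sum_range (fun a : ℕ => rr ((δ⁻¹ * (u i + R - δ * (a : ℝ))))),
    ← rr_sum (2^N) (δ⁻¹ * (u i + R)) (mul_nonneg (by positivity) (h i).1)
    (by push_cast; rw [inv_mul_le_iff₀ hδ]; exact (h i).2)]
  apply Finset.sum_congr rfl
  intro a _
  congr 1
  rw [mul_sub, inv_mul_cancel_left₀ hδ.ne']

end T1D

namespace T1D
variable {n N : ℕ}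

structure Form (n : ℕ) (R A : ℝ) (B : (EE n → ℂ) → (EE n → ℂ) → ℂ) : Prop where
  A0 : 0 < A
  add_l : ∀ f f' g, C1 f → C1 f' → C1 g → B (fun u => f u + f' u) g = B f g + B f' g
  sm_l : ∀ (c : ℂ) f g, C1 f → C1 g → B (fun u => c * f u) g = c * B f g
  add_r : ∀ f g g', C1 f → C1 g → C1 g' → B f (fun u => g u + g' u) = B f g + B f g'
  sm_r : ∀ (c : ℂ) f g, C1 f → C1 g → B f (fun u => c * g u) = c * B f g
  loc_l : ∀ f f' g, C1 f → C1 f' → C1 g → (∀ u ∈ closedBall (0 : EE n) R, f u = f' u) → B f g = B f' g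
  loc_r : ∀ f g g', C1 f → C1 g → C1 g' → (∀ u ∈ closedBall (0 : EE n) R, g u = g' u) → B f g = B f g'
  bd_l : ∀ f g (r : ℝ), 0 < r → C1 f → C1 g → HasCompactSupport g → (∀ u, ‖f u‖ ≤ 1) → PB f (1 / r) →
    (1 ≤ r ∨ ∃ c, tsupport f ⊆ closedBall c r) → ‖B f g‖ ≤ A * ∫ u, ‖g u‖
  bd_r : ∀ f g (r : ℝ), 0 < r → C1 f → C1 g → HasCompactSupport f → (∀ u, ‖g u‖ ≤ 1) → PB g (1 / r) →
    (1 ≤ r ∨ ∃ c, tsupport g ⊆ closedBall c r) → ‖B f g‖ ≤ A * ∫ u, ‖f u‖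
  k1 : ∀ f g (D : ℝ), 0 < D → C1 f → C1 g → HasCompactSupport f → HasCompactSupport g →
    (∀ u ∈ tsupport g, ∀ w ∈ tsupport f, D ≤ ‖u - w‖) →
    ‖B f g‖ ≤ A / D^n * (∫ u, ‖f u‖) * ∫ u, ‖g u‖
  k2 : ∀ f g (D : ℝ) (u₀ : EE n) (s : ℝ), 0 < D → C1 f → C1 g → HasCompactSupport f → HasCompactSupport g →
    (∀ u ∈ tsupport g, ∀ w ∈ tsupport f, D ≤ ‖u - w‖) → 4 * s ≤ D → tsupport g ⊆ closedBall u₀ s →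
    ∫ u, g u = 0 →
    ‖B f g‖ ≤ A * s / D^(n+1) * (∫ u, ‖f u‖) * ∫ u, ‖g u‖
  k2' : ∀ f g (D : ℝ) (u₀ : EE n) (s : ℝ), 0 < D → C1 f → C1 g → HasCompactSupport f → HasCompactSupport g →
    (∀ u ∈ tsupport g, ∀ w ∈ tsupport f, D ≤ ‖u - w‖) → 4 * s ≤ D → tsupport f ⊆ closedBall u₀ s →
    ∫ u, f u = 0 →
    ‖B f g‖ ≤ A * s / D^(n+1) * (∫ u, ‖f u‖) * ∫ u, ‖g u‖

variable {R A : ℝ} {B : (EE n → ℂ) → (EE n → ℂ) → ℂ}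

lemma Form.tr (F : Form n R A B) : Form n R A (fun f g => B g f) where
  A0 := F.A0
  add_l f f' g h1 h2 h3 := F.add_r g f f' h3 h1 h2
  sm_l c f g h1 h2 := F.sm_r c g f h2 h1
  add_r f g g' h1 h2 h3 := F.add_l g g' f h2 h3 h1
  sm_r c f g h1 h2 := F.sm_l c g f h2 h1
  loc_l f f' g h1 h2 h3 h := F.loc_r g f f' h3 h1 h2 h
  loc_r f g g' h1 h2 h3 h := F.loc_l g g' f h2 h3 h1 h
  bd_l f g r h1 h2 h3 h4 h5 h6 h7 := F.bd_r g f r h1 h3 h2 h4 h5 h6 h7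
  bd_r f g r h1 h2 h3 h4 h5 h6 h7 := F.bd_l g f r h1 h3 h2 h4 h5 h6 h7
  k1 f g D h1 h2 h3 h4 h5 h6 := by
    have := F.k1 g f D h1 h3 h2 h5 h4 (fun u hu w hw => by rw [norm_sub_rev]; exact h6 w hw u hu)
    linarith
  k2 f g D u₀ s h1 h2 h3 h4 h5 h6 h7 h8 h9 := by
    have := F.k2' g f D u₀ s h1 h3 h2 h5 h4 (fun u hu w hw => by rw [norm_sub_rev]; exact h6 w hw u hu) h7 h8 h9
    linarith
  k2' f g D u₀ s h1 h2 h3 h4 h5 h6 h7 h8 h9 := by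
    have := F.k2 g f D u₀ s h1 h3 h2 h5 h4 (fun u hu w hw => by rw [norm_sub_rev]; exact h6 w hw u hu) h7 h8 h9
    linarith

lemma Form.zero_l (F : Form n R A B) (g : EE n → ℂ) (hg : C1 g) : B (fun _ => 0) g = 0 := by
  have := F.sm_l 0 (fun _ => 0) g contDiff_const hg
  simpa using this

lemma Form.sum_l (F : Form n R A B) {ι : Type*} (s : Finset ι) (f : ι → EE n → ℂ) (g : EE n → ℂ)
    (hf : ∀ i, C1 (f i)) (hg : C1 g) : B (fun u => ∑ i ∈ s, f i u) g = ∑ i ∈ s, B (f i) g := by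
  classical
  induction s using Finset.induction_on with
  | empty => simpa using F.zero_l g hg
  | insert a s ha ih =>
    simp_rw [Finset.sum_insert ha]
    rw [F.add_l _ _ g (hf a) (ContDiff.sum (fun i _ => hf i)) hg, ih]

lemma Form.sum_r (F : Form n R A B) {ι : Type*} (s : Finset ι) (f : EE n → ℂ) (g : ι → EE n → ℂ)
    (hf : C1 f) (hg : ∀ i, C1 (g i)) : B f (fun u => ∑ i ∈ s, g i u) = ∑ i ∈ s, B f (g i) :=
  F.tr.sum_l s g f hg hf

lemma Form.sub_l (F : Form n R A B) (f f' g : EE n → ℂ) (hf : C1 f) (hf' : C1 f') (hg : C1 g) :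
    B (fun u => f u - f' u) g = B f g - B f' g := by
  have h1 := F.add_l f (fun u => (-1) * f' u) g hf (contDiff_const.mul hf') hg
  rw [F.sm_l _ _ _ hf' hg] at h1
  have e : (fun u => f u - f' u) = fun u => f u + (-1) * f' u := by funext u; ring
  rw [e, h1]; ring

lemma Form.sub_r (F : Form n R A B) (f g g' : EE n → ℂ) (hf : C1 f) (hg : C1 g) (hg' : C1 g') :
    B f (fun u => g u - g' u) = B f g - B f g' := F.tr.sub_l g g' f hg hg' hf

lemma Form.bdl (F : Form n R A B) (f g : EE n → ℂ) (r a : ℝ) (hr : 0 < r) (hf : C1 f) (hg : C1 g)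
    (hgc : HasCompactSupport g) (ha : ∀ u, ‖f u‖ ≤ a) (hp : PB f (a / r))
    (hs : 1 ≤ r ∨ ∃ c, tsupport f ⊆ closedBall c r) : ‖B f g‖ ≤ A * a * ∫ u, ‖g u‖ := by
  have a0 : 0 ≤ a := (norm_nonneg _).trans (ha 0)
  rcases a0.eq_or_lt with h0 | h0
  · have : f = fun _ => 0 := by
      funext u
      have := ha u
      rw [← h0] at this
      exact norm_le_zero_iff.mp this
    rw [this, F.zero_l g hg, ← h0]; simp
  · have h1 := F.bd_l (fun u => ((a⁻¹ : ℝ) : ℂ) * f u) g r hr (contDiff_const.mul hf) hg hgc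
      (by
        intro u
        rw [norm_mul, Complex.norm_real, Real.norm_eq_abs, abs_of_pos (by positivity),
          inv_mul_le_iff₀ h0, mul_one]
        exact ha u)
      ((hp.smul hf _).mono (by
        rw [Complex.norm_real, Real.norm_eq_abs, abs_of_pos (by positivity)]
        exact le_of_eq (by field_simp)))
      (hs.imp_right (fun ⟨c, hc⟩ => ⟨c, (closure_mono (by
        intro u hu h
        exact hu (by simp [h]))).trans hc⟩))
    rw [F.sm_l _ _ _ hf hg, norm_mul, Complex.norm_real, Real.norm_eq_abs, abs_of_pos (by positivity),
      inv_mul_le_iff₀ h0] at h1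
    linarith

/-! grid geometry -/

lemma gp_lower (R : ℝ) {δ : ℝ} (hδ : 0 < δ) (x y : XX n N) : δ * dd x y ≤ ‖gp R δ x - gp R δ y‖ := by
  rw [← le_div_iff₀' hδ]
  apply dd_le _ _ _ (by positivity)
  intro i
  rw [le_div_iff₀' hδ]
  have := abs_le_norm (gp R δ x - gp R δ y) i
  refine le_trans (le_of_eq ?_) this
  have e : (gp R δ x - gp R δ y) i = δ * (((x i : ℕ) : ℝ) - ((y i : ℕ) : ℝ)) := by
    simp [gp]; ring
  rw [e, abs_mul, abs_of_pos hδ]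

lemma gp_upper (R : ℝ) {δ : ℝ} (hδ : 0 < δ) (x y : XX n N) : ‖gp R δ x - gp R δ y‖ ≤ n * (δ * dd x y) := by
  have := dd_nonneg x y
  apply norm_le_sup _ _ (by positivity)
  intro i
  have e : (gp R δ x - gp R δ y) i = δ * (((x i : ℕ) : ℝ) - ((y i : ℕ) : ℝ)) := by
    simp [gp]; ring
  rw [e, abs_mul, abs_of_pos hδ]
  have := le_dd x y i
  gcongr

/-- cell functions -/
structure Cell (R δ : ℝ) (y : XX n N) (a : ℝ) (ψ : EE n → ℂ) : Prop where
  c1 : C1 ψ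
  ts : tsupport ψ ⊆ closedBall (gp R δ y) (n * δ)
  bd : ∀ u, ‖ψ u‖ ≤ a
  pb : PB ψ (a / δ)

lemma Cell.cs {δ : ℝ} {y : XX n N} {a : ℝ} {ψ : EE n → ℂ} (h : Cell R δ y a ψ) : HasCompactSupport ψ :=
  cpt_of h.ts

lemma Cell.a0 {δ : ℝ} {y : XX n N} {a : ℝ} {ψ : EE n → ℂ} (h : Cell R δ y a ψ) : 0 ≤ a :=
  (norm_nonneg _).trans (h.bd 0)

lemma Cell.int {δ : ℝ} (hδ : 0 < δ) {y : XX n N} {a : ℝ} {ψ : EE n → ℂ} (h : Cell R δ y a ψ) :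
    ∫ u, ‖ψ u‖ ≤ a * ((n * δ)^n * VV n) := int_norm_le (by positivity) h.bd h.ts

lemma Cell.smul {δ : ℝ} {y : XX n N} {a b : ℝ} {ψ : EE n → ℂ} (h : Cell R δ y a ψ) (c : ℂ) (hc : ‖c‖ ≤ b)
    (hδ : 0 < δ) :
    Cell R δ y (b * a) (fun u => c * ψ u) where
  c1 := contDiff_const.mul h.c1
  ts := (closure_mono (by intro u hu h; exact hu (by simp [h]))).trans h.ts
  bd u := by
    rw [norm_mul]
    exact mul_le_mul hc (h.bd u) (norm_nonneg _) ((norm_nonneg _).trans hc)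
  pb := (h.pb.smul h.c1 c).mono (by
    rw [mul_div_assoc]
    have := h.a0
    gcongr)

lemma Cell.mul {δ : ℝ} {y : XX n N} {a b : ℝ} {ψ η : EE n → ℂ} (h : Cell R δ y a ψ) (hη : C1 η)
    (hb : ∀ u, ‖η u‖ ≤ b) (hp : PB η (b/δ)) :
    Cell R δ y (2 * b * a) (fun u => η u * ψ u) where
  c1 := hη.mul h.c1
  ts := (closure_mono (by intro u hu h; exact hu (by simp [h]))).trans h.ts
  bd u := by
    rw [norm_mul]
    have b0 := (norm_nonneg _).trans (hb u)
    have := mul_le_mul (hb u) (h.bd u) (norm_nonneg _) b0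
    have := mul_nonneg b0 h.a0
    linarith
  pb := (PB.mul hη h.c1 hp h.pb hb h.bd).mono (le_of_eq (by ring))

def CH (n : ℕ) : ℝ := n * (n:ℝ)^n * VV n * (4*n)^n + 2^n * (n:ℝ)^n * (n:ℝ)^n * VV n * VV n

lemma CH_nonneg (n : ℕ) : 0 ≤ CH n := by
  have := VV_nonneg n
  unfold CH; positivity

lemma GH1 (F : Form n R A B) (hn : 1 ≤ n) {δ : ℝ} (hδ : 0 < δ) {x y : XX n N} {ψ θ : EE n → ℂ} {a b : ℝ}
    (hψ : Cell R δ y a ψ) (hθ : Cell R δ x b θ) :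
    ‖B ψ θ‖ ≤ A * CH n * a * b * δ^n / (max 1 (dd x y))^n := by
  have A0 := F.A0
  have a0 := hψ.a0
  have b0 := hθ.a0
  have V0 := VV_nonneg n
  have i1 := hψ.int hδ
  have i2 := hθ.int hδ
  have n1 : (1:ℝ) ≤ n := by exact_mod_cast hn
  have d0 := dd_nonneg x y
  have m1 : 1 ≤ max 1 (dd x y) := le_max_left _ _
  rcases lt_or_ge (dd x y) (4*n) with hd | hd
  · have h1 := F.bdl ψ θ (n*δ) (n*a) (by positivity) hψ.c1 hθ.c1 hθ.cs
      (fun u => (hψ.bd u).trans (by nlinarith)) (hψ.pb.mono (le_of_eq (by field_simp)))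
      (Or.inr ⟨_, hψ.ts⟩)
    rw [le_div_iff₀ (by positivity)]
    have m2 : (max 1 (dd x y))^n ≤ (4*n)^n := by
      apply pow_le_pow_left₀ (by linarith)
      exact max_le (by linarith) hd.le
    calc ‖B ψ θ‖ * (max 1 (dd x y))^n ≤ (A * (n*a) * (b * ((n * δ)^n * VV n))) * (4*n)^n := by
          gcongr
          exact h1.trans (by gcongr)
      _ = A * (n * (n:ℝ)^n * VV n * (4*n)^n) * a * b * δ^n := by rw [mul_pow]; ring
      _ ≤ A * CH n * a * b * δ^n := by
          gcongr
          unfold CH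
          have : 0 ≤ 2^n * (n:ℝ)^n * (n:ℝ)^n * VV n * VV n := by positivity
          linarith
  · have d1 : 0 < dd x y := by linarith
    have e : max 1 (dd x y) = dd x y := max_eq_right (by linarith)
    rw [e]
    have h1 := F.k1 ψ θ (δ * dd x y / 2) (by positivity) hψ.c1 hθ.c1 hψ.cs hθ.cs (by
      intro u hu w hw
      have hu' := hθ.ts hu
      have hw' := hψ.ts hw
      rw [mem_closedBall, dist_eq_norm] at hu' hw'
      have hg := gp_lower R hδ x y
      have t : ‖gp R δ x - gp R δ y‖ ≤ ‖u - w‖ + ‖u - gp R δ x‖ + ‖w - gp R δ y‖ := by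
        have : gp R δ x - gp R δ y = (u - w) - (u - gp R δ x) + (w - gp R δ y) := by abel
        rw [this]
        exact (norm_add_le _ _).trans (add_le_add_left (norm_sub_le _ _) _)
      nlinarith)
    calc _ ≤ A / (δ * dd x y / 2)^n * (a * ((n * δ)^n * VV n)) * (b * ((n * δ)^n * VV n)) := by
          refine h1.trans ?_
          gcongr
      _ = A * (2^n * (n:ℝ)^n * (n:ℝ)^n * VV n * VV n) * a * b * δ^n / (dd x y)^n := by
          rw [div_pow, mul_pow, mul_pow]; field_simp
      _ ≤ _ := by
          gcongr
          unfold CH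
          have : 0 ≤ n * (n:ℝ)^n * VV n * (4*n)^n := by positivity
          linarith

def LP (n : ℕ) : ℝ := 1 + (exists_PB (Ph_C1 (n := n)) (cpt_of Ph_tsup)).choose

lemma LP_spec (n : ℕ) : 1 ≤ LP n ∧ PB (Ph (n := n)) (LP n) := by
  have := (exists_PB (Ph_C1 (n := n)) (cpt_of Ph_tsup)).choose_spec
  exact ⟨by unfold LP; linarith [this.1], this.2.1.mono (by unfold LP; linarith)⟩

lemma ph_norm (R δ : ℝ) (y : XX n N) (u : EE n) : ‖ph R δ y u‖ ≤ 1 := by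
  unfold ph resc; rw [norm_Ph]; exact PhR_le _

lemma ph_zero (R : ℝ) {δ : ℝ} (hδ : 0 < δ) (y : XX n N) (u : EE n) (hu : n * δ < ‖u - gp R δ y‖) :
    ph R δ y u = 0 := by
  unfold ph resc Ph
  rw [PhR_zero', Complex.ofReal_zero]
  rw [norm_smul, norm_inv, Real.norm_eq_abs, abs_of_pos hδ, inv_mul_eq_div, lt_div_iff₀ hδ]
  exact hu

lemma ph_cell (R : ℝ) {δ : ℝ} (hδ : 0 < δ) (y : XX n N) : Cell R δ y (LP n) (ph R δ y) where
  c1 := resc_C1 Ph_C1 _ _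
  ts := tsup_of (ph_zero R hδ y)
  bd u := (ph_norm R δ y u).trans (LP_spec n).1
  pb := resc_PB Ph_C1 (LP_spec n).2 _ _ hδ

lemma ph_int_norm (R : ℝ) {δ : ℝ} (hδ : 0 < δ) (y : XX n N) : ∫ u, ‖ph R δ y u‖ ≤ (n * δ)^n * VV n := by
  have := int_norm_le (by positivity) (ph_norm R δ y) (ph_cell R hδ y).ts
  linarith

lemma resc_int {F : Type*} [NormedAddCommGroup F] [NormedSpace ℝ F] (η : EE n → F) (a : EE n) {r : ℝ} (hr : 0 < r) :
    ∫ u, η (r⁻¹ • (u - a)) = r^n • ∫ u, η u := by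
  rw [integral_sub_right_eq_self (fun u => η (r⁻¹ • u)) a,
    Measure.integral_comp_inv_smul_of_nonneg volume η hr.le]
  simp

lemma ph_int (R : ℝ) {δ : ℝ} (hδ : 0 < δ) (y : XX n N) : ∫ u, ph R δ y u = δ^n • ∫ u : EE n, Ph u :=
  resc_int Ph _ hδ

def MB (B : (EE n → ℂ) → (EE n → ℂ) → ℂ) (R δ : ℝ) (x y : XX n N) : ℂ :=
  (((δ^n)⁻¹ : ℝ) : ℂ) * B (ph R δ y) (ph R δ x)

lemma MB_norm {δ : ℝ} (hδ : 0 < δ) (x y : XX n N) {z : ℂ} {b : ℝ} (h : ‖z‖ ≤ b * δ^n) :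
    ‖(((δ^n)⁻¹ : ℝ) : ℂ) * z‖ ≤ b := by
  rw [norm_mul, Complex.norm_real, Real.norm_eq_abs, abs_of_pos (by positivity), inv_mul_le_iff₀ (by positivity)]
  linarith

def CH1 (n : ℕ) : ℝ := CH n * LP n * LP n

lemma CH1_nonneg (n : ℕ) : 0 ≤ CH1 n := by
  have := CH_nonneg n
  have := (LP_spec n).1
  unfold CH1; positivity

lemma MB_h1 (F : Form n R A B) (hn : 1 ≤ n) {δ : ℝ} (hδ : 0 < δ) (x y : XX n N) (hxy : x ≠ y) :
    ‖MB B R δ x y‖ ≤ A * CH1 n / dd x y ^ n := by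
  apply MB_norm hδ x y
  refine (GH1 F hn hδ (ph_cell R hδ y) (ph_cell R hδ x)).trans (le_of_eq ?_)
  rw [max_eq_right (one_le_dd x y hxy)]
  unfold CH1; ring

def CH2 (n : ℕ) : ℝ := 2 * n * 2^(n+1) * 2 * ((n:ℝ)^n)^2 * VV n^2 + CH1 n * (1+2^n) * (22 * n)

lemma MB_h2 (F : Form n R A B) (hn : 1 ≤ n) {δ : ℝ} (hδ : 0 < δ) (x x' y : XX n N) (hd : 8 * dd x x' ≤ dd x y) :
    ‖MB B R δ x y - MB B R δ x' y‖ ≤ A * CH2 n * dd x x' / dd x y ^ (n+1) := by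
  have A0 := F.A0
  have V0 := VV_nonneg n
  have c0 := CH1_nonneg n
  have n1 : (1:ℝ) ≤ n := by exact_mod_cast hn
  by_cases hx : x = x'
  · subst hx
    rw [sub_self, norm_zero]
    have := dd_nonneg x y
    have := dd_nonneg x x
    unfold CH2
    positivity
  have hd' := one_le_dd x x' hx
  have d0 : 0 < dd x y := by linarith
  rcases lt_or_ge (dd x y) (22 * n * dd x x') with h | h
  · have hxy : x ≠ y := by
      intro e; subst e
      have : dd x x = 0 := by unfold dd; exact dist_self _
      linarith
    have hx'y : dd x y ≤ 2 * dd x' y := by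
      have := dd_tri x x' y
      linarith
    have hxyp : x' ≠ y := by
      intro e; subst e
      have : dd x' x' = 0 := by unfold dd; exact dist_self _
      linarith
    have h1 := MB_h1 F hn hδ x y hxy
    have h2 := MB_h1 F hn hδ x' y hxyp
    have h3 : A * CH1 n / dd x' y ^ n ≤ A * CH1 n * 2^n / dd x y ^ n := by
      have p : 0 < dd x' y := by linarith
      rw [div_le_div_iff₀ (by positivity) (by positivity)]
      calc A * CH1 n * dd x y ^ n ≤ A * CH1 n * (2 * dd x' y)^n := by gcongr
        _ = _ := by rw [mul_pow]; ring
    refine (norm_sub_le _ _).trans ?_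
    calc _ ≤ A * CH1 n / dd x y ^ n + A * CH1 n * 2^n / dd x y ^ n := add_le_add h1 (h2.trans h3)
      _ = A * CH1 n * (1 + 2^n) * dd x y / dd x y ^ (n+1) := by rw [pow_succ]; field_simp
      _ ≤ A * CH1 n * (1 + 2^n) * (22 * n * dd x x') / dd x y ^ (n+1) := by gcongr
      _ = A * (CH1 n * (1 + 2^n) * (22 * n)) * dd x x' / dd x y ^ (n+1) := by ring
      _ ≤ _ := by
        gcongr
        unfold CH2
        have : 0 ≤ 2 * n * 2^(n+1) * 2 * ((n:ℝ)^n)^2 * VV n^2 := by positivity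
        linarith
  · have cx := ph_cell R hδ x
    have cx' := ph_cell R hδ x'
    have cy := ph_cell R hδ y
    have hgx := gp_upper R hδ x x'
    have hgy := gp_lower R hδ x y
    have hsub : tsupport (fun u => ph R δ x u - ph R δ x' u) ⊆ closedBall (gp R δ x) (2 * n * δ * dd x x') := by
      apply tsup_of
      intro u hu
      have p : n * δ ≤ n * δ * dd x x' := le_mul_of_one_le_right (by positivity) hd'
      rw [ph_zero R hδ x u (by nlinarith), ph_zero R hδ x' u, sub_self]
      have : u - gp R δ x = (u - gp R δ x') - (gp R δ x - gp R δ x') := by abel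
      have h3 := norm_sub_le (u - gp R δ x') (gp R δ x - gp R δ x')
      rw [← this] at h3
      nlinarith
    have hC : C1 (fun u => ph R δ x u - ph R δ x' u) := cx.c1.sub cx'.c1
    have h1 := F.k2 (ph R δ y) (fun u => ph R δ x u - ph R δ x' u) (δ * dd x y / 2) (gp R δ x)
      (2 * n * δ * dd x x') (by positivity) cy.c1 hC cy.cs (cpt_of hsub)
      (by
        intro u hu w hw
        have hu' := hsub hu
        have hw' := cy.ts hw
        rw [mem_closedBall, dist_eq_norm] at hu' hw'
        have t : ‖gp R δ x - gp R δ y‖ ≤ ‖u - w‖ + ‖u - gp R δ x‖ + ‖w - gp R δ y‖ := by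
          have : gp R δ x - gp R δ y = (u - w) - (u - gp R δ x) + (w - gp R δ y) := by abel
          rw [this]
          exact (norm_add_le _ _).trans (add_le_add_left (norm_sub_le _ _) _)
        have q1 : δ * (22 * n * dd x x') ≤ δ * dd x y := by gcongr
        have q2 : n * δ ≤ n * δ * dd x x' := le_mul_of_one_le_right (by positivity) hd'
        nlinarith)
      (by
        have q1 : δ * (22 * n * dd x x') ≤ δ * dd x y := by gcongr
        have : 0 ≤ n * δ * dd x x' := by positivity
        nlinarith)
      hsub
      (by
        rw [integral_sub (cx.c1.continuous.integrable_of_hasCompactSupport cx.cs)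
          (cx'.c1.continuous.integrable_of_hasCompactSupport cx'.cs), ph_int R hδ, ph_int R hδ, sub_self])
    rw [F.sub_r _ _ _ cy.c1 cx.c1 cx'.c1] at h1
    have e : MB B R δ x y - MB B R δ x' y = (((δ^n)⁻¹ : ℝ) : ℂ) *
      (B (ph R δ y) (ph R δ x) - B (ph R δ y) (ph R δ x')) := by unfold MB; ring
    rw [e]
    apply MB_norm hδ x y
    have i1 := ph_int_norm R hδ y
    have i2 : ∫ u, ‖ph R δ x u - ph R δ x' u‖ ≤ 2 * ((n * δ)^n * VV n) := by
      have ix := (cx.c1.continuous.integrable_of_hasCompactSupport (μ := volume) cx.cs).norm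
      have ix' := (cx'.c1.continuous.integrable_of_hasCompactSupport (μ := volume) cx'.cs).norm
      calc _ ≤ ∫ u, (‖ph R δ x u‖ + ‖ph R δ x' u‖) := by
            apply integral_mono
              (hC.continuous.integrable_of_hasCompactSupport (μ := volume) (cpt_of hsub)).norm (ix.add ix')
            intro u
            exact norm_sub_le _ _
        _ = _ := integral_add ix ix'
        _ ≤ _ := by linarith [ph_int_norm R hδ x, ph_int_norm R hδ x']
    calc _ ≤ A * (2 * n * δ * dd x x') / (δ * dd x y / 2)^(n+1) * ((n * δ)^n * VV n) * (2 * ((n * δ)^n * VV n)) := by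
          refine h1.trans ?_
          gcongr
      _ = A * (2 * n * 2^(n+1) * 2 * ((n:ℝ)^n)^2 * VV n^2) * dd x x' / dd x y ^ (n+1) * δ^n := by
          rw [div_pow, mul_pow, mul_pow, pow_succ δ n]; field_simp
      _ ≤ _ := by
        gcongr
        unfold CH2
        have : 0 ≤ CH1 n * (1 + 2^n) * (22 * n) := by positivity
        linarith

/-- partition of unity on the region -/
lemma ph_one {R δ : ℝ} (hδ : 0 < δ) (hδN : 2 * R ≤ δ * (2^N - 1)) (u : EE n)
    (hu : u ∈ closedBall (0 : EE n) R) : ∑ y : XX n N, ph R δ y u = 1 := by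
  apply ph_sum R δ hδ u
  intro i
  have := abs_le_norm u i
  rw [mem_closedBall, dist_zero_right] at hu
  have := abs_le.mp (this.trans hu)
  constructor <;> linarith

def CH3 (n : ℕ) : ℝ := (n:ℝ)^n * VV n

lemma MB_h3 (F : Form n R A B) {δ : ℝ} (hδ : 0 < δ) (hδN : 2 * R ≤ δ * (2^N - 1)) (x : XX n N) :
    ‖∑ y, MB B R δ x y‖ ≤ A * CH3 n := by
  have A0 := F.A0
  have cx := ph_cell R hδ x
  unfold MB
  rw [← Finset.mul_sum]
  apply MB_norm hδ x x
  rw [← F.sum_l Finset.univ (fun y => ph R δ y) _ (fun y => (ph_cell R hδ y).c1) cx.c1,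
    F.loc_l _ (fun _ => 1) _ (ContDiff.sum (fun y _ => (ph_cell R hδ y).c1)) contDiff_const cx.c1
    (fun u hu => ph_one hδ hδN u hu)]
  have h1 := F.bd_l (fun _ => 1) (ph R δ x) 1 one_pos contDiff_const cx.c1 cx.cs (by simp)
    (by intro i u; simp) (Or.inl le_rfl)
  refine h1.trans ?_
  have := ph_int_norm R hδ x
  calc _ ≤ A * ((n * δ)^n * VV n) := by gcongr
    _ = _ := by rw [mul_pow]; unfold CH3; ring

end T1D

namespace T1D
variable {n N : ℕ} {R A : ℝ} {B : (EE n → ℂ) → (EE n → ℂ) → ℂ}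

lemma exists_eta (n : ℕ) : ∃ (η : EE n → ℂ) (L : ℝ), 0 < L ∧ C1 η ∧ PB η L ∧ (∀ u, ‖η u‖ ≤ 1) ∧
    (∀ u, ‖u‖ ≤ 1 → η u = 1) ∧ ∀ u, 2 ≤ ‖u‖ → η u = 0 := by
  let β : ContDiffBump (0 : EE n) := ⟨1, 2, one_pos, one_lt_two⟩
  have c : C1 (fun u => (β u : ℂ)) := Complex.ofRealCLM.contDiff.comp β.contDiff
  have z : ∀ u, 2 ≤ ‖u‖ → (β u : ℂ) = 0 := by
    intro u hu
    rw [β.zero_of_le_dist (by simpa using hu), Complex.ofReal_zero]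
  have cs : HasCompactSupport (fun u => (β u : ℂ)) := by
    apply cpt_of (a := 0) (s := 2)
    apply tsup_of
    intro u hu
    rw [sub_zero] at hu
    exact z u hu.le
  obtain ⟨L, hL, h1, _⟩ := exists_PB c cs
  refine ⟨_, L, hL, c, h1, ?_, ?_, z⟩
  · intro u
    rw [Complex.norm_real, Real.norm_eq_abs, abs_of_nonneg β.nonneg]
    exact β.le_one
  · intro u hu
    rw [β.one_of_mem_closedBall (by simpa using hu), Complex.ofReal_one]

lemma dd_block (k : ℕ) (x z : XX n N) (h : bl k x = bl k z) : dd x z ≤ 2^k := by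
  apply dd_le _ _ _ (by positivity)
  intro i
  have h1 := bl_bounds k x i
  have h2 := bl_bounds k z i
  rw [h] at h1
  rw [abs_le]
  constructor <;> linarith [h1.1, h1.2, h2.1, h2.2]

lemma MB_h4 (n : ℕ) (hn : 1 ≤ n) : ∃ C : ℝ, 0 ≤ C ∧ ∀ (N : ℕ) (R A : ℝ) (B : (EE n → ℂ) → (EE n → ℂ) → ℂ) (_ : Form n R A B)
    (δ : ℝ) (_ : 0 < δ) (_ : 2 * R ≤ δ * (2^N - 1)) (k : ℕ) (_ : k ≤ N) (z : XX n N),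
    ‖∑ x : XX n N with bl k x = bl k z, ∑ y : XX n N with bl k y = bl k z, MB B R δ x y‖ ≤
      A * C * ((2:ℝ)^k)^n := by
  obtain ⟨η, L, hL, ηC, ηP, η1, ηI, ηO⟩ := exists_eta n
  have V0 := VV_nonneg n
  have H0 := CH_nonneg n
  have l1 := (LP_spec n).1
  have g0 := CG_nonneg n
  have c30 : 0 ≤ CH3 n := by unfold CH3; positivity
  have n1 : (1:ℝ) ≤ n := by exact_mod_cast hn
  refine ⟨(1 + 2*L) * CH3 n + CH n * (2 * (1+L) * LP n) * LP n * (3*n) * CG n, by positivity, ?_⟩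
  intro N R A B F δ hδ hδN k hk z
  have A0 := F.A0
  set ω := resc η (gp R δ z) (2*n*2^k*δ) with hω
  have rk : 0 < 2*n*2^k*δ := by positivity
  have k1 : (1:ℝ) ≤ 2^k := one_le_pow₀ (by norm_num)
  have rδ : δ ≤ 2*n*2^k*δ := by
    have : (1:ℝ) ≤ n * 2^k := by nlinarith
    nlinarith
  have ωC : C1 ω := resc_C1 ηC _ _
  have ωP : PB ω (L / (2*n*2^k*δ)) := resc_PB ηC ηP _ _ rk
  have ω1 : ∀ u, ‖ω u‖ ≤ 1 := fun u => η1 _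
  have hcell : ∀ y : XX n N, Cell R δ y (2 * (1+L) * LP n) (fun u => ω u * ph R δ y u) := by
    intro y
    apply (ph_cell R hδ y).mul ωC (fun u => (ω1 u).trans (by linarith)) (ωP.mono _)
    gcongr
    linarith
  have hQ : ∀ y : XX n N, bl k y = bl k z → (fun u => ω u * ph R δ y u) = ph R δ y := by
    intro y hy
    funext u
    rcases lt_or_ge (n * δ) ‖u - gp R δ y‖ with h | h
    · rw [ph_zero R hδ y u h, mul_zero]
    · have : ω u = 1 := by
        apply ηI
        rw [norm_smul, norm_inv, Real.norm_eq_abs, abs_of_pos rk, inv_mul_le_iff₀ rk, mul_one]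
        have h1 := gp_upper R hδ y z
        have h2 := dd_block k y z hy
        have h3 : ‖u - gp R δ z‖ ≤ ‖u - gp R δ y‖ + ‖gp R δ y - gp R δ z‖ := by
          have : u - gp R δ z = (u - gp R δ y) + (gp R δ y - gp R δ z) := by abel
          rw [this]; exact norm_add_le _ _
        have h4 : n * (δ * dd y z) ≤ n * (δ * 2^k) := by gcongr
        have h5 : n * δ ≤ n * δ * 2^k := le_mul_of_one_le_right (by positivity) k1
        nlinarith
      rw [this, one_mul]
  have hsplit : ∀ x : XX n N, ∑ y : XX n N with bl k y = bl k z, B (ph R δ y) (ph R δ x) =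
      B ω (ph R δ x) - ∑ y : XX n N with ¬ bl k y = bl k z, B (fun u => ω u * ph R δ y u) (ph R δ x) := by
    intro x
    have cx := ph_cell R hδ x
    have h1 : B ω (ph R δ x) = ∑ y : XX n N, B (fun u => ω u * ph R δ y u) (ph R δ x) := by
      rw [← F.sum_l Finset.univ _ _ (fun y => (hcell y).c1) cx.c1]
      apply F.loc_l _ _ _ ωC (ContDiff.sum (fun y _ => (hcell y).c1)) cx.c1
      intro u hu
      rw [← Finset.mul_sum, ph_one hδ hδN u hu, mul_one]
    rw [h1, ← Finset.sum_filter_add_sum_filter_not Finset.univ (fun y => bl k y = bl k z), add_sub_cancel_right]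
    apply Finset.sum_congr rfl
    intro y hy
    rw [hQ y (by simpa using hy)]
  have b1 : ∀ x : XX n N, ‖B ω (ph R δ x)‖ ≤ A * (1 + 2*L) * CH3 n * δ^n := by
    intro x
    have cx := ph_cell R hδ x
    have h1 := F.bdl ω (ph R δ x) (2 * (2*n*2^k*δ)) (1 + 2*L) (by positivity) ωC cx.c1 cx.cs
      (fun u => (ω1 u).trans (by linarith)) (ωP.mono (by
        rw [div_le_div_iff₀ rk (by positivity)]
        nlinarith)) (Or.inr ⟨gp R δ z, tsup_of (fun u hu => resc_zero ηO _ _ rk u hu.le)⟩)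
    have := ph_int_norm R hδ x
    calc _ ≤ A * (1 + 2*L) * ((n * δ)^n * VV n) := h1.trans (by gcongr)
      _ = _ := by rw [mul_pow]; unfold CH3; ring
  have b2 : ∀ x y : XX n N, bl k x = bl k z → bl k y ≠ bl k z →
      ‖B (fun u => ω u * ph R δ y u) (ph R δ x)‖ ≤
        A * (CH n * (2 * (1+L) * LP n) * LP n * (3*n)) * δ^n * √((2:ℝ)^k) * sg x y := by
    intro x y hx hy
    have s0 := sg_nonneg x y
    have hxy : x ≠ y := fun e => hy (by rw [← e, hx])
    by_cases hz : ∀ u, ω u * ph R δ y u = 0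
    · have : (fun u => ω u * ph R δ y u) = fun _ => 0 := funext hz
      rw [this, F.zero_l _ (ph_cell R hδ x).c1, norm_zero]
      positivity
    · push Not at hz
      obtain ⟨u, hu⟩ := hz
      have hu1 : ‖u - gp R δ y‖ ≤ n * δ := by
        by_contra hc
        exact hu (by rw [ph_zero R hδ y u (lt_of_not_ge hc), mul_zero])
      have hu2 : ‖u - gp R δ z‖ ≤ 2 * (2*n*2^k*δ) := by
        by_contra hc
        exact hu (by rw [hω, resc_zero ηO _ _ rk u (lt_of_not_ge hc).le, zero_mul])
      have hyz : δ * dd y z ≤ δ * (5 * n * 2^k) := by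
        refine (gp_lower R hδ y z).trans ?_
        have : gp R δ y - gp R δ z = (u - gp R δ z) - (u - gp R δ y) := by abel
        rw [this]
        refine (norm_sub_le _ _).trans ?_
        have h5 : n * δ ≤ n * δ * 2^k := le_mul_of_one_le_right (by positivity) k1
        nlinarith
      have hyz' := le_of_mul_le_mul_left hyz hδ
      have hxz := dd_block k x z hx
      have hdd : dd x y ≤ (3*n)^2 * 2^k := by
        have := dd_tri x z y
        rw [dd_comm z y] at this
        have h6 : (2:ℝ)^k ≤ n * 2^k := le_mul_of_one_le_left (by positivity) n1
        have h7 : (n:ℝ) * 2^k ≤ n * (n * 2^k) := le_mul_of_one_le_left (by positivity) n1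
        nlinarith
      have hsq : √(dd x y) ≤ 3*n*√((2:ℝ)^k) := by
        rw [Real.sqrt_le_iff]
        refine ⟨by positivity, ?_⟩
        rw [mul_pow, Real.sq_sqrt (by positivity)]
        exact hdd
      have h1 := GH1 F hn hδ (hcell y) (ph_cell R hδ x)
      rw [max_eq_right (one_le_dd x y hxy)] at h1
      have d0 : 0 < dd x y := by linarith [one_le_dd x y hxy]
      have sd : 0 < √(dd x y) := Real.sqrt_pos.mpr d0
      calc _ ≤ _ := h1
        _ = A * (CH n * (2 * (1+L) * LP n) * LP n) * δ^n * √(dd x y) * sg x y := by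
            unfold sg; field_simp
        _ ≤ A * (CH n * (2 * (1+L) * LP n) * LP n) * δ^n * (3*n*√((2:ℝ)^k)) * sg x y := by gcongr
        _ = _ := by ring
  have e : ∑ x : XX n N with bl k x = bl k z, ∑ y : XX n N with bl k y = bl k z, MB B R δ x y =
      (((δ^n)⁻¹ : ℝ) : ℂ) * (∑ x : XX n N with bl k x = bl k z, B ω (ph R δ x) -
        ∑ x : XX n N with bl k x = bl k z, ∑ y : XX n N with ¬ bl k y = bl k z, B (fun u => ω u * ph R δ y u) (ph R δ x)) := by
    rw [← Finset.sum_sub_distrib, Finset.mul_sum]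
    apply Finset.sum_congr rfl
    intro x _
    rw [← hsplit, Finset.mul_sum]
    rfl
  rw [e]
  apply MB_norm hδ z z
  refine (norm_sub_le _ _).trans ?_
  have s1 : ‖∑ x : XX n N with bl k x = bl k z, B ω (ph R δ x)‖ ≤ ((2:ℝ)^k)^n * (A * (1 + 2*L) * CH3 n * δ^n) := by
    refine (norm_sum_le_of_le _ (fun x _ => b1 x)).trans ?_
    rw [Finset.sum_const, nsmul_eq_mul, block_card k hk z]
  have s2 : ‖∑ x : XX n N with bl k x = bl k z, ∑ y : XX n N with ¬ bl k y = bl k z,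
      B (fun u => ω u * ph R δ y u) (ph R δ x)‖ ≤
      A * (CH n * (2 * (1+L) * LP n) * LP n * (3*n)) * δ^n * CG n * ((2:ℝ)^k)^n := by
    refine (norm_sum_le_of_le _ (fun x hx => norm_sum_le_of_le _ (fun y hy => b2 x y (by simpa using hx)
      (by simpa using hy)))).trans ?_
    simp_rw [← Finset.mul_sum]
    have := G2 k hk z
    have t0 : 0 < √((2:ℝ)^k) := Real.sqrt_pos.mpr (by positivity)
    have e3 : ∑ x : XX n N with bl k x = bl k z, ∑ y : XX n N with ¬ bl k y = bl k z, sg x y =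
      ∑ x : XX n N with bl k x = bl k z, ∑ y : XX n N with bl k y ≠ bl k x, sg x y := by
      apply Finset.sum_congr rfl
      intro x hx
      have : bl k x = bl k z := by simpa using hx
      rw [this]
    rw [e3]
    calc _ ≤ A * (CH n * (2 * (1+L) * LP n) * LP n * (3*n)) * δ^n * √((2:ℝ)^k) *
        (CG n * (((2:ℝ)^k)^n / √((2:ℝ)^k))) := by gcongr; exact this
      _ = _ := by field_simp
  refine (add_le_add s1 s2).trans (le_of_eq ?_)
  ring

lemma form_CZ (n : ℕ) (hn : 1 ≤ n) : ∃ C : ℝ, 0 < C ∧ ∀ (N : ℕ) (R A : ℝ) (B : (EE n → ℂ) → (EE n → ℂ) → ℂ) (_ : Form n R A B)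
    (δ : ℝ) (_ : 0 < δ) (_ : 2 * R ≤ δ * (2^N - 1)), CZ (MB (N := N) B R δ) (A * C) := by
  obtain ⟨C4, h40, h4⟩ := MB_h4 n hn
  have c1 := CH1_nonneg n
  have V0 := VV_nonneg n
  have c2 : 0 ≤ CH2 n := by unfold CH2; positivity
  have c3 : 0 ≤ CH3 n := by unfold CH3; positivity
  refine ⟨CH1 n + CH2 n + CH3 n + C4 + 1, by positivity, ?_⟩
  intro N R A B F δ hδ hδN
  have A0 := F.A0
  have dn := dd_nonneg (n := n) (N := N)
  refine ⟨by positivity, ?_, ?_, ?_, ?_, ?_, ?_⟩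
  · intro x y h
    refine (MB_h1 F hn hδ x y h).trans ?_
    have := dn x y
    gcongr; linarith
  · intro x x' y h
    refine (MB_h2 F hn hδ x x' y h).trans ?_
    have := dn x y
    have := dn x x'
    gcongr; linarith
  · intro y y' x h
    rw [dd_comm x y] at *
    refine (MB_h2 F.tr hn hδ y y' x h).trans ?_
    have := dn y x
    have := dn y y'
    gcongr; linarith
  · intro x
    refine (MB_h3 F hδ hδN x).trans ?_
    gcongr; linarith
  · intro x
    refine (MB_h3 F.tr hδ hδN x).trans ?_
    gcongr; linarith
  · intro k hk z
    refine (h4 N R A B F δ hδ hδN k hk z).trans ?_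
    gcongr; linarith

end T1D

namespace T1D
variable {n N : ℕ} {R A : ℝ} {B : (EE n → ℂ) → (EE n → ℂ) → ℂ}

lemma Cell.diff {δ : ℝ} (hδ : 0 < δ) {y : XX n N} {a L : ℝ} {ψ f : EE n → ℂ} (h : Cell R δ y a ψ) (hf : C1 f)
    (hL : 0 ≤ L) (hp : PB f L) :
    Cell R δ y ((n * n * L + L) * δ * a) (fun u => (f u - f (gp R δ y)) * ψ u) where
  c1 := (hf.sub contDiff_const).mul h.c1
  ts := (closure_mono (by intro u hu h; exact hu (by simp [h]))).trans h.ts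
  bd u := by
    have a0 := h.a0
    by_cases hu : u ∈ tsupport ψ
    · have h1 := h.ts hu
      rw [mem_closedBall, dist_eq_norm] at h1
      have h2 := hp.lip hL hf u (gp R δ y)
      have h3 : ‖f u - f (gp R δ y)‖ ≤ (n * n * L + L) * δ := by
        refine h2.trans ?_
        calc n * L * ‖u - gp R δ y‖ ≤ n * L * (n * δ) := by gcongr
          _ ≤ (n * n * L + L) * δ := by nlinarith [mul_nonneg hL hδ.le]
      rw [norm_mul]
      exact mul_le_mul h3 (h.bd u) (norm_nonneg _) (by positivity)
    · rw [image_eq_zero_of_notMem_tsupport hu, mul_zero, norm_zero]; positivity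
  pb i u := by
    have a0 := h.a0
    have e : fderiv ℝ (fun u => (f u - f (gp R δ y)) * ψ u) u = _ :=
      fderiv_fun_mul ((hf.diff u).sub_const _) (h.c1.diff u)
    rw [e]
    simp only [ContinuousLinearMap.add_apply, ContinuousLinearMap.smul_apply, smul_eq_mul]
    by_cases hu : u ∈ tsupport ψ
    · have h1 := h.ts hu
      rw [mem_closedBall, dist_eq_norm] at h1
      have h2 := hp.lip hL hf u (gp R δ y)
      have h3 : ‖f u - f (gp R δ y)‖ ≤ n * n * L * δ := by
        refine h2.trans ?_
        calc n * L * ‖u - gp R δ y‖ ≤ n * L * (n * δ) := by gcongr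
          _ = _ := by ring
      refine (norm_add_le _ _).trans ?_
      rw [norm_mul, norm_mul]
      have h4 := hp.sub_const (f (gp R δ y)) i u
      have h5 := h.pb i u
      have h6 := h.bd u
      calc _ ≤ (n * n * L * δ) * (a / δ) + a * L := by gcongr
        _ = _ := by field_simp
    · rw [image_eq_zero_of_notMem_tsupport hu, fderiv_of_notMem_tsupport (𝕜 := ℝ) hu]
      simp; positivity

lemma ph_real (R δ : ℝ) (y : XX n N) (u : EE n) : ph R δ y u = ((‖ph R δ y u‖ : ℝ) : ℂ) := by
  unfold ph resc; rw [norm_Ph]; rfl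

lemma ph_one' {R δ : ℝ} (hδ : 0 < δ) (hδN : 2 * R ≤ δ * (2^N - 1)) (u : EE n)
    (hu : u ∈ closedBall (0 : EE n) R) : ∑ y : XX n N, ‖ph R δ y u‖ = 1 := by
  have := ph_one (N := N) hδ hδN u hu
  have e : ((∑ y : XX n N, ‖ph R δ y u‖ : ℝ) : ℂ) = 1 := by
    rw [← this, Complex.ofReal_sum]
    exact Finset.sum_congr rfl (fun y _ => (ph_real R δ y u).symm)
  exact_mod_cast e

lemma ph_int' (R : ℝ) {δ : ℝ} (hδ : 0 < δ) (y : XX n N) : ∫ u, ‖ph R δ y u‖ = δ^n * cP n := by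
  have := resc_int (fun u : EE n => ‖Ph u‖) (gp R δ y) hδ
  simp only [norm_Ph, smul_eq_mul] at this
  rw [cP, ← this]
  congr 1; funext u
  unfold ph resc; rw [norm_Ph]

lemma ph_integrable (R : ℝ) {δ : ℝ} (hδ : 0 < δ) (y : XX n N) : Integrable (fun u => ‖ph R δ y u‖) :=
  ((ph_cell R hδ y).c1.continuous.integrable_of_hasCompactSupport (ph_cell R hδ y).cs).norm

lemma sq_integrable {f : EE n → ℂ} (hf : C1 f) (hc : HasCompactSupport f) : Integrable (fun u => ‖f u‖^2) := by
  apply Continuous.integrable_of_hasCompactSupport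
  · exact hf.continuous.norm.pow 2
  · exact hc.norm.comp_left (g := fun t : ℝ => t^2) (by simp)

lemma qq_le {δ : ℝ} (hδ : 0 < δ) (hδN : 2 * R ≤ δ * (2^N - 1)) {f : EE n → ℂ} {L : ℝ} (hL : 0 ≤ L)
    (hf : C1 f) (hc : HasCompactSupport f) (hp : PB f L) (h0 : ∀ u ∉ closedBall (0 : EE n) R, f u = 0) :
    cP n * δ^n * qq (fun y : XX n N => f (gp R δ y)) ≤
      2 * (∫ u, ‖f u‖^2) + 2 * (n * n * L * δ)^2 * cP n * (δ * 2^N)^n := by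
  have i1 : Integrable (fun u => ∑ y : XX n N, ‖f (gp R δ y)‖^2 * ‖ph R δ y u‖) :=
    integrable_finset_sum _ (fun y _ => (ph_integrable R hδ y).const_mul _)
  have i2 : Integrable (fun u => ∑ y : XX n N, (2 * (n * n * L * δ)^2) * ‖ph R δ y u‖) :=
    integrable_finset_sum _ (fun y _ => (ph_integrable R hδ y).const_mul _)
  have i3 : Integrable (fun u => 2 * ‖f u‖^2) := (sq_integrable hf hc).const_mul 2
  have key := integral_mono i1 (i3.add i2) (fun u => by
    have h1 : ∀ y : XX n N, ‖f (gp R δ y)‖^2 * ‖ph R δ y u‖ ≤ 2 * ‖f u‖^2 * ‖ph R δ y u‖ +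
        (2 * (n * n * L * δ)^2) * ‖ph R δ y u‖ := by
      intro y
      by_cases hu : n * δ < ‖u - gp R δ y‖
      · rw [ph_zero R hδ y u hu]; simp
      · have h2 := hp.lip hL hf (gp R δ y) u
        have h3 : ‖f (gp R δ y) - f u‖ ≤ n * n * L * δ := by
          refine h2.trans ?_
          rw [norm_sub_rev]
          calc n * L * ‖u - gp R δ y‖ ≤ n * L * (n * δ) := by gcongr; exact not_lt.mp hu
            _ = _ := by ring
        rw [← add_mul]
        gcongr
        have h4 : ‖f (gp R δ y)‖ ≤ ‖f u‖ + n * n * L * δ := by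
          have := norm_add_le (f u) (f (gp R δ y) - f u)
          rw [add_sub_cancel] at this
          linarith
        calc ‖f (gp R δ y)‖^2 ≤ (‖f u‖ + n * n * L * δ)^2 := by gcongr
          _ ≤ _ := by nlinarith [sq_nonneg (‖f u‖ - n * n * L * δ)]
    have h5 := Finset.sum_le_sum (s := Finset.univ) (fun y (_ : y ∈ Finset.univ) => h1 y)
    refine h5.trans ?_
    rw [Finset.sum_add_distrib]
    simp only [Pi.add_apply]
    gcongr
    rw [← Finset.mul_sum]
    by_cases hu : u ∈ closedBall (0 : EE n) R
    · rw [ph_one' hδ hδN u hu, mul_one]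
    · rw [h0 u hu]; simp)
  rw [integral_add' i3 i2, integral_finset_sum _ (fun y _ => (ph_integrable R hδ y).const_mul _),
    integral_finset_sum _ (fun y _ => (ph_integrable R hδ y).const_mul _)] at key
  simp_rw [integral_const_mul, ph_int' R hδ] at key
  rw [← Finset.sum_mul] at key
  have e : (Finset.univ : Finset (XX n N)).card = (2^N)^n := by simp
  rw [Finset.sum_const, e] at key
  simp only [nsmul_eq_mul] at key
  push_cast at key
  unfold qq
  rw [mul_pow δ]
  linarith

lemma sum_mx (x : XX n N) : ∑ y : XX n N, 1 / (max 1 (dd x y))^n ≤ 5 * 5^n * √((2:ℝ)^N) := by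
  classical
  have hs : 1 ≤ √((2:ℝ)^N) := by
    rw [Real.one_le_sqrt]; exact one_le_pow₀ (by norm_num)
  rw [← Finset.add_sum_erase _ _ (Finset.mem_univ x)]
  have h1 : 1 / (max 1 (dd x x))^n ≤ 1 := by
    rw [div_le_one (by positivity)]
    exact one_le_pow₀ (le_max_left _ _)
  have h2 : ∑ y ∈ Finset.univ.erase x, 1 / (max 1 (dd x y))^n ≤
      ∑ y : XX n N with 1 ≤ dd x y, √((2:ℝ)^N) * sg x y := by
    refine (Finset.sum_le_sum (g := fun y => √((2:ℝ)^N) * sg x y) ?_).trans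
      (Finset.sum_le_sum_of_subset_of_nonneg ?_ ?_)
    · intro y hy
      have h := one_le_dd x y (Finset.ne_of_mem_erase hy).symm
      rw [max_eq_right h]
      unfold sg
      have hd : 0 < dd x y := by linarith
      rw [mul_one_div, div_le_div_iff₀ (by positivity) (by positivity), one_mul, mul_comm]
      have := dd_lt x y
      gcongr
    · intro y hy
      simp only [Finset.mem_filter, Finset.mem_univ, true_and]
      exact one_le_dd x y (Finset.ne_of_mem_erase hy).symm
    · intro y _ _
      exact mul_nonneg (Real.sqrt_nonneg _) (sg_nonneg _ _)
  rw [← Finset.mul_sum] at h2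
  have h3 := G1 x 1 le_rfl
  have h4 : ∑ y ∈ Finset.univ.erase x, 1 / (max 1 (dd x y))^n ≤ √((2:ℝ)^N) * (4 * 5^n * (1 / √1)) :=
    h2.trans (by gcongr)
  rw [Real.sqrt_one] at h4
  have h5 : (1:ℝ) ≤ 5^n := one_le_pow₀ (by norm_num)
  nlinarith

lemma B_expand (F : Form n R A B) {δ : ℝ} (hδ : 0 < δ) (hδN : 2 * R ≤ δ * (2^N - 1)) {f g : EE n → ℂ}
    (hf : C1 f) (hg : C1 g) :
    B f g = ∑ x : XX n N, ∑ y : XX n N, B (fun u => f u * ph R δ y u) (fun u => g u * ph R δ x u) := by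
  have pc : ∀ y : XX n N, C1 (ph R δ y) := fun y => (ph_cell R hδ y).c1
  have h1 : B f g = B (fun u => ∑ y : XX n N, f u * ph R δ y u) g := by
    apply F.loc_l _ _ _ hf (ContDiff.sum (fun y _ => hf.mul (pc y))) hg
    intro u hu
    rw [← Finset.mul_sum, ph_one hδ hδN u hu, mul_one]
  rw [h1, F.sum_l _ _ _ (fun y => hf.mul (pc y)) hg, Finset.sum_comm]
  refine Finset.sum_congr rfl (fun y _ => ?_)
  have h2 : B (fun u => f u * ph R δ y u) g =
      B (fun u => f u * ph R δ y u) (fun u => ∑ x : XX n N, g u * ph R δ x u) := by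
    apply F.loc_r _ _ _ (hf.mul (pc y)) hg (ContDiff.sum (fun y _ => hg.mul (pc y)))
    intro u hu
    rw [← Finset.mul_sum, ph_one hδ hδN u hu, mul_one]
  rw [h2, F.sum_r _ _ _ (hf.mul (pc y)) (fun x => hg.mul (pc x))]

lemma term_diff (F : Form n R A B) (hn : 1 ≤ n) {δ : ℝ} (hδ : 0 < δ) {f g : EE n → ℂ} {L P : ℝ}
    (hL : 0 ≤ L) (hf : C1 f) (hg : C1 g) (pf : PB f L) (pg : PB g L) (bf : ∀ u, ‖f u‖ ≤ P)
    (bg : ∀ u, ‖g u‖ ≤ P) (hP : L ≤ P / δ) (x y : XX n N) :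
    ‖B (fun u => f u * ph R δ y u) (fun u => g u * ph R δ x u) -
      f (gp R δ y) * g (gp R δ x) * B (ph R δ y) (ph R δ x)‖ ≤
      A * CH n * (n * n * L + L) * 3 * P * LP n * LP n * δ * δ^n * (1 / (max 1 (dd x y))^n) := by
  have cy := ph_cell R hδ y
  have cx := ph_cell R hδ x
  have h1 := GH1 F hn hδ (cy.diff hδ hf hL pf) (cx.mul hg bg (pg.mono hP))
  have h2 := GH1 F hn hδ (cy.smul (f (gp R δ y)) (bf _) hδ) (cx.diff hδ hg hL pg)
  have e1 : B (fun u => (f u - f (gp R δ y)) * ph R δ y u) (fun u => g u * ph R δ x u) =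
      B (fun u => f u * ph R δ y u) (fun u => g u * ph R δ x u) -
      f (gp R δ y) * B (ph R δ y) (fun u => g u * ph R δ x u) := by
    rw [← F.sm_l _ _ _ cy.c1 (hg.mul cx.c1), ← F.sub_l _ _ _ (hf.mul cy.c1) (contDiff_const.mul cy.c1) (hg.mul cx.c1)]
    congr 1; funext u; ring
  have e2 : B (fun u => f (gp R δ y) * ph R δ y u) (fun u => (g u - g (gp R δ x)) * ph R δ x u) =
      f (gp R δ y) * B (ph R δ y) (fun u => g u * ph R δ x u) -
      f (gp R δ y) * g (gp R δ x) * B (ph R δ y) (ph R δ x) := by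
    rw [F.sm_l _ _ _ cy.c1 ((hg.sub contDiff_const).mul cx.c1), mul_assoc, ← F.sm_r _ _ _ cy.c1 cx.c1, ← mul_sub,
      ← F.sub_r _ _ _ cy.c1 (hg.mul cx.c1) (contDiff_const.mul cx.c1)]
    congr 2; funext u; ring
  rw [e1] at h1
  rw [e2] at h2
  have h3 := norm_add_le (B (fun u => f u * ph R δ y u) (fun u => g u * ph R δ x u) -
      f (gp R δ y) * B (ph R δ y) (fun u => g u * ph R δ x u)) (f (gp R δ y) * B (ph R δ y) (fun u => g u * ph R δ x u) -
      f (gp R δ y) * g (gp R δ x) * B (ph R δ y) (ph R δ x))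
  rw [sub_add_sub_cancel] at h3
  refine h3.trans ((add_le_add h1 h2).trans (le_of_eq ?_))
  ring

lemma limit_bd (n : ℕ) (hn : 1 ≤ n) : ∃ C : ℝ, 0 < C ∧ ∀ (R A : ℝ) (_ : 0 < R) (B : (EE n → ℂ) → (EE n → ℂ) → ℂ)
    (_ : Form n R A B) (f g : EE n → ℂ), C1 f → C1 g → HasCompactSupport f → HasCompactSupport g →
    (∀ u ∉ closedBall (0 : EE n) R, f u = 0) → (∀ u ∉ closedBall (0 : EE n) R, g u = 0) →
    ∀ t : ℝ, 0 < t → ‖B f g‖ ≤ C * A * (t * (∫ u, ‖f u‖^2) + (∫ u, ‖g u‖^2) / t) := by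
  obtain ⟨C, hC, hCZ⟩ := form_CZ n hn
  have cp := cP_pos n
  have G0 : 0 ≤ CG n := by unfold CG; positivity
  set Q := C * (603 * CG n + 28) with hQ
  have Q0 : 0 < Q := by positivity
  refine ⟨2 * Q / cP n, by positivity, ?_⟩
  intro R A hR B F f g hf hg cf cg f0 g0 t ht
  have A0 := F.A0
  obtain ⟨L1, L1p, pf, bf⟩ := exists_PB hf cf
  obtain ⟨L2, L2p, pg, bg⟩ := exists_PB hg cg
  set L := L1 + L2 with hL
  have L0 : 0 < L := by positivity
  replace pf := pf.mono (show L1 ≤ L by linarith)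
  replace pg := pg.mono (show L2 ≤ L by linarith)
  set P := L * (1 + 4 * R) with hP
  have bf' : ∀ u, ‖f u‖ ≤ P := fun u => (bf u).trans (by nlinarith [mul_pos L0 hR])
  have bg' : ∀ u, ‖g u‖ ≤ P := fun u => (bg u).trans (by nlinarith [mul_pos L0 hR])
  set If := ∫ u, ‖f u‖^2
  set Ig := ∫ u, ‖g u‖^2
  set H := CH n * (n * n * L + L) * 3 * P * LP n * LP n with hH
  have key : ∀ m : ℕ, ‖B f g‖ ≤ A * H * (4*R)^n * (5 * 5^n) * ((4 * R) * (√((2:ℝ)^(m+1)))⁻¹) +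
      A * Q / cP n * (t * (2 * If + 2 * (n * n * L * (4 * R * ((2:ℝ)^(m+1))⁻¹))^2 * cP n * (4*R)^n) +
        (2 * Ig + 2 * (n * n * L * (4 * R * ((2:ℝ)^(m+1))⁻¹))^2 * cP n * (4*R)^n) / t) := by
    intro m
    set N := m + 1 with hN
    have p0 : (0:ℝ) < 2^N := by positivity
    have p2 : (2:ℝ) ≤ 2^N := by
      rw [hN, pow_succ]; have : (1:ℝ) ≤ 2^m := one_le_pow₀ (by norm_num)
      linarith
    set δ := 4 * R * ((2:ℝ)^N)⁻¹ with hδ'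
    have hδ : 0 < δ := by positivity
    have hδN' : δ * 2^N = 4 * R := by rw [hδ']; field_simp
    have hδN : 2 * R ≤ δ * (2^N - 1) := by nlinarith
    have hPδ : L ≤ P / δ := by
      rw [le_div_iff₀ hδ, hP]
      have : δ ≤ 4 * R := by nlinarith
      nlinarith
    have h1 := B_expand (N := N) F hδ hδN hf hg
    have h2 : ∑ x : XX n N, ∑ y : XX n N, f (gp R δ y) * g (gp R δ x) * B (ph R δ y) (ph R δ x) =
        ((δ^n : ℝ) : ℂ) * Bf (MB B R δ) (fun y : XX n N => f (gp R δ y)) (fun y : XX n N => g (gp R δ y)) := by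
      unfold Bf MB
      rw [Finset.mul_sum]
      refine Finset.sum_congr rfl (fun x _ => ?_)
      rw [Finset.mul_sum]
      refine Finset.sum_congr rfl (fun y _ => ?_)
      have : ((δ^n : ℝ) : ℂ) ≠ 0 := by exact_mod_cast (pow_pos hδ n).ne'
      push_cast at this ⊢
      field_simp
    have h3 : ‖B f g - ((δ^n : ℝ) : ℂ) * Bf (MB B R δ) (fun y : XX n N => f (gp R δ y)) (fun y : XX n N => g (gp R δ y))‖
        ≤ A * H * (4*R)^n * (5 * 5^n) * ((4 * R) * (√((2:ℝ)^N))⁻¹) := by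
      rw [h1, ← h2, ← Finset.sum_sub_distrib]
      have hK : 0 ≤ A * H * δ * δ^n := by
        have := CH_nonneg n
        have := (LP_spec n).1
        positivity
      calc _ ≤ ∑ x : XX n N, (A * H * δ * δ^n) * (5 * 5^n * √((2:ℝ)^N)) := by
            refine (norm_sum_le _ _).trans (Finset.sum_le_sum (fun x _ => ?_))
            rw [← Finset.sum_sub_distrib]
            refine (norm_sum_le _ _).trans ?_
            refine (Finset.sum_le_sum (fun y _ => term_diff F hn hδ L0.le hf hg pf pg bf' bg' hPδ x y)).trans ?_
            rw [← Finset.mul_sum]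
            refine (le_of_eq ?_).trans (mul_le_mul_of_nonneg_left (sum_mx x) hK)
            rw [hH]; ring
        _ = _ := by
            have e : (Finset.univ : Finset (XX n N)).card = (2^N)^n := by simp
            rw [Finset.sum_const, e, nsmul_eq_mul]
            push_cast
            have e2 : √((2:ℝ)^N) * √((2:ℝ)^N) = 2^N := Real.mul_self_sqrt p0.le
            have e3 : δ * √((2:ℝ)^N) = 4 * R * (√((2:ℝ)^N))⁻¹ := by
              have : 0 < √((2:ℝ)^N) := Real.sqrt_pos.mpr p0
              rw [eq_mul_inv_iff_mul_eq₀ this.ne', mul_assoc, e2, hδN']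
            rw [← e3, ← hδN', mul_pow δ]
            generalize δ = d
            ring
    have h4 := discrete_T1 (hCZ N R A B F δ hδ hδN) (fun y : XX n N => f (gp R δ y)) (fun y : XX n N => g (gp R δ y)) t ht
    have q1 := qq_le hδ hδN L0.le hf cf pf f0
    have q2 := qq_le hδ hδN L0.le hg cg pg g0
    rw [hδN'] at q1 q2
    set qf := qq (fun y : XX n N => f (gp R δ y))
    set qg := qq (fun y : XX n N => g (gp R δ y))
    set Z := Bf (MB B R δ) (fun y : XX n N => f (gp R δ y)) (fun y : XX n N => g (gp R δ y))
    have h5 : ‖B f g‖ ≤ ‖B f g - ((δ^n : ℝ) : ℂ) * Z‖ + ‖((δ^n : ℝ) : ℂ) * Z‖ := by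
      have := norm_add_le (B f g - ((δ^n : ℝ) : ℂ) * Z) (((δ^n : ℝ) : ℂ) * Z)
      rwa [sub_add_cancel] at this
    refine h5.trans (add_le_add h3 ?_)
    rw [norm_mul, Complex.norm_real, Real.norm_eq_abs, abs_of_pos (by positivity)]
    calc δ^n * ‖Z‖ ≤ δ^n * (A * C * (603 * CG n + 28) * (t * qf + qg / t)) := by gcongr
      _ = A * Q / cP n * (t * (cP n * δ^n * qf) + (cP n * δ^n * qg) / t) := by
          rw [hQ]; field_simp
      _ ≤ _ := by gcongr
  have T1 : Filter.Tendsto (fun m : ℕ => ((2:ℝ)^(m+1))⁻¹) Filter.atTop (nhds 0) :=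
    tendsto_inv_atTop_zero.comp ((tendsto_pow_atTop_atTop_of_one_lt (by norm_num)).comp (Filter.tendsto_add_atTop_nat 1))
  have T2 : Filter.Tendsto (fun m : ℕ => (√((2:ℝ)^(m+1)))⁻¹) Filter.atTop (nhds 0) :=
    tendsto_inv_atTop_zero.comp (Real.tendsto_sqrt_atTop.comp
      ((tendsto_pow_atTop_atTop_of_one_lt (by norm_num)).comp (Filter.tendsto_add_atTop_nat 1)))
  have T3 : Filter.Tendsto (fun m : ℕ => 2 * (n * n * L * (4 * R * ((2:ℝ)^(m+1))⁻¹))^2 * cP n * (4*R)^n) Filter.atTop (nhds 0) := by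
    have : Filter.Tendsto (fun m : ℕ => 2 * (n * n * L * (4 * R * ((2:ℝ)^(m+1))⁻¹))^2 * cP n * (4*R)^n) Filter.atTop
      (nhds (2 * (n * n * L * (4 * R * 0))^2 * cP n * (4*R)^n)) :=
      (((((T1.const_mul (4*R)).const_mul (n * n * L)).pow 2).const_mul 2).mul_const _).mul_const _
    simpa using this
  have T4 := ((T2.const_mul (4*R)).const_mul (A * H * (4*R)^n * (5 * 5^n))).add
    ((((T3.const_add (2 * If)).const_mul t).add ((T3.const_add (2 * Ig)).div_const t)).const_mul (A * Q / cP n))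
  have := ge_of_tendsto' T4 key
  refine this.trans (le_of_eq ?_)
  simp only [mul_zero, zero_add, add_zero]
  ring

end T1D

namespace T1D
variable {n : ℕ}

/-- cutoff functions adapted to a ball -/
structure Cut (c : EE n) (ρ L : ℝ) (χ : EE n → ℝ) : Prop where
  L0 : 0 < L
  c1 : C1 (fun u => (χ u : ℂ))
  pb : PB (fun u => (χ u : ℂ)) L
  bd : ∀ u, ‖(χ u : ℂ)‖ ≤ 1
  ts : tsupport (fun u => (χ u : ℂ)) ⊆ ball c ρ
  cs : HasCompactSupport (fun u => (χ u : ℂ))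

lemma exists_cut (c : EE n) (ρ : ℝ) (hρ : 0 < ρ) (K : Set (EE n)) (hK : IsCompact K) (hKB : K ⊆ ball c ρ) :
    ∃ (χ : EE n → ℝ) (L ρ' : ℝ), Cut c ρ L χ ∧ K ⊆ ball c ρ' ∧ ∀ u ∈ ball c ρ', χ u = 1 := by
  obtain ⟨r', hr', hKr⟩ := exists_lt_subset_ball hK.isClosed hKB
  set q := max r' (ρ/2) with hq
  have q1 : q < ρ := max_lt hr' (by linarith)
  have q0 : 0 < q := lt_of_lt_of_le (by linarith) (le_max_right _ _)
  let b : ContDiffBump c := ⟨q, (q+ρ)/2, q0, by linarith⟩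
  have h1 : C1 (fun u => ((b u : ℝ) : ℂ)) := Complex.ofRealCLM.contDiff.comp b.contDiff
  have hts : tsupport (fun u => ((b u : ℝ) : ℂ)) ⊆ closedBall c ((q+ρ)/2) := by
    apply tsup_of
    intro u hu
    have : b u = 0 := b.zero_of_le_dist (by rw [dist_eq_norm]; exact hu.le)
    simp [this]
  obtain ⟨L, L0, hL, _⟩ := exists_PB h1 (cpt_of hts)
  refine ⟨b, L, q, ⟨L0, h1, hL, ?_, ?_, cpt_of hts⟩, ?_, ?_⟩
  · intro u
    rw [Complex.norm_real, Real.norm_eq_abs, abs_of_nonneg b.nonneg]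
    exact b.le_one
  · exact hts.trans (closedBall_subset_ball (by linarith))
  · exact hKr.trans (ball_subset_ball (le_max_left _ _))
  · intro u hu
    exact b.one_of_mem_closedBall (ball_subset_closedBall hu)

lemma Cut.zero {c : EE n} {ρ L : ℝ} {χ : EE n → ℝ} (h : Cut c ρ L χ) (u : EE n) (hu : u ∉ ball c ρ) : χ u = 0 := by
  have : u ∉ tsupport (fun u => (χ u : ℂ)) := fun h' => hu (h.ts h')
  have := image_eq_zero_of_notMem_tsupport this
  exact_mod_cast this

lemma Cut.mul_c1 {c : EE n} {ρ L : ℝ} {χ : EE n → ℝ} (h : Cut c ρ L χ) {f : EE n → ℂ} (hf : C1 f) :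
    C1 (fun u => (χ u : ℂ) * f u) := h.c1.mul hf

lemma Cut.mul_ts {c : EE n} {ρ L : ℝ} {χ : EE n → ℝ} (h : Cut c ρ L χ) (f : EE n → ℂ) :
    tsupport (fun u => (χ u : ℂ) * f u) ⊆ ball c ρ := (tsupport_mul_subset_left).trans h.ts

lemma Cut.mul_ts' {χ : EE n → ℝ} (f : EE n → ℂ) :
    tsupport (fun u => (χ u : ℂ) * f u) ⊆ tsupport f := tsupport_mul_subset_right

lemma Cut.mul_cs {c : EE n} {ρ L : ℝ} {χ : EE n → ℝ} (h : Cut c ρ L χ) (f : EE n → ℂ) :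
    HasCompactSupport (fun u => (χ u : ℂ) * f u) := h.cs.mul_right

lemma cut_bump {c : EE n} {ρ L : ℝ} (hρ : 0 < ρ) {χ : EE n → ℝ} (h : Cut c ρ L χ) {f : EE n → ℂ} {r : ℝ} (hr : 0 < r)
    (hf : C1 f) (bf : ∀ u, ‖f u‖ ≤ 1) (pf : PB f (1/r)) (hs : 1 ≤ r ∨ ∃ c, tsupport f ⊆ closedBall c r) :
    ∃ r', 0 < r' ∧ r' ≤ ρ ∧ IsBump n r' (fun u => (((1 + ρ + L * ρ)⁻¹ : ℝ) : ℂ) * ((χ u : ℂ) * f u)) := by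
  have L0 := h.L0
  set Q := 1 + ρ + L * ρ with hQ
  have Q1 : 1 ≤ Q := by have := mul_pos L0 hρ; linarith
  have hp := PB.mul h.c1 hf h.pb pf h.bd bf
  have hc := h.mul_c1 hf
  have hp2 := hp.smul hc (((Q⁻¹ : ℝ)) : ℂ)
  rw [Complex.norm_real, Real.norm_eq_abs, abs_of_pos (by positivity)] at hp2
  have hb : ∀ u, ‖((Q⁻¹ : ℝ) : ℂ) * ((χ u : ℂ) * f u)‖ ≤ 1 := by
    intro u
    rw [norm_mul, norm_mul, Complex.norm_real Q⁻¹, Real.norm_eq_abs, abs_of_pos (show 0 < Q⁻¹ by positivity)]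
    have h1 := h.bd u
    have h2 := bf u
    have h3 : Q⁻¹ ≤ 1 := inv_le_one_of_one_le₀ Q1
    calc Q⁻¹ * (‖(χ u : ℂ)‖ * ‖f u‖) ≤ 1 * (1 * 1) := by gcongr
      _ = 1 := by norm_num
  have hC : C1 (fun u => ((Q⁻¹ : ℝ) : ℂ) * ((χ u : ℂ) * f u)) := contDiff_const.mul hc
  have ht : tsupport (fun u => ((Q⁻¹ : ℝ) : ℂ) * ((χ u : ℂ) * f u)) ⊆ tsupport (fun u => (χ u : ℂ) * f u) :=
    tsupport_mul_subset_right
  by_cases hcase : 1 ≤ r ∨ ρ ≤ r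
  · refine ⟨ρ, hρ, le_rfl, hC, ⟨c, ht.trans ((h.mul_ts f).trans ball_subset_closedBall)⟩, hb, hp2.mono ?_⟩
    rw [inv_mul_le_iff₀ (by positivity)]
    have : 1 / r ≤ 1 + 1 / ρ := by
      rcases hcase with h1 | h1
      · have : 1 / r ≤ 1 := by rw [div_le_one hr]; exact h1
        have : 0 < 1/ρ := by positivity
        linarith
      · have : 1 / r ≤ 1 / ρ := by gcongr
        linarith
    calc L * 1 + 1 * (1 / r) ≤ L * 1 + 1 * (1 + 1/ρ) := by gcongr
      _ = Q * (1 / ρ) := by rw [hQ]; field_simp; ring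
  · push Not at hcase
    obtain ⟨c', hc'⟩ := hs.resolve_left (by linarith [hcase.1])
    refine ⟨r, hr, hcase.2.le, hC, ⟨c', ht.trans ((Cut.mul_ts' f).trans hc')⟩, hb, hp2.mono ?_⟩
    rw [inv_mul_le_iff₀ (by positivity)]
    rw [mul_one, one_mul, mul_one_div, ← sub_nonneg]
    have : Q / r - (L + 1 / r) = (ρ + L * (ρ - r)) / r := by rw [hQ]; field_simp; ring
    rw [this]
    have : 0 ≤ ρ - r := by linarith [hcase.2]
    positivity

lemma bump_bd {c c' : EE n} {ρ ρ' L : ℝ} (hρ : 0 < ρ) {χ : EE n → ℝ} (h : Cut c ρ L χ)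
    (S : (EE n → ℂ) →ₗ[ℂ] Lp ℂ 2 ((volume : Measure (EE n)).restrict (ball c' ρ'))) (A : ℝ)
    (hS : ∀ r : ℝ, 0 < r → r ≤ ρ → ∀ ω, IsBump n r ω → tsupport ω ⊆ ball c ρ →
        ∀ᵐ x ∂((volume : Measure (EE n)).restrict (ball c' ρ')), ‖(S ω : EE n → ℂ) x‖ ≤ A)
    {f : EE n → ℂ} {r : ℝ} (hr : 0 < r)
    (hf : C1 f) (bf : ∀ u, ‖f u‖ ≤ 1) (pf : PB f (1/r)) (hs : 1 ≤ r ∨ ∃ c, tsupport f ⊆ closedBall c r) :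
    ∀ᵐ x ∂((volume : Measure (EE n)).restrict (ball c' ρ')),
      ‖(S (fun u => (χ u : ℂ) * f u) : EE n → ℂ) x‖ ≤ (1 + ρ + L * ρ) * A := by
  obtain ⟨r', h1, h2, h3⟩ := cut_bump hρ h hr hf bf pf hs
  have L0 := h.L0
  have Q0 : 0 < 1 + ρ + L * ρ := by positivity
  have h4 := hS r' h1 h2 _ h3 ((tsupport_mul_subset_right).trans (h.mul_ts f))
  have e : S (fun u => (((1 + ρ + L * ρ)⁻¹ : ℝ) : ℂ) * ((χ u : ℂ) * f u)) =
      (((1 + ρ + L * ρ)⁻¹ : ℝ) : ℂ) • S (fun u => (χ u : ℂ) * f u) := by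
    rw [← map_smul]; rfl
  rw [e] at h4
  filter_upwards [h4, Lp.coeFn_smul (((1 + ρ + L * ρ)⁻¹ : ℝ) : ℂ) (S (fun u => (χ u : ℂ) * f u))] with x hx hx2
  rw [hx2, Pi.smul_apply, norm_smul, Complex.norm_real, Real.norm_eq_abs, abs_of_pos (by positivity),
    inv_mul_le_iff₀ Q0] at hx
  exact hx

/-- kernel regularity with cutoff -/
lemma kern_lip {c : EE n} {ρ L R A : ℝ} {χ : EE n → ℝ} (h : Cut c ρ L χ) (hA : 0 < A) (hR : 0 < R) (k : EE n → ℂ) (w : EE n)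
    (hd : ∀ z ∈ ball c ρ, z ≠ w → DifferentiableAt ℝ k z)
    (hk : ∀ z ∈ ball c ρ, z ≠ w → ‖k z‖ ≤ A / ‖z - w‖^n)
    (hk' : ∀ z ∈ ball c ρ, z ≠ w → ∀ i, ‖fderiv ℝ k z (EuclideanSpace.single i 1)‖ ≤ A / ‖z - w‖^(n+1))
    (hw : ∀ z ∈ ball c ρ, ‖z - w‖ ≤ 2 * R) {D s : ℝ} (hD : 0 < D) {u u₀ : EE n} (hu : D ≤ ‖u - w‖)
    (hu0 : ‖u - u₀‖ ≤ s) (hs : 4 * s ≤ D) :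
    ‖(χ u : ℂ) * k u - (χ u₀ : ℂ) * k u₀‖ ≤ (n * 2^(n+1) + n * L * 2^n * (3 * R)) * A * s / D^(n+1) := by
  have L0 := h.L0
  have s0 : 0 ≤ s := (norm_nonneg _).trans hu0
  have far : ∀ z, ‖u - z‖ ≤ s → 3/4 * D ≤ ‖z - w‖ := by
    intro z hz
    have := norm_add_le (u - z) (z - w)
    rw [sub_add_sub_cancel] at this
    linarith
  have far' : ∀ z, ‖u - z‖ ≤ s → z ≠ w := by
    intro z hz e
    have := far z hz
    rw [e, sub_self, norm_zero] at this
    linarith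
  have lip := h.pb.lip L0.le h.c1 u u₀
  have second : ∀ z ∈ ball c ρ, ‖u - z‖ ≤ s →
      ‖((χ u : ℂ) - χ u₀) * k z‖ ≤ (n * L * 2^n * (3 * R)) * A * s / D^(n+1) := by
    intro z hz hz2
    have h1 := hk z hz (far' z hz2)
    have h2 := far z hz2
    have h3 := hw z hz
    have h4 : D ≤ 3 * R := by linarith
    have h5 : ‖k z‖ ≤ A / (D/2)^n := h1.trans (by gcongr; linarith)
    rw [norm_mul]
    calc _ ≤ (n * L * s) * (A / (D/2)^n) := by gcongr; exact lip.trans (by gcongr)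
      _ = (n * L * 2^n * D) * A * s / D^(n+1) := by rw [div_pow]; field_simp; ring
      _ ≤ _ := by gcongr
  have first : u ∈ ball c ρ → u₀ ∈ ball c ρ → ‖k u - k u₀‖ ≤ (n * 2^(n+1)) * A * s / D^(n+1) := by
    intro h1 h2
    have := Convex.norm_image_sub_le_of_norm_fderiv_le (𝕜 := ℝ) (f := k) (s := ball c ρ ∩ closedBall u s)
      (C := n * (A / (D/2)^(n+1))) (x := u₀) (y := u)
      (fun z hz => hd z hz.1 (far' z (by have := hz.2; rwa [mem_closedBall', dist_eq_norm] at this)))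
      (fun z hz => by
        have h3 : ‖u - z‖ ≤ s := by have := hz.2; rwa [mem_closedBall', dist_eq_norm] at this
        apply fderiv_le_of _ _ (by positivity)
        intro i
        refine (hk' z hz.1 (far' z h3) i).trans ?_
        have := far z h3
        gcongr
        linarith)
      ((convex_ball c ρ).inter (convex_closedBall u s))
      ⟨h2, by rw [mem_closedBall', dist_eq_norm]; exact hu0⟩ ⟨h1, mem_closedBall_self s0⟩
    refine this.trans ?_
    calc _ ≤ n * (A / (D/2)^(n+1)) * s := by gcongr
      _ = _ := by rw [div_pow]; field_simp
  rw [add_mul, add_mul, add_div]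
  have p1 : 0 ≤ (n * 2^(n+1)) * A * s / D^(n+1) := by positivity
  have p2 : 0 ≤ (n * L * 2^n * (3 * R)) * A * s / D^(n+1) := by positivity
  have uu : ‖u - u‖ ≤ s := by simpa using s0
  by_cases h1 : u ∈ ball c ρ <;> by_cases h2 : u₀ ∈ ball c ρ
  · have e : (χ u : ℂ) * k u - (χ u₀ : ℂ) * k u₀ = (χ u : ℂ) * (k u - k u₀) + ((χ u : ℂ) - χ u₀) * k u₀ := by ring
    rw [e]
    refine (norm_add_le _ _).trans (add_le_add ?_ (second u₀ h2 hu0))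
    rw [norm_mul]
    have := first h1 h2
    have h4 := h.bd u
    calc _ ≤ 1 * ‖k u - k u₀‖ := by gcongr
      _ ≤ _ := by linarith
  · have := second u h1 uu
    rw [h.zero u₀ h2] at this ⊢
    simp only [Complex.ofReal_zero, sub_zero, zero_mul] at this ⊢
    linarith
  · have := second u₀ h2 hu0
    rw [h.zero u h1] at this ⊢
    simp only [Complex.ofReal_zero, zero_sub, zero_mul, neg_mul] at this ⊢
    linarith
  · rw [h.zero u h1, h.zero u₀ h2]; simp; positivity

end T1D

namespace T1D
variable {n : ℕ}

/-- kernel hypotheses -/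
structure Ker (c₁ c₂ : EE n) (r₁ r₂ A : ℝ) (K : EE n → EE n → ℂ) : Prop where
  cd : ContDiffOn ℝ 1 (fun p : EE n × EE n => K p.1 p.2) {p | p.1 ≠ p.2}
  sz : ∀ x ∈ ball c₂ r₂, ∀ y ∈ ball c₁ r₁, x ≠ y → ‖K x y‖ ≤ A / ‖x - y‖ ^ n
  dr : ∀ i : Fin n, ∀ x ∈ ball c₂ r₂, ∀ y ∈ ball c₁ r₁, x ≠ y →
          ‖fderiv ℝ (fun x' => K x' y) x (EuclideanSpace.single i 1)‖ ≤ A / ‖x - y‖ ^ (n + 1) ∧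
          ‖fderiv ℝ (fun y' => K x y') y (EuclideanSpace.single i 1)‖ ≤ A / ‖x - y‖ ^ (n + 1)

variable {c₁ c₂ : EE n} {r₁ r₂ A : ℝ} {K : EE n → EE n → ℂ} {χ₁ χ₂ : EE n → ℝ} {L₁ L₂ R : ℝ}

lemma Ker.cda (h : Ker c₁ c₂ r₁ r₂ A K) {x y : EE n} (hxy : x ≠ y) :
    ContDiffAt ℝ 1 (fun p : EE n × EE n => K p.1 p.2) (x, y) := by
  apply h.cd.contDiffAt
  have : IsOpen {p : EE n × EE n | p.1 ≠ p.2} := isOpen_ne_fun continuous_fst continuous_snd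
  exact this.mem_nhds hxy

lemma Ker.d1 (h : Ker c₁ c₂ r₁ r₂ A K) {x y : EE n} (hxy : x ≠ y) : DifferentiableAt ℝ (fun x' => K x' y) x := by
  have h1 := (h.cda hxy).differentiableAt (by norm_num)
  exact DifferentiableAt.comp (g := fun p : EE n × EE n => K p.1 p.2) (f := fun x' => (x', y)) x h1 (by fun_prop)

lemma Ker.d2 (h : Ker c₁ c₂ r₁ r₂ A K) {x y : EE n} (hxy : x ≠ y) : DifferentiableAt ℝ (fun y' => K x y') y := by
  have h1 := (h.cda hxy).differentiableAt (by norm_num)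
  exact DifferentiableAt.comp (g := fun p : EE n × EE n => K p.1 p.2) (f := fun y' => (x, y')) y h1 (by fun_prop)

/-- the cut-off kernel -/
def Kt (χ₁ χ₂ : EE n → ℝ) (K : EE n → EE n → ℂ) (x y : EE n) : ℂ := (χ₂ x : ℂ) * K x y * (χ₁ y : ℂ)

lemma Kt_size (h : Ker c₁ c₂ r₁ r₂ A K) (hA : 0 < A) (h1 : Cut c₁ r₁ L₁ χ₁) (h2 : Cut c₂ r₂ L₂ χ₂) {D : ℝ} (hD : 0 < D) {x y : EE n}
    (hxy : D ≤ ‖x - y‖) : ‖Kt χ₁ χ₂ K x y‖ ≤ A / D^n := by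
  unfold Kt
  have p : 0 ≤ A / D^n := by positivity
  by_cases hx : x ∈ ball c₂ r₂
  · by_cases hy : y ∈ ball c₁ r₁
    · have ne : x ≠ y := by
        intro e; rw [e, sub_self, norm_zero] at hxy; linarith
      have h3 : ‖K x y‖ ≤ A / D^n := (h.sz x hx y hy ne).trans (by gcongr)
      rw [norm_mul, norm_mul]
      have h4 := h1.bd y
      have h5 := h2.bd x
      calc _ ≤ 1 * (A / D^n) * 1 := by gcongr
        _ = _ := by ring
    · rw [h1.zero y hy]; simpa using p
  · rw [h2.zero x hx]; simpa using p

def CK (n : ℕ) (L R : ℝ) : ℝ := n * 2^(n+1) + n * L * 2^n * (3 * R)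

lemma Kt_d1 (h : Ker c₁ c₂ r₁ r₂ A K) (hA : 0 < A) (h1 : Cut c₁ r₁ L₁ χ₁) (h2 : Cut c₂ r₂ L₂ χ₂) (hR : 0 < R)
    (b1 : ball c₁ r₁ ⊆ closedBall 0 R) (b2 : ball c₂ r₂ ⊆ closedBall 0 R)
    {D s : ℝ} (hD : 0 < D) {x x₀ y : EE n} (hxy : D ≤ ‖x - y‖) (hs : ‖x - x₀‖ ≤ s) (hsD : 4 * s ≤ D) :
    ‖Kt χ₁ χ₂ K x y - Kt χ₁ χ₂ K x₀ y‖ ≤ CK n L₂ R * A * s / D^(n+1) := by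
  have L0 := h2.L0
  have s0 : 0 ≤ s := (norm_nonneg _).trans hs
  have p : 0 ≤ CK n L₂ R * A * s / D^(n+1) := by unfold CK; positivity
  by_cases hy : y ∈ ball c₁ r₁
  · have := kern_lip h2 hA hR (fun x' => K x' y) y (fun z hz ne => h.d1 ne) (fun z hz ne => h.sz z hz y hy ne)
      (fun z hz ne i => (h.dr i z hz y hy ne).1)
      (fun z hz => by
        have e1 := b1 hy
        have e2 := b2 hz
        rw [mem_closedBall, dist_zero_right] at e1 e2
        have := norm_sub_le z y
        linarith) hD hxy hs hsD
    unfold Kt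
    rw [← sub_mul, norm_mul]
    have h4 := h1.bd y
    calc _ ≤ (CK n L₂ R * A * s / D^(n+1)) * 1 := by gcongr; exact this
      _ = _ := by ring
  · unfold Kt; rw [h1.zero y hy]; simpa using p

lemma Kt_d2 (h : Ker c₁ c₂ r₁ r₂ A K) (hA : 0 < A) (h1 : Cut c₁ r₁ L₁ χ₁) (h2 : Cut c₂ r₂ L₂ χ₂) (hR : 0 < R)
    (b1 : ball c₁ r₁ ⊆ closedBall 0 R) (b2 : ball c₂ r₂ ⊆ closedBall 0 R)
    {D s : ℝ} (hD : 0 < D) {x y y₀ : EE n} (hxy : D ≤ ‖x - y‖) (hs : ‖y - y₀‖ ≤ s) (hsD : 4 * s ≤ D) :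
    ‖Kt χ₁ χ₂ K x y - Kt χ₁ χ₂ K x y₀‖ ≤ CK n L₁ R * A * s / D^(n+1) := by
  have L0 := h1.L0
  have s0 : 0 ≤ s := (norm_nonneg _).trans hs
  have p : 0 ≤ CK n L₁ R * A * s / D^(n+1) := by unfold CK; positivity
  by_cases hx : x ∈ ball c₂ r₂
  · have := kern_lip h1 hA hR (fun y' => K x y') x (fun z hz ne => h.d2 ne.symm)
      (fun z hz ne => by rw [norm_sub_rev]; exact h.sz x hx z hz ne.symm)
      (fun z hz ne i => by rw [norm_sub_rev]; exact (h.dr i x hx z hz ne.symm).2)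
      (fun z hz => by
        have e1 := b2 hx
        have e2 := b1 hz
        rw [mem_closedBall, dist_zero_right] at e1 e2
        have := norm_sub_le z x
        linarith) hD (by rw [norm_sub_rev]; exact hxy) hs hsD
    unfold Kt
    have e : (χ₂ x : ℂ) * K x y * (χ₁ y : ℂ) - (χ₂ x : ℂ) * K x y₀ * (χ₁ y₀ : ℂ) =
      (χ₂ x : ℂ) * ((χ₁ y : ℂ) * K x y - (χ₁ y₀ : ℂ) * K x y₀) := by ring
    rw [e, norm_mul]
    have h4 := h2.bd x
    calc _ ≤ 1 * (CK n L₁ R * A * s / D^(n+1)) := by gcongr; exact this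
      _ = _ := by ring
  · unfold Kt; rw [h2.zero x hx]; simpa using p

lemma Kt_int (h : Ker c₁ c₂ r₁ r₂ A K) (h1 : Cut c₁ r₁ L₁ χ₁) {f : EE n → ℂ} (hf : C1 f)
    (cf : HasCompactSupport f) {x : EE n} (hx : x ∉ tsupport f) : Integrable (fun y => Kt χ₁ χ₂ K x y * f y) := by
  apply Continuous.integrable_of_hasCompactSupport
  · apply continuous_of_tsupport
    intro y hy
    have hy' : y ∈ tsupport f := (tsupport_mul_subset_right (f := fun y => Kt χ₁ χ₂ K x y) (g := f)) hy
    have ne : x ≠ y := fun e => hx (e ▸ hy')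
    unfold Kt
    exact ((continuousAt_const.mul (h.d2 ne).continuousAt).mul h1.c1.continuous.continuousAt).mul hf.continuous.continuousAt
  · exact cf.mul_left

/-- all the hypotheses -/
structure Hyp (c₁ c₂ : EE n) (r₁ r₂ A : ℝ) (K : EE n → EE n → ℂ)
    (T : (EE n → ℂ) →ₗ[ℂ] Lp ℂ 2 ((volume : Measure (EE n)).restrict (ball c₂ r₂)))
    (Tstar : (EE n → ℂ) →ₗ[ℂ] Lp ℂ 2 ((volume : Measure (EE n)).restrict (ball c₁ r₁))) : Prop where
  A0 : 0 < A
  ker : Ker c₁ c₂ r₁ r₂ A K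
  adj : ∀ f g : EE n → ℂ,
        ContDiff ℝ 1 f → HasCompactSupport f → tsupport f ⊆ ball c₁ r₁ →
        ContDiff ℝ 1 g → HasCompactSupport g → tsupport g ⊆ ball c₂ r₂ →
        ∫ x in ball c₂ r₂, (T f : EE n → ℂ) x * (starRingEnd ℂ) (g x) =
          ∫ x in ball c₁ r₁, f x * (starRingEnd ℂ) ((Tstar g : EE n → ℂ) x)
  b1 : ∀ r : ℝ, 0 < r → r ≤ r₁ → ∀ ω, IsBump n r ω → tsupport ω ⊆ ball c₁ r₁ →
        ∀ᵐ x ∂((volume : Measure (EE n)).restrict (ball c₂ r₂)), ‖(T ω : EE n → ℂ) x‖ ≤ A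
  b2 : ∀ r : ℝ, 0 < r → r ≤ r₂ → ∀ ω, IsBump n r ω → tsupport ω ⊆ ball c₂ r₂ →
        ∀ᵐ x ∂((volume : Measure (EE n)).restrict (ball c₁ r₁)), ‖(Tstar ω : EE n → ℂ) x‖ ≤ A
  rep : ∀ F, ContDiff ℝ 1 F → HasCompactSupport F → tsupport F ⊆ ball c₁ r₁ →
          ∀ᵐ x ∂((volume : Measure (EE n)).restrict (ball c₂ r₂)),
            x ∉ tsupport F → (T F : EE n → ℂ) x = ∫ y, K x y * F y

def BT (c₂ : EE n) (r₂ : ℝ) (χ₁ χ₂ : EE n → ℝ)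
    (T : (EE n → ℂ) →ₗ[ℂ] Lp ℂ 2 ((volume : Measure (EE n)).restrict (ball c₂ r₂))) (f g : EE n → ℂ) : ℂ :=
  ∫ x in ball c₂ r₂, (T (fun u => (χ₁ u : ℂ) * f u) : EE n → ℂ) x * ((χ₂ x : ℂ) * g x)

variable {T : (EE n → ℂ) →ₗ[ℂ] Lp ℂ 2 ((volume : Measure (EE n)).restrict (ball c₂ r₂))}
    {Tstar : (EE n → ℂ) →ₗ[ℂ] Lp ℂ 2 ((volume : Measure (EE n)).restrict (ball c₁ r₁))}

lemma BT_int (F : Lp ℂ 2 ((volume : Measure (EE n)).restrict (ball c₂ r₂))) (h2 : Cut c₂ r₂ L₂ χ₂) {g : EE n → ℂ} (hg : C1 g) :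
    Integrable (fun x => (F : EE n → ℂ) x * ((χ₂ x : ℂ) * g x)) ((volume : Measure (EE n)).restrict (ball c₂ r₂)) := by
  apply MemLp.integrable_mul (p := 2) (q := 2) (Lp.memLp F)
  exact ((h2.mul_c1 hg).continuous.memLp_of_hasCompactSupport (h2.mul_cs g)).restrict _

lemma BT_ker (H : Hyp c₁ c₂ r₁ r₂ A K T Tstar) (h1 : Cut c₁ r₁ L₁ χ₁) (h2 : Cut c₂ r₂ L₂ χ₂) {f g : EE n → ℂ} (hf : C1 f)
    {D : ℝ} (hD : 0 < D) (hfg : ∀ u ∈ tsupport g, ∀ w ∈ tsupport f, D ≤ ‖u - w‖) :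
    BT c₂ r₂ χ₁ χ₂ T f g = ∫ x, (∫ y, Kt χ₁ χ₂ K x y * f y) * g x := by
  unfold BT
  have e : ∫ x in ball c₂ r₂, (∫ y, Kt χ₁ χ₂ K x y * f y) * g x = ∫ x, (∫ y, Kt χ₁ χ₂ K x y * f y) * g x := by
    apply setIntegral_eq_integral_of_forall_compl_eq_zero
    intro x hx
    simp [Kt, h2.zero x hx]
  rw [← e]
  apply integral_congr_ae
  filter_upwards [H.rep _ (h1.mul_c1 hf) (h1.mul_cs f) (h1.mul_ts f)] with x hx
  by_cases hg : g x = 0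
  · simp [hg]
  · have hx' : x ∉ tsupport (fun u => (χ₁ u : ℂ) * f u) := by
      intro h'
      have := hfg x (subset_tsupport g hg) x (Cut.mul_ts' f h')
      rw [sub_self, norm_zero] at this
      linarith
    rw [hx hx']
    have : ∀ y, Kt χ₁ χ₂ K x y * f y = (χ₂ x : ℂ) * (K x y * ((χ₁ y : ℂ) * f y)) := by
      intro y; unfold Kt; ring
    simp_rw [this]
    rw [integral_const_mul]; ring

lemma norm_int_mul_le {G g : EE n → ℂ} {b : ℝ} (hg : C1 g) (cg : HasCompactSupport g) (h : ∀ x, g x ≠ 0 → ‖G x‖ ≤ b) :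
    ‖∫ x, G x * g x‖ ≤ b * ∫ x, ‖g x‖ := by
  rw [← integral_const_mul]
  apply norm_integral_le_of_norm_le
  · exact (hg.continuous.integrable_of_hasCompactSupport cg).norm.const_mul b
  · refine Filter.Eventually.of_forall (fun x => ?_)
    rw [norm_mul]
    by_cases h0 : g x = 0
    · simp [h0]
    · have := h x h0
      gcongr

lemma set_int_le {c : EE n} {r b : ℝ} (hb : 0 ≤ b) {G g : EE n → ℂ} (hg : C1 g) (cg : HasCompactSupport g) {χ : EE n → ℝ} (hχ : ∀ u, ‖(χ u : ℂ)‖ ≤ 1)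
    (h : ∀ᵐ x ∂((volume : Measure (EE n)).restrict (ball c r)), ‖G x‖ ≤ b) :
    ‖∫ x in ball c r, G x * ((χ x : ℂ) * g x)‖ ≤ b * ∫ x, ‖g x‖ := by
  have i0 : Integrable (fun x => ‖g x‖) := (hg.continuous.integrable_of_hasCompactSupport cg).norm
  have h1 : ‖∫ x in ball c r, G x * ((χ x : ℂ) * g x)‖ ≤ ∫ x in ball c r, b * ‖g x‖ := by
    apply norm_integral_le_of_norm_le (i0.integrableOn.const_mul b)
    filter_upwards [h] with x hx
    rw [norm_mul, norm_mul]
    have := hχ x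
    calc _ ≤ b * (1 * ‖g x‖) := by gcongr
      _ = _ := by ring
  refine h1.trans ?_
  rw [integral_const_mul]
  refine mul_le_mul_of_nonneg_left ?_ hb
  exact setIntegral_le_integral i0 (Filter.Eventually.of_forall (fun x => norm_nonneg _))

lemma PB_conj {f : EE n → ℂ} {L : ℝ} (h : PB f L) (hf : C1 f) : PB (fun u => (starRingEnd ℂ) (f u)) L := by
  intro i u
  have : HasFDerivAt (fun u => (starRingEnd ℂ) (f u)) ((Complex.conjCLE : ℂ →L[ℝ] ℂ).comp (fderiv ℝ f u)) u :=
    (Complex.conjCLE : ℂ →L[ℝ] ℂ).hasFDerivAt.comp u (hf.diff u).hasFDerivAt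
  rw [this.fderiv]
  simpa using h i u

lemma C1_conj {f : EE n → ℂ} (hf : C1 f) : C1 (fun u => (starRingEnd ℂ) (f u)) :=
  (Complex.conjCLE : ℂ →L[ℝ] ℂ).contDiff.comp hf

lemma ts_conj (f : EE n → ℂ) : tsupport (fun u => (starRingEnd ℂ) (f u)) = tsupport f := by
  unfold tsupport
  congr 1; ext u; simp [Function.mem_support]

lemma BT_adj (H : Hyp c₁ c₂ r₁ r₂ A K T Tstar) (h1 : Cut c₁ r₁ L₁ χ₁) (h2 : Cut c₂ r₂ L₂ χ₂) {f g : EE n → ℂ} (hf : C1 f) (hg : C1 g) :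
    BT c₂ r₂ χ₁ χ₂ T f g = ∫ x in ball c₁ r₁,
      (starRingEnd ℂ) ((Tstar (fun u => (χ₂ u : ℂ) * (starRingEnd ℂ) (g u)) : EE n → ℂ) x) * ((χ₁ x : ℂ) * f x) := by
  have := H.adj _ _ (h1.mul_c1 hf) (h1.mul_cs f) (h1.mul_ts f) (h2.mul_c1 (C1_conj hg)) (h2.mul_cs _) (h2.mul_ts _)
  simp only [map_mul, Complex.conj_ofReal, Complex.conj_conj] at this
  unfold BT
  rw [this]
  congr 1; funext x; ring

def CF (n : ℕ) (r₁ r₂ L₁ L₂ R : ℝ) : ℝ := (1 + r₁ + L₁ * r₁) + (1 + r₂ + L₂ * r₂) + CK n L₁ R + CK n L₂ R + 1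

lemma BT_form (hr₁ : 0 < r₁) (hr₂ : 0 < r₂) (H : Hyp c₁ c₂ r₁ r₂ A K T Tstar) (h1 : Cut c₁ r₁ L₁ χ₁) (h2 : Cut c₂ r₂ L₂ χ₂) (hR : 0 < R)
    (b1 : ball c₁ r₁ ⊆ closedBall 0 R) (b2 : ball c₂ r₂ ⊆ closedBall 0 R) :
    Form n R (CF n r₁ r₂ L₁ L₂ R * A) (BT c₂ r₂ χ₁ χ₂ T) := by
  have A0 := H.A0
  have l1 := h1.L0
  have l2 := h2.L0
  have k1 : 0 ≤ CK n L₁ R := by unfold CK; positivity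
  have k2 : 0 ≤ CK n L₂ R := by unfold CK; positivity
  have hC1 : 1 ≤ CF n r₁ r₂ L₁ L₂ R := by
    unfold CF; have := mul_pos l1 hr₁; have := mul_pos l2 hr₂; linarith
  have hC2 : 1 + r₁ + L₁ * r₁ ≤ CF n r₁ r₂ L₁ L₂ R := by
    unfold CF; have := mul_pos l2 hr₂; linarith
  have hC3 : 1 + r₂ + L₂ * r₂ ≤ CF n r₁ r₂ L₁ L₂ R := by
    unfold CF; have := mul_pos l1 hr₁; linarith
  have hC4 : CK n L₁ R ≤ CF n r₁ r₂ L₁ L₂ R := by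
    unfold CF; have := mul_pos l1 hr₁; have := mul_pos l2 hr₂; linarith
  have hC5 : CK n L₂ R ≤ CF n r₁ r₂ L₁ L₂ R := by
    unfold CF; have := mul_pos l1 hr₁; have := mul_pos l2 hr₂; linarith
  have fi : ∀ f : EE n → ℂ, 0 ≤ ∫ u, ‖f u‖ := fun f => integral_nonneg (fun u => norm_nonneg _)
  refine ⟨by positivity, ?_, ?_, ?_, ?_, ?_, ?_, ?_, ?_, ?_, ?_, ?_⟩
  · intro f f' g hf hf' hg
    unfold BT
    rw [← integral_add (BT_int _ h2 hg) (BT_int _ h2 hg)]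
    have e : T (fun u => (χ₁ u : ℂ) * (f u + f' u)) = T (fun u => (χ₁ u : ℂ) * f u) + T (fun u => (χ₁ u : ℂ) * f' u) := by
      rw [← map_add]; congr 1; funext u; simp [mul_add]
    rw [e]
    apply integral_congr_ae
    filter_upwards [Lp.coeFn_add (T (fun u => (χ₁ u : ℂ) * f u)) (T (fun u => (χ₁ u : ℂ) * f' u))] with x hx
    rw [hx, Pi.add_apply, add_mul]
  · intro c f g hf hg
    unfold BT
    rw [← integral_const_mul]
    have e : T (fun u => (χ₁ u : ℂ) * (c * f u)) = c • T (fun u => (χ₁ u : ℂ) * f u) := by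
      rw [← map_smul]; congr 1; funext u; simp; ring
    rw [e]
    apply integral_congr_ae
    filter_upwards [Lp.coeFn_smul c (T (fun u => (χ₁ u : ℂ) * f u))] with x hx
    rw [hx, Pi.smul_apply, smul_eq_mul, mul_assoc]
  · intro f g g' hf hg hg'
    unfold BT
    rw [← integral_add (BT_int _ h2 hg) (BT_int _ h2 hg')]
    congr 1; funext x; ring
  · intro c f g hf hg
    unfold BT
    rw [← integral_const_mul]
    congr 1; funext x; ring
  · intro f f' g hf hf' hg h
    have e : (fun u => (χ₁ u : ℂ) * f u) = (fun u => (χ₁ u : ℂ) * f' u) := by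
      funext u
      by_cases hu : u ∈ ball c₁ r₁
      · rw [h u (b1 hu)]
      · rw [h1.zero u hu]; simp
    unfold BT; rw [e]
  · intro f g g' hf hg hg' h
    have e : (fun u => (χ₂ u : ℂ) * g u) = (fun u => (χ₂ u : ℂ) * g' u) := by
      funext u
      by_cases hu : u ∈ ball c₂ r₂
      · rw [h u (b2 hu)]
      · rw [h2.zero u hu]; simp
    unfold BT
    congr 1; funext x
    rw [congrFun e x]
  · intro f g r hr hf hg cg bf pf hs
    refine (set_int_le (by positivity) hg cg h2.bd (bump_bd hr₁ h1 T A H.b1 hr hf bf pf hs)).trans ?_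
    have := fi g
    gcongr
  · intro f g r hr hf hg cf bg pg hs
    rw [BT_adj H h1 h2 hf hg]
    have := bump_bd hr₂ h2 Tstar A H.b2 hr (C1_conj hg) (by simpa using bg) (PB_conj pg hg) (by simpa only [ts_conj] using hs)
    refine (set_int_le (b := (1 + r₂ + L₂ * r₂) * A) (by positivity) hf cf h1.bd (by simpa using this)).trans ?_
    have := fi f
    gcongr
  · intro f g D hD hf hg cf cg hfg
    rw [BT_ker H h1 h2 hf hD hfg]
    refine (norm_int_mul_le (b := A / D^n * ∫ u, ‖f u‖) hg cg ?_).trans ?_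
    · intro x hx
      apply norm_int_mul_le hf cf
      intro y hy
      exact Kt_size H.ker A0 h1 h2 hD (hfg x (subset_tsupport g hx) y (subset_tsupport f hy))
    · have := fi f
      have := fi g
      have : A ≤ CF n r₁ r₂ L₁ L₂ R * A := by nlinarith
      gcongr
  · intro f g D u₀ s hD hf hg cf cg hfg hs hgs hg0
    rw [BT_ker H h1 h2 hf hD hfg]
    have ff := fi f
    have fg := fi g
    by_cases gz : g = 0
    · subst gz; simp
    obtain ⟨x₁, hx₁⟩ := Function.ne_iff.mp gz
    have s0 : 0 ≤ s := by
      have := hgs (subset_tsupport g hx₁)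
      rw [mem_closedBall] at this
      exact dist_nonneg.trans this
    by_cases hi : Integrable (fun x => (∫ y, Kt χ₁ χ₂ K x y * f y) * g x)
    · have e : ∫ x, (∫ y, Kt χ₁ χ₂ K x y * f y) * g x =
          ∫ x, ((∫ y, Kt χ₁ χ₂ K x y * f y) - (∫ y, Kt χ₁ χ₂ K u₀ y * f y)) * g x := by
        simp_rw [sub_mul]
        rw [integral_sub hi ((hg.continuous.integrable_of_hasCompactSupport cg).const_mul _), integral_const_mul, hg0]
        simp
      rw [e]
      refine (norm_int_mul_le (b := CK n L₂ R * A * s / D^(n+1) * ∫ u, ‖f u‖) hg cg ?_).trans ?_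
      · intro x hx
        have hx' := subset_tsupport g hx
        have hxs : ‖x - u₀‖ ≤ s := by
          have := hgs hx'
          rwa [mem_closedBall, dist_eq_norm] at this
        have n1 : x ∉ tsupport f := by
          intro h'
          have := hfg x hx' x h'
          rw [sub_self, norm_zero] at this
          linarith
        have n2 : u₀ ∉ tsupport f := by
          intro h'
          have := hfg x hx' u₀ h'
          linarith
        rw [← integral_sub (Kt_int H.ker h1 hf cf n1) (Kt_int H.ker h1 hf cf n2)]
        simp_rw [← sub_mul]
        apply norm_int_mul_le hf cf
        intro y hy
        exact Kt_d1 H.ker A0 h1 h2 hR b1 b2 hD (hfg x hx' y (subset_tsupport f hy)) hxs hs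
      · gcongr
    · rw [integral_undef hi, norm_zero]; positivity
  · intro f g D u₀ s hD hf hg cf cg hfg hs hfs hf0
    rw [BT_ker H h1 h2 hf hD hfg]
    have ff := fi f
    have fg := fi g
    by_cases fz : f = 0
    · subst fz; simp
    obtain ⟨x₁, hx₁⟩ := Function.ne_iff.mp fz
    have s0 : 0 ≤ s := by
      have := hfs (subset_tsupport f hx₁)
      rw [mem_closedBall] at this
      exact dist_nonneg.trans this
    refine (norm_int_mul_le (b := CK n L₁ R * A * s / D^(n+1) * ∫ u, ‖f u‖) hg cg ?_).trans ?_
    · intro x hx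
      have hx' := subset_tsupport g hx
      have n1 : x ∉ tsupport f := by
        intro h'
        have := hfg x hx' x h'
        rw [sub_self, norm_zero] at this
        linarith
      have e : ∫ y, Kt χ₁ χ₂ K x y * f y = ∫ y, (Kt χ₁ χ₂ K x y - Kt χ₁ χ₂ K x u₀) * f y := by
        simp_rw [sub_mul]
        rw [integral_sub (Kt_int H.ker h1 hf cf n1) ((hf.continuous.integrable_of_hasCompactSupport cf).const_mul _),
          integral_const_mul, hf0]
        simp
      rw [e]
      apply norm_int_mul_le hf cf
      intro y hy
      have hy' := subset_tsupport f hy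
      have hys : ‖y - u₀‖ ≤ s := by
        have := hfs hy'
        rwa [mem_closedBall, dist_eq_norm] at this
      exact Kt_d2 H.ker A0 h1 h2 hR b1 b2 hD (hfg x hx' y hy') hys hs
    · gcongr

end T1D

namespace T1D
variable {n : ℕ}

/-- the test functions `C¹_c(ball c r)` -/
def Dsub (c : EE n) (r : ℝ) : Submodule ℂ (EE n → ℂ) where
  carrier := {f | ContDiff ℝ 1 f ∧ HasCompactSupport f ∧ tsupport f ⊆ ball c r}
  add_mem' := by
    rintro f g ⟨a, b, d⟩ ⟨a', b', d'⟩
    exact ⟨a.add a', b.add b', (tsupport_add f g).trans (Set.union_subset d d')⟩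
  zero_mem' := ⟨contDiff_const, HasCompactSupport.zero, by simp [tsupport]⟩
  smul_mem' := by
    rintro k f ⟨a, b, d⟩
    exact ⟨contDiff_const.smul a, b.smul_left (f := fun _ => k), (tsupport_smul_subset_right (fun _ => k) f).trans d⟩

lemma Dsub_mem {c : EE n} {r : ℝ} (f : Dsub c r) : MemLp (f : EE n → ℂ) 2 ((volume : Measure (EE n)).restrict (ball c r)) :=
  (f.2.1.continuous.memLp_of_hasCompactSupport f.2.2.1).restrict _

/-- inclusion in `L²` -/
def iot (c : EE n) (r : ℝ) : Dsub c r →ₗ[ℂ] Lp ℂ 2 ((volume : Measure (EE n)).restrict (ball c r)) where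
  toFun f := (Dsub_mem f).toLp
  map_add' f g := MemLp.toLp_add (Dsub_mem f) (Dsub_mem g)
  map_smul' k f := MemLp.toLp_const_smul k (Dsub_mem f)

lemma iot_dense (c : EE n) (r : ℝ) : DenseRange (iot c r) := by
  have : (LinearMap.range (iot c r)).topologicalClosure = ⊤ := by
    rw [Submodule.topologicalClosure_eq_top_iff, Submodule.eq_bot_iff]
    intro v hv
    rw [Submodule.mem_orthogonal] at hv
    have vi : Integrable (v : EE n → ℂ) ((volume : Measure (EE n)).restrict (ball c r)) := by
      haveI : IsFiniteMeasure ((volume : Measure (EE n)).restrict (ball c r)) :=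
        ⟨by rw [Measure.restrict_apply_univ]; exact measure_ball_lt_top⟩
      exact (Lp.memLp v).integrable (by norm_num)
    have key := IsOpen.ae_eq_zero_of_integral_contDiff_smul_eq_zero (μ := (volume : Measure (EE n)))
      (isOpen_ball (x := c) (ε := r)) (f := (v : EE n → ℂ)) (IntegrableOn.locallyIntegrableOn vi) (by
        intro g g1 g2 g3
        have ts : tsupport (fun u => ((g u : ℝ) : ℂ)) ⊆ tsupport g := by
          apply closure_mono
          intro u hu
          simpa [Function.mem_support] using hu
        let F : Dsub c r := ⟨fun u => (g u : ℂ), Complex.ofRealCLM.contDiff.comp (g1.of_le (by norm_cast)),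
          g2.of_isClosed_subset (isClosed_tsupport _) ts, ts.trans g3⟩
        have h := hv _ ⟨F, rfl⟩
        rw [L2.inner_def] at h
        have e : ∫ x, g x • (v : EE n → ℂ) x = ∫ x in ball c r, g x • (v : EE n → ℂ) x := by
          symm
          apply setIntegral_eq_integral_of_forall_compl_eq_zero
          intro x hx
          rw [image_eq_zero_of_notMem_tsupport (fun h' => hx (g3 h')), zero_smul]
        rw [e, ← h]
        apply integral_congr_ae
        filter_upwards [MemLp.coeFn_toLp (Dsub_mem F)] with x hx
        have : ((iot c r F : Lp ℂ 2 _) : EE n → ℂ) x = (g x : ℂ) := hx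
        rw [this]
        simp [RCLike.inner_apply, mul_comm])
    rw [Lp.eq_zero_iff_ae_eq_zero]
    rw [← ae_restrict_iff' measurableSet_ball] at key
    exact key
  have h2 := Submodule.dense_iff_topologicalClosure_eq_top.2 this
  have e : Set.range (iot c r) = (LinearMap.range (iot c r) : Set _) := by
    ext x; simp
  unfold DenseRange
  rw [e]; exact h2

lemma iot_norm {c : EE n} {r : ℝ} (f : Dsub c r) : ∫ u, ‖(f : EE n → ℂ) u‖^2 = ‖iot c r f‖^2 := by
  have h := inner_self_eq_norm_sq_to_K (𝕜 := ℂ) (iot c r f)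
  rw [L2.inner_def] at h
  have e : ∫ u, ‖(f : EE n → ℂ) u‖^2 = ∫ u in ball c r, ‖(f : EE n → ℂ) u‖^2 := by
    symm
    apply setIntegral_eq_integral_of_forall_compl_eq_zero
    intro x hx
    rw [image_eq_zero_of_notMem_tsupport (fun h' => hx (f.2.2.2 h'))]; simp
  have e2 : ((∫ u in ball c r, ‖(f : EE n → ℂ) u‖^2 : ℝ) : ℂ) = ((‖iot c r f‖^2 : ℝ) : ℂ) := by
    push_cast
    rw [← integral_complex_ofReal]
    refine Eq.trans ?_ h
    apply integral_congr_ae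
    filter_upwards [MemLp.coeFn_toLp (Dsub_mem f)] with x hx
    have : ((iot c r f : Lp ℂ 2 _) : EE n → ℂ) x = (f : EE n → ℂ) x := hx
    rw [this, inner_self_eq_norm_sq_to_K]
    simp
  rw [e]
  exact_mod_cast e2

variable {c₁ c₂ : EE n} {r₁ r₂ A : ℝ} {K : EE n → EE n → ℂ} {χ₁ χ₂ : EE n → ℝ} {L₁ L₂ R : ℝ}
variable {T : (EE n → ℂ) →ₗ[ℂ] Lp ℂ 2 ((volume : Measure (EE n)).restrict (ball c₂ r₂))}

lemma BT_eq {K₁ K₂ : Set (EE n)} (h1 : Cut c₁ r₁ L₁ χ₁) {ρ₁ ρ₂ : ℝ}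
    (k1 : K₁ ⊆ ball c₁ ρ₁) (k2 : K₂ ⊆ ball c₂ ρ₂) (o1 : ∀ u ∈ ball c₁ ρ₁, χ₁ u = 1) (o2 : ∀ u ∈ ball c₂ ρ₂, χ₂ u = 1)
    (ha : ∀ f : EE n → ℂ, ContDiff ℝ 1 f → HasCompactSupport f → tsupport f ⊆ ball c₁ r₁ →
        (∀ᵐ x ∂((volume : Measure (EE n)).restrict (ball c₂ r₂)),
          x ∉ K₂ → (T f : EE n → ℂ) x = 0) ∧ (Disjoint (tsupport f) K₁ → T f = 0))
    (f : Dsub c₁ r₁) (g : Dsub c₂ r₂) :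
    BT c₂ r₂ χ₁ χ₂ T f (fun u => (starRingEnd ℂ) ((g : EE n → ℂ) u)) = inner ℂ (iot c₂ r₂ g) (T f) := by
  have hm : (fun u => (χ₁ u : ℂ) * (f : EE n → ℂ) u) ∈ Dsub c₁ r₁ := ⟨h1.mul_c1 f.2.1, h1.mul_cs _, h1.mul_ts _⟩
  have hs := (Dsub c₁ r₁).sub_mem f.2 hm
  have z : T ((f : EE n → ℂ) - fun u => (χ₁ u : ℂ) * (f : EE n → ℂ) u) = 0 := by
    apply (ha _ hs.1 hs.2.1 hs.2.2).2
    apply Disjoint.mono_right k1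
    apply Disjoint.symm
    rw [Set.disjoint_left]
    intro u hu
    rw [notMem_tsupport_iff_eventuallyEq]
    filter_upwards [isOpen_ball.mem_nhds hu] with w hw
    simp [o1 w hw]
  rw [map_sub, sub_eq_zero] at z
  unfold BT
  rw [← z, L2.inner_def]
  apply integral_congr_ae
  filter_upwards [(ha _ f.2.1 f.2.2.1 f.2.2.2).1, MemLp.coeFn_toLp (Dsub_mem g)] with x hx hg
  have : ((iot c₂ r₂ g : Lp ℂ 2 _) : EE n → ℂ) x = (g : EE n → ℂ) x := hg
  rw [this]
  by_cases hk : x ∈ K₂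
  · rw [o2 x (k2 hk)]; simp [RCLike.inner_apply]
  · rw [hx hk]; simp

lemma self_bd {E : Type*} [NormedAddCommGroup E] [InnerProductSpace ℂ E] (v : E) (Q a : ℝ) (hQ : 0 < Q) (ha : 0 ≤ a)
    {ι : Type*} (e : ι → E) (he : DenseRange e) (h : ∀ i, ∀ t : ℝ, 0 < t → ‖inner ℂ (e i) v‖ ≤ Q * (t * a^2 + ‖e i‖^2 / t)) :
    ‖v‖ ≤ 2 * Q * a := by
  have h1 : ∀ w : E, ‖inner ℂ w v‖ ≤ Q * ((2*Q) * a^2 + ‖w‖^2 / (2*Q)) := by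
    intro w
    refine he.induction (P := fun w : E => ‖inner ℂ w v‖ ≤ Q * ((2*Q) * a^2 + ‖w‖^2 / (2*Q))) ?_ ?_ w
    · rintro _ ⟨i, rfl⟩
      exact h i _ (by positivity)
    · exact isClosed_le (by fun_prop) (by fun_prop)
  have h2 := h1 v
  rw [inner_self_eq_norm_sq_to_K] at h2
  have e1 : ‖((‖v‖ : ℂ))^2‖ = ‖v‖^2 := by simp
  have h3 : ‖v‖^2 ≤ Q * ((2*Q) * a^2 + ‖v‖^2 / (2*Q)) := by
    rw [← e1]; rw [e1]; simpa using h2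
  have e2 : Q * ((2*Q) * a^2 + ‖v‖^2 / (2*Q)) = 2 * Q^2 * a^2 + ‖v‖^2/2 := by field_simp
  rw [e2] at h3
  have q := mul_nonneg hQ.le ha
  refine (sq_le_sq₀ (norm_nonneg v) (by linarith)).1 ?_
  nlinarith

lemma ball_sub (c : EE n) {r R : ℝ} (h : ‖c‖ + r ≤ R) : ball c r ⊆ closedBall (0 : EE n) R := by
  intro x hx
  rw [mem_ball, dist_eq_norm] at hx
  rw [mem_closedBall, dist_zero_right]
  have := norm_add_le (x - c) c
  rw [sub_add_cancel] at this
  linarith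

lemma off_ball {c : EE n} {r R : ℝ} (h : ball c r ⊆ closedBall (0 : EE n) R) (f : Dsub c r) (u : EE n)
    (hu : u ∉ closedBall (0 : EE n) R) : (f : EE n → ℂ) u = 0 :=
  image_eq_zero_of_notMem_tsupport (fun h' => hu (h (f.2.2.2 h')))

theorem final (n : ℕ) (hn : 1 ≤ n) (c₁ c₂ : EE n) (r₁ r₂ : ℝ) (hr₁ : 0 < r₁) (hr₂ : 0 < r₂)
    (K₁ K₂ : Set (EE n)) (hK₁ : IsCompact K₁) (hK₂ : IsCompact K₂)
    (hK₁B : K₁ ⊆ ball c₁ r₁) (hK₂B : K₂ ⊆ ball c₂ r₂) :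
    ∃ C₀ : ℝ, 0 < C₀ ∧ ∀ (T : (EE n → ℂ) →ₗ[ℂ] Lp ℂ 2 ((volume : Measure (EE n)).restrict (ball c₂ r₂)))
      (Tstar : (EE n → ℂ) →ₗ[ℂ] Lp ℂ 2 ((volume : Measure (EE n)).restrict (ball c₁ r₁)))
      (A : ℝ) (K : EE n → EE n → ℂ), Hyp c₁ c₂ r₁ r₂ A K T Tstar →
      (∀ f : EE n → ℂ, ContDiff ℝ 1 f → HasCompactSupport f → tsupport f ⊆ ball c₁ r₁ →
        (∀ᵐ x ∂((volume : Measure (EE n)).restrict (ball c₂ r₂)),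
          x ∉ K₂ → (T f : EE n → ℂ) x = 0) ∧ (Disjoint (tsupport f) K₁ → T f = 0)) →
      ∀ f : Dsub c₁ r₁, ‖T f‖ ≤ C₀ * A * ‖iot c₁ r₁ f‖ := by
  obtain ⟨χ₁, L₁, ρ₁, h1, k1, o1⟩ := exists_cut c₁ r₁ hr₁ K₁ hK₁ hK₁B
  obtain ⟨χ₂, L₂, ρ₂, h2, k2, o2⟩ := exists_cut c₂ r₂ hr₂ K₂ hK₂ hK₂B
  obtain ⟨C, C0, hC⟩ := limit_bd n hn
  set R := ‖c₁‖ + ‖c₂‖ + r₁ + r₂ with hR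
  have n1 := norm_nonneg c₁
  have n2 := norm_nonneg c₂
  have R0 : 0 < R := by linarith
  have b1 : ball c₁ r₁ ⊆ closedBall (0 : EE n) R := ball_sub c₁ (by linarith)
  have b2 : ball c₂ r₂ ⊆ closedBall (0 : EE n) R := ball_sub c₂ (by linarith)
  have l1 := h1.L0
  have l2 := h2.L0
  have F0 : 0 < CF n r₁ r₂ L₁ L₂ R := by unfold CF CK; positivity
  refine ⟨2 * (C * CF n r₁ r₂ L₁ L₂ R), by positivity, ?_⟩
  intro T Tstar A K H ha f
  have A0 := H.A0
  have FF := BT_form hr₁ hr₂ H h1 h2 R0 b1 b2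
  have := self_bd (T f) (C * (CF n r₁ r₂ L₁ L₂ R * A)) ‖iot c₁ r₁ f‖ (by positivity) (norm_nonneg _)
    (iot c₂ r₂) (iot_dense c₂ r₂) (by
      intro g t ht
      rw [← BT_eq h1 k1 k2 o1 o2 ha f g, ← iot_norm f, ← iot_norm g]
      have e : ∀ u, ‖(starRingEnd ℂ) ((g : EE n → ℂ) u)‖ = ‖(g : EE n → ℂ) u‖ := fun u => by simp
      have := hC R _ R0 _ FF f (fun u => (starRingEnd ℂ) ((g : EE n → ℂ) u)) f.2.1 (C1_conj g.2.1) f.2.2.1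
        (by rw [HasCompactSupport, ts_conj]; exact g.2.2.1) (off_ball b1 f)
        (fun u hu => by rw [off_ball b2 g u hu, map_zero]) t ht
      simpa only [e] using this)
  calc _ ≤ _ := this
    _ = _ := by ring

end T1D

/-- **A localized `T(1)` theorem on balls in `ℝⁿ` (L^∞ bump hypotheses).**
Given open balls `B₁, B₂ ⊆ ℝⁿ` and compacts `K₁ ⊆ B₁`, `K₂ ⊆ B₂`, there is `C₀ > 0`
such that any linear `T : C¹_c(B₁) → L²(B₂)` with formal adjoint, localized to
`K₁, K₂`, satisfying the `L^∞` bump estimates `‖Tω‖_∞, ‖T*ω‖_∞ ≤ A` and represented off supports by a kernel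
with Calderón–Zygmund estimates (constant `A`), extends to a bounded operator
`L²(B₁) → L²(B₂)` of norm at most `C₀ A`. -/
theorem statement_2 (n : ℕ) (hn : 1 ≤ n)
    (c₁ c₂ : EuclideanSpace ℝ (Fin n)) (r₁ r₂ : ℝ) (hr₁ : 0 < r₁) (hr₂ : 0 < r₂)
    (K₁ K₂ : Set (EuclideanSpace ℝ (Fin n)))
    (hK₁ : IsCompact K₁) (hK₂ : IsCompact K₂)
    (hK₁B : K₁ ⊆ ball c₁ r₁) (hK₂B : K₂ ⊆ ball c₂ r₂) :
    ∃ C₀ : ℝ, 0 < C₀ ∧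
    ∀ (T : (EuclideanSpace ℝ (Fin n) → ℂ) →ₗ[ℂ]
        Lp ℂ 2 ((volume : Measure (EuclideanSpace ℝ (Fin n))).restrict (ball c₂ r₂)))
      (Tstar : (EuclideanSpace ℝ (Fin n) → ℂ) →ₗ[ℂ]
        Lp ℂ 2 ((volume : Measure (EuclideanSpace ℝ (Fin n))).restrict (ball c₁ r₁)))
      (A : ℝ), 0 < A →
      -- `T*` is a formal adjoint of `T`
      (∀ f g : EuclideanSpace ℝ (Fin n) → ℂ,
        ContDiff ℝ 1 f → HasCompactSupport f → tsupport f ⊆ ball c₁ r₁ →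
        ContDiff ℝ 1 g → HasCompactSupport g → tsupport g ⊆ ball c₂ r₂ →
        ∫ x in ball c₂ r₂,
            (T f : EuclideanSpace ℝ (Fin n) → ℂ) x * (starRingEnd ℂ) (g x) =
          ∫ x in ball c₁ r₁,
            f x * (starRingEnd ℂ) ((Tstar g : EuclideanSpace ℝ (Fin n) → ℂ) x)) →
      -- (a) localization
      (∀ f : EuclideanSpace ℝ (Fin n) → ℂ,
        ContDiff ℝ 1 f → HasCompactSupport f → tsupport f ⊆ ball c₁ r₁ →
        (∀ᵐ x ∂((volume : Measure (EuclideanSpace ℝ (Fin n))).restrict (ball c₂ r₂)),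
          x ∉ K₂ → (T f : EuclideanSpace ℝ (Fin n) → ℂ) x = 0) ∧
        (Disjoint (tsupport f) K₁ → T f = 0)) →
      -- (i)′ L^∞ bump estimates
      (∀ r : ℝ, 0 < r → r ≤ r₁ → ∀ ω, IsBump n r ω → tsupport ω ⊆ ball c₁ r₁ →
        ∀ᵐ x ∂((volume : Measure (EuclideanSpace ℝ (Fin n))).restrict (ball c₂ r₂)),
          ‖(T ω : EuclideanSpace ℝ (Fin n) → ℂ) x‖ ≤ A) →
      (∀ r : ℝ, 0 < r → r ≤ r₂ → ∀ ω, IsBump n r ω → tsupport ω ⊆ ball c₂ r₂ →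
        ∀ᵐ x ∂((volume : Measure (EuclideanSpace ℝ (Fin n))).restrict (ball c₁ r₁)),
          ‖(Tstar ω : EuclideanSpace ℝ (Fin n) → ℂ) x‖ ≤ A) →
      -- (ii), (iii) kernel representation and Calderón–Zygmund estimates
      (∃ K : EuclideanSpace ℝ (Fin n) → EuclideanSpace ℝ (Fin n) → ℂ,
        ContDiffOn ℝ 1 (fun p : EuclideanSpace ℝ (Fin n) × EuclideanSpace ℝ (Fin n) =>
          K p.1 p.2) {p | p.1 ≠ p.2} ∧
        (∀ F, ContDiff ℝ 1 F → HasCompactSupport F → tsupport F ⊆ ball c₁ r₁ →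
          ∀ᵐ x ∂((volume : Measure (EuclideanSpace ℝ (Fin n))).restrict (ball c₂ r₂)),
            x ∉ tsupport F → (T F : EuclideanSpace ℝ (Fin n) → ℂ) x = ∫ y, K x y * F y) ∧
        (∀ x ∈ ball c₂ r₂, ∀ y ∈ ball c₁ r₁, x ≠ y → ‖K x y‖ ≤ A / ‖x - y‖ ^ n) ∧
        (∀ i : Fin n, ∀ x ∈ ball c₂ r₂, ∀ y ∈ ball c₁ r₁, x ≠ y →
          ‖fderiv ℝ (fun x' => K x' y) x (EuclideanSpace.single i 1)‖ ≤ A / ‖x - y‖ ^ (n + 1) ∧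
          ‖fderiv ℝ (fun y' => K x y') y (EuclideanSpace.single i 1)‖ ≤ A / ‖x - y‖ ^ (n + 1))) →
      ∃ Tbar : Lp ℂ 2 ((volume : Measure (EuclideanSpace ℝ (Fin n))).restrict (ball c₁ r₁)) →L[ℂ]
          Lp ℂ 2 ((volume : Measure (EuclideanSpace ℝ (Fin n))).restrict (ball c₂ r₂)),
        ‖Tbar‖ ≤ C₀ * A ∧
        ∀ f, ContDiff ℝ 1 f → HasCompactSupport f → tsupport f ⊆ ball c₁ r₁ →
          ∀ hm : MemLp f 2 ((volume : Measure (EuclideanSpace ℝ (Fin n))).restrict (ball c₁ r₁)),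
            Tbar (hm.toLp f) = T f := by
  obtain ⟨C₀, h0, h⟩ := T1D.final n hn c₁ c₂ r₁ r₂ hr₁ hr₂ K₁ K₂ hK₁ hK₂ hK₁B hK₂B
  refine ⟨C₀, h0, ?_⟩
  rintro T Tstar A A0 adj ha hb1 hb2 ⟨K, cd, rep, sz, dr⟩
  have hT := h T Tstar A K ⟨A0, ⟨cd, sz, dr⟩, adj, hb1, hb2, rep⟩ ha
  let S := T.comp (T1D.Dsub c₁ r₁).subtype
  have hS : ∀ x, ‖S x‖ ≤ C₀ * A * ‖T1D.iot c₁ r₁ x‖ := hT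
  refine ⟨S.extendOfNorm (T1D.iot c₁ r₁),
    LinearMap.opNorm_extendOfNorm_le (T1D.iot_dense c₁ r₁) (by positivity) hS, ?_⟩
  intro f f1 f2 f3 hm
  exact LinearMap.extendOfNorm_eq (T1D.iot_dense c₁ r₁) ⟨_, hS⟩ (⟨f, f1, f2, f3⟩ : T1D.Dsub c₁ r₁)
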